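/- arXiv:1707.06531 — 3 statements merged into one kernel-verified Lean document; each statement's English description precedes it below -/
import Mathlib

section
/- Let q be an odd prime power and let (n(g))_{g ≥ 1} be a sequence of even positive integers satisfying n(g) ≥ 3·log_q(g) for all large g and n(g)/g^{2/3} → 0 as g → ∞. For each g, let χ_2 be the quadratic character of F_{q^{n(g)}}. Then, as g → ∞, the quantity (q^{−n(g)/2} / |F̂_g|) · Σ_{(f1,f2,f3) ∈ F̂_g} Σ_{x ∈ F_{q^{n(g)}}} [ χ_2((f1·f3)(x)) + χ_2((f2·f3)(x)) + χ_2((f1·f2)(x)) ] tends to 3, where |F̂_g| denotes the cardinality of F̂_g and polynomials are evaluated at x via the inclusion F_q ⊆ F_{q^{n(g)}}. -/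
open Polynomial Classical

noncomputable section

/-- Quadratic character of a field `K`: 1 on nonzero squares, -1 on nonsquares, 0 at 0. -/
def quadCharFn (K : Type*) [Field K] (a : K) : ℤ :=
  if a = 0 then 0 else if IsSquare a then 1 else -1

/-- Quadratic residue symbol modulo `P`: 1 if `F` is a nonzero square mod `P`,
-1 if a nonsquare, 0 if `P ∣ F`. -/
def chiP {Fq : Type*} [Field Fq] (P F : Fq[X]) : ℤ :=
  if P ∣ F then 0 else if ∃ G, P ∣ (F - G ^ 2) then 1 else -1

/-- The genus function `L(d1,d2,d3)`. -/
def Lg (d1 d2 d3 : ℕ) : ℕ :=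
  if Even (d1 + d3) ∧ Even (d2 + d3) then d1 + d2 + d3 else d1 + d2 + d3 + 1

/-- The parameter set `F̂_g` of triples of square-free pairwise coprime polynomials,
`f3` monic, satisfying the genus condition and avoiding the degenerate degrees. -/
def FhatSet (Fq : Type*) [Field Fq] (g : ℕ) : Set (Fq[X] × Fq[X] × Fq[X]) :=
  {t | Squarefree t.1 ∧ Squarefree t.2.1 ∧ Squarefree t.2.2 ∧
       IsCoprime t.1 t.2.1 ∧ IsCoprime t.1 t.2.2 ∧ IsCoprime t.2.1 t.2.2 ∧
       t.2.2.Monic ∧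
       Lg t.1.natDegree t.2.1.natDegree t.2.2.natDegree = g + 3 ∧
       ({t.1.natDegree, t.2.1.natDegree, t.2.2.natDegree} : Multiset ℕ) ≠ {g + 3, 0, 0} ∧
       ({t.1.natDegree, t.2.1.natDegree, t.2.2.natDegree} : Multiset ℕ) ≠ {g + 2, 0, 0}}

/-- The parameter set `F_g`: triples in `F̂_g` with all three polynomials monic. -/
def FSet (Fq : Type*) [Field Fq] (g : ℕ) : Set (Fq[X] × Fq[X] × Fq[X]) :=
  {t | t ∈ FhatSet Fq g ∧ t.1.Monic ∧ t.2.1.Monic}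

end

/-- monic polynomials of degree `d` -/
noncomputable def MP (F : Type*) [Field F] [Fintype F] (d : ℕ) : Finset F[X] :=
  Finset.univ.image (fun v : Fin d → F =>
    ((monicEquivDegreeLT d).symm ((degreeLTEquiv F d).symm v)).1)

section
variable {F : Type*} [Field F] [Fintype F]

lemma mem_MP {d : ℕ} {f : F[X]} : f ∈ MP F d ↔ f.Monic ∧ f.natDegree = d := by
  unfold MP
  simp only [Finset.mem_image, Finset.mem_univ, true_and]
  constructor
  · rintro ⟨v, rfl⟩
    exact ((monicEquivDegreeLT d).symm ((degreeLTEquiv F d).symm v)).2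
  · intro h
    refine ⟨degreeLTEquiv F d (monicEquivDegreeLT d ⟨f, h⟩), ?_⟩
    simp

lemma card_MP (d : ℕ) : (MP F d).card = Fintype.card F ^ d := by
  unfold MP
  rw [Finset.card_image_of_injective]
  · simp
  · intro v w h
    have := Subtype.ext h
    simpa using this

/-- polynomials of degree `< d` -/
noncomputable def LTP (F : Type*) [Field F] [Fintype F] (d : ℕ) : Finset F[X] :=
  Finset.univ.image (fun v : Fin d → F => ((degreeLTEquiv F d).symm v).1)

lemma mem_LTP {d : ℕ} {f : F[X]} : f ∈ LTP F d ↔ f.degree < d := by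
  unfold LTP
  simp only [Finset.mem_image, Finset.mem_univ, true_and]
  constructor
  · rintro ⟨v, rfl⟩
    exact mem_degreeLT.1 ((degreeLTEquiv F d).symm v).2
  · intro h
    refine ⟨degreeLTEquiv F d ⟨f, mem_degreeLT.2 h⟩, ?_⟩
    simp

lemma card_LTP (d : ℕ) : (LTP F d).card = Fintype.card F ^ d := by
  unfold LTP
  rw [Finset.card_image_of_injective]
  · simp
  · intro v w h
    have := Subtype.ext h
    simpa using this

lemma sum_MP_dvd {A : Type*} [AddCommMonoid A] (φ : F[X] → A) (m : F[X]) (hm : m.Monic) (d : ℕ)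
    (hd : m.natDegree ≤ d) :
    ∑ f ∈ (MP F d).filter (fun f => m ∣ f), φ f = ∑ c ∈ MP F (d - m.natDegree), φ (m * c) := by
  symm
  refine Finset.sum_bij (fun c _ => m * c) ?_ ?_ ?_ ?_
  · intro c hc
    rw [mem_MP] at hc
    rw [Finset.mem_filter, mem_MP]
    refine ⟨⟨hm.mul hc.1, ?_⟩, dvd_mul_right _ _⟩
    rw [hm.natDegree_mul hc.1, hc.2]; omega
  · intro a _ b _ h
    exact mul_left_cancel₀ hm.ne_zero h
  · intro f hf
    rw [Finset.mem_filter, mem_MP] at hf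
    obtain ⟨⟨h1, h2⟩, c, rfl⟩ := hf
    have hc : c.Monic := hm.of_mul_monic_left h1
    refine ⟨c, ?_, rfl⟩
    rw [mem_MP]
    refine ⟨hc, ?_⟩
    rw [hm.natDegree_mul hc] at h2; omega
  · intros; rfl

lemma filter_MP_dvd_empty (m : F[X]) (d : ℕ) (hd : d < m.natDegree) :
    (MP F d).filter (fun f => m ∣ f) = ∅ := by
  rw [Finset.filter_eq_empty_iff]
  intro f hf h
  rw [mem_MP] at hf
  have := natDegree_le_of_dvd h hf.1.ne_zero
  omega

lemma card_class_le (M h : F[X]) (hh : h.Monic) (D : ℕ) :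
    ((MP F D).filter (fun m => h ∣ 1 + M * m)).card ≤ Fintype.card F ^ (D - h.natDegree) := by
  by_cases hne : ((MP F D).filter (fun m => h ∣ 1 + M * m)) = ∅
  · rw [hne]; simp
  obtain ⟨m0, hm0⟩ := Finset.nonempty_iff_ne_empty.2 hne
  rw [Finset.mem_filter, mem_MP] at hm0
  have hcop : IsCoprime h M := by
    obtain ⟨c, hc⟩ := hm0.2
    exact ⟨c, -m0, by linear_combination -hc⟩
  rw [← card_LTP]
  have key : ∀ m ∈ (MP F D).filter (fun m => h ∣ 1 + M * m), ∃ c, m - m0 = h * c := by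
    intro m hm
    rw [Finset.mem_filter, mem_MP] at hm
    apply hcop.dvd_of_dvd_mul_left
    have := dvd_sub hm.2 hm0.2
    convert this using 1
    ring
  choose! c hc using key
  refine Finset.card_le_card_of_injOn c ?_ ?_
  · intro m hm
    have h1 := hc m hm
    have hm' := hm
    rw [Finset.mem_coe, Finset.mem_filter, mem_MP] at hm'
    rw [Finset.mem_coe, mem_LTP]
    by_cases hc0 : c m = 0
    · rw [hc0, degree_zero]; exact WithBot.bot_lt_coe _
    have hlt : (m - m0).degree < m.degree := by
      apply degree_sub_lt_left
      · rw [degree_eq_natDegree hm'.1.1.ne_zero, degree_eq_natDegree hm0.1.1.ne_zero, hm'.1.2, hm0.1.2]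
      · exact hm'.1.1.ne_zero
      · rw [hm'.1.1.leadingCoeff, hm0.1.1.leadingCoeff]
    rw [h1, degree_eq_natDegree (mul_ne_zero hh.ne_zero hc0), degree_eq_natDegree hm'.1.1.ne_zero,
      Nat.cast_lt, natDegree_mul hh.ne_zero hc0, hm'.1.2] at hlt
    rw [degree_eq_natDegree hc0, Nat.cast_lt]
    omega
  · intro a ha b hb hab
    have h1 := hc a ha
    have h2 := hc b hb
    rw [hab, ← h2] at h1
    exact sub_left_injective h1

end

section
variable {K : Type*} [Field K]

lemma no_sq_eq (f : K[X]) (hf : Squarefree f) (hD : 1 ≤ f.natDegree) (c : K) (hc : c ≠ 0) :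
    ∀ (N : ℕ) (A B : K[X]), B.natDegree ≤ N → A ^ 2 = C c * f * B ^ 2 → B = 0 := by
  have hf0 : f ≠ 0 := hf.ne_zero
  have hrad : ∀ A : K[X], f ∣ A ^ 2 → f ∣ A := fun A h => hf.isRadical 2 A h
  have hC : C c * C c⁻¹ = (1 : K[X]) := by rw [← C_mul, mul_inv_cancel₀ hc, C_1]
  have step : ∀ A B : K[X], A ^ 2 = C c * f * B ^ 2 → ∃ A1 B1, B = f * B1 ∧ A1 ^ 2 = C c * f * B1 ^ 2 := by
    intro A B h
    have h1 : f ∣ A := hrad A ⟨C c * B ^ 2, by rw [h]; ring⟩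
    obtain ⟨A1, rfl⟩ := h1
    have h2 : f * A1 ^ 2 = C c * B ^ 2 := by
      apply mul_left_cancel₀ hf0
      linear_combination h
    have h3 : f ∣ B := hrad B ⟨C c⁻¹ * A1 ^ 2, by linear_combination (-C c⁻¹) * h2 - (B^2) * hC⟩
    obtain ⟨B1, rfl⟩ := h3
    refine ⟨A1, B1, rfl, ?_⟩
    apply mul_left_cancel₀ hf0
    linear_combination h2
  intro N
  induction N with
  | zero =>
    intro A B hB h
    obtain ⟨A1, B1, rfl, h1⟩ := step A B h
    by_contra hne
    have hB1 : B1 ≠ 0 := right_ne_zero_of_mul hne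
    rw [natDegree_mul hf0 hB1] at hB
    omega
  | succ N ih =>
    intro A B hB h
    obtain ⟨A1, B1, rfl, h1⟩ := step A B h
    by_contra hne
    have hB1 : B1 ≠ 0 := right_ne_zero_of_mul hne
    rw [natDegree_mul hf0 hB1] at hB
    exact hB1 (ih A1 B1 (by omega) h1)

variable [Fintype K]

/-- Stepanov non-vanishing -/
lemma step_nonvanish (r : ℕ) (hr1 : Odd r) (hadd : ∀ a b : K[X], (a - b) ^ r = a ^ r - b ^ r)
    (f : K[X]) (hf : Squarefree f) (hD : 1 ≤ f.natDegree) (hf0 : f.coeff 0 ≠ 0)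
    (J : ℕ) (A B : ℕ → K[X]) (hA : ∀ j, 2 * (A j).natDegree < r)
    (hB : ∀ j, f.natDegree + 2 * (B j).natDegree < r)
    (h0 : ∑ j ∈ Finset.range J, X ^ (r * j) * (A j + f ^ ((r + 1) / 2) * B j) = 0) :
    ∀ j, j < J → A j = 0 ∧ B j = 0 := by
  intro j
  induction j using Nat.strong_induction_on with
  | _ j ih =>
  intro hj
  set h := f ^ ((r + 1) / 2) with hh
  have hdvd : X ^ (r * (j + 1)) ∣ X ^ (r * j) * (A j + h * B j) := by
    have hsplit := Finset.sum_erase_add (Finset.range J)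
      (fun j => X ^ (r * j) * (A j + h * B j)) (Finset.mem_range.2 hj)
    rw [h0] at hsplit
    have : X ^ (r * (j + 1)) ∣ ∑ x ∈ (Finset.range J).erase j, X ^ (r * x) * (A x + h * B x) := by
      apply Finset.dvd_sum
      intro i hi
      rw [Finset.mem_erase, Finset.mem_range] at hi
      rcases lt_or_gt_of_ne hi.1 with hlt | hgt
      · obtain ⟨ha, hb⟩ := ih i hlt hi.2
        rw [ha, hb]; simp
      · apply Dvd.dvd.mul_right
        apply pow_dvd_pow
        exact Nat.mul_le_mul_left _ hgt
    rw [← dvd_add_right this, hsplit]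
    exact dvd_zero _
  rw [mul_add, pow_add, mul_one] at hdvd
  have hdvd2 : X ^ r ∣ A j + h * B j :=
    (mul_dvd_mul_iff_left (pow_ne_zero _ X_ne_zero)).1 hdvd
  have hsq : h ^ 2 = f ^ r * f := by
    rw [hh, ← pow_mul, ← pow_succ]
    congr 1
    obtain ⟨k, rfl⟩ := hr1
    omega
  have hfr : X ^ r ∣ f ^ r - C (f.coeff 0 ^ r) := by
    rw [C_pow, ← hadd]
    exact pow_dvd_pow_of_dvd (X_dvd_sub_C) r
  have hmain : X ^ r ∣ A j ^ 2 - C (f.coeff 0 ^ r) * f * B j ^ 2 := by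
    have e1 : X ^ r ∣ (A j + h * B j) * (A j - h * B j) := hdvd2.mul_right _
    have e2 : X ^ r ∣ (f ^ r - C (f.coeff 0 ^ r)) * (f * B j ^ 2) := hfr.mul_right _
    have := dvd_add e1 e2
    convert this using 1
    linear_combination ((B j)^2) * hsq
  have hz : A j ^ 2 - C (f.coeff 0 ^ r) * f * B j ^ 2 = 0 := by
    by_contra hne
    have hle := natDegree_le_of_dvd hmain hne
    rw [natDegree_X_pow] at hle
    have h1 : (A j ^ 2).natDegree < r := by rw [natDegree_pow]; exact hA j
    have h2 : (C (f.coeff 0 ^ r) * f * B j ^ 2).natDegree < r := by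
      rw [mul_assoc]
      refine lt_of_le_of_lt (natDegree_C_mul_le _ _) ?_
      refine lt_of_le_of_lt natDegree_mul_le ?_
      rw [natDegree_pow]; exact hB j
    have := natDegree_sub_le (A j ^ 2) (C (f.coeff 0 ^ r) * f * B j ^ 2)
    have := max_lt h1 h2
    omega
  have hB0 : B j = 0 := no_sq_eq f hf hD (f.coeff 0 ^ r) (pow_ne_zero _ hf0) _ (A j) (B j) le_rfl
    (sub_eq_zero.1 hz)
  refine ⟨?_, hB0⟩
  rw [hB0] at hz
  simpa using hz

lemma step_exists (r : ℕ) (hadd : ∀ a b : K[X], (a - b) ^ r = a ^ r - b ^ r)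
    (h : K[X]) (J α β L : ℕ) 
    (hA : ∀ j < J, ∀ A ∈ LTP K α, X ^ j * A ^ r ∈ LTP K L)
    (hB : ∀ j < J, ∀ B ∈ LTP K β, X ^ j * (h * B ^ r) ∈ LTP K L)
    (hL : L < J * (α + β)) :
    ∃ A B : ℕ → K[X], (∀ j, A j ∈ LTP K α) ∧ (∀ j, B j ∈ LTP K β) ∧
      (∃ j < J, ¬ (A j = 0 ∧ B j = 0)) ∧
      ∑ j ∈ Finset.range J, X ^ j * ((A j) ^ r + h * (B j) ^ r) = 0 := by
  let dom := Fintype.piFinset (fun _ : Fin J => (LTP K α) ×ˢ (LTP K β))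
  let φ : (Fin J → K[X] × K[X]) → K[X] :=
    fun u => ∑ j : Fin J, X ^ (j : ℕ) * ((u j).1 ^ r + h * (u j).2 ^ r)
  have hcard : (LTP K L).card < dom.card := by
    simp only [dom, Fintype.card_piFinset, Finset.card_product, card_LTP, ← pow_add, Finset.prod_const,
      Finset.card_univ, Fintype.card_fin, ← pow_mul]
    apply Nat.pow_lt_pow_right Fintype.one_lt_card
    rw [mul_comm]; exact hL
  have hmaps : ∀ u ∈ dom, φ u ∈ LTP K L := by
    intro u hu
    rw [Fintype.mem_piFinset] at hu
    rw [mem_LTP, ← mem_degreeLT]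
    apply Submodule.sum_mem
    intro j _
    have := hu j
    rw [Finset.mem_product] at this
    rw [mul_add]
    apply Submodule.add_mem
    · rw [mem_degreeLT, ← mem_LTP]; exact hA j j.2 _ this.1
    · rw [mem_degreeLT, ← mem_LTP]; exact hB j j.2 _ this.2
  obtain ⟨u, hu, v, hv, hne, heq⟩ := Finset.exists_ne_map_eq_of_card_lt_of_maps_to hcard hmaps
  rw [Fintype.mem_piFinset] at hu hv
  have hsub : ∀ (k : ℕ) (a b : K[X]), a ∈ LTP K k → b ∈ LTP K k → a - b ∈ LTP K k := by
    intro k a b ha hb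
    rw [mem_LTP, ← mem_degreeLT] at *
    exact Submodule.sub_mem _ ha hb
  have hzero : ∀ k, (0 : K[X]) ∈ LTP K k := by
    intro k
    rw [mem_LTP, degree_zero]; exact WithBot.bot_lt_coe _
  refine ⟨fun j => if hj : j < J then (u ⟨j, hj⟩).1 - (v ⟨j, hj⟩).1 else 0,
    fun j => if hj : j < J then (u ⟨j, hj⟩).2 - (v ⟨j, hj⟩).2 else 0, ?_, ?_, ?_, ?_⟩
  · intro j
    dsimp only
    split_ifs with hj
    · exact hsub _ _ _ (Finset.mem_product.1 (hu _)).1 (Finset.mem_product.1 (hv _)).1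
    · exact hzero _
  · intro j
    dsimp only
    split_ifs with hj
    · exact hsub _ _ _ (Finset.mem_product.1 (hu _)).2 (Finset.mem_product.1 (hv _)).2
    · exact hzero _
  · by_contra hcon
    push Not at hcon
    apply hne
    funext j
    have := hcon j j.2
    simp only [j.2, dif_pos, sub_eq_zero, Fin.eta] at this
    exact Prod.ext this.1 this.2
  · rw [Finset.sum_range]
    simp only [Fin.is_lt, dif_pos, Fin.eta, hadd]
    have : φ u - φ v = 0 := sub_eq_zero.2 heq
    simp only [φ, ← Finset.sum_sub_distrib] at this
    rw [← this]
    apply Finset.sum_congr rfl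
    intro j _
    ring

end

section
variable {K : Type*} [Field K] [Fintype K]

lemma stepanov_bound (p m k r : ℕ) [Fact p.Prime] [CharP K p] (hr : r = p ^ m) (hrk : r = 2 * k + 1)
    (hK : Fintype.card K = r ^ 2)
    (f : K[X]) (hf : Squarefree f) (hD : 1 ≤ f.natDegree) (hf0 : f.coeff 0 ≠ 0)
    (hk : 2 * f.natDegree + 4 ≤ k) (a : K) :
    2 * (Finset.univ.filter (fun x : K => f.eval x ^ ((r ^ 2 - 1) / 2) = a)).card
      ≤ r ^ 2 + 7 * f.natDegree * r := by
  set D := f.natDegree with hDdef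
  have hadd : ∀ a b : K[X], (a - b) ^ r = a ^ r - b ^ r := by
    intro a b
    rw [hr]; exact sub_pow_char_pow _ _ _
  have hpos : ∀ (t : ℕ) (A : K[X]), A ∈ LTP K t → A ≠ 0 → A.natDegree + 1 ≤ t := by
    intro t A hA hA0
    rw [mem_LTP, degree_eq_natDegree hA0, Nat.cast_lt] at hA
    omega
  have hLT : ∀ (t : ℕ) (A : K[X]), A.natDegree < t → A ∈ LTP K t := by
    intro t A hA
    rw [mem_LTP]
    exact lt_of_le_of_lt degree_le_natDegree (by exact_mod_cast hA)
  have hz : ∀ k, (0 : K[X]) ∈ LTP K k := by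
    intro k
    rw [mem_LTP, degree_zero]; exact WithBot.bot_lt_coe _
  obtain ⟨A, B, hA, hB, ⟨j0, hj0, hne⟩, hsum⟩ := step_exists (K := K) r hadd (C a * f ^ (k + 1))
    (k + D + 2) k (k - D) (k + D + 2 + r * (k - 1)) (by
      intro j hj A hA
      by_cases hA0 : A = 0
      · subst hA0
        rw [zero_pow (by omega), mul_zero]; exact hz _
      apply hLT
      refine lt_of_le_of_lt natDegree_mul_le ?_
      rw [natDegree_X_pow, natDegree_pow]
      have h1 := hpos _ _ hA hA0
      have : r * A.natDegree ≤ r * (k - 1) := Nat.mul_le_mul_left _ (by omega)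
      omega) (by
      intro j hj B hB
      by_cases hB0 : B = 0
      · subst hB0
        rw [zero_pow (by omega), mul_zero, mul_zero]; exact hz _
      apply hLT
      refine lt_of_le_of_lt natDegree_mul_le ?_
      rw [natDegree_X_pow]
      have h1 := hpos _ _ hB hB0
      have h2 : (C a * f ^ (k + 1) * B ^ r).natDegree ≤ (k + 1) * D + r * B.natDegree := by
        refine natDegree_mul_le.trans ?_
        rw [natDegree_pow]
        refine Nat.add_le_add_right ((natDegree_C_mul_le _ _).trans ?_) _
        rw [natDegree_pow]
      have h3 : (k + 1) * D + r * B.natDegree ≤ r * (k - 1) := by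
        have h4 : r * B.natDegree + r * D ≤ r * (k - 1) := by
          rw [← mul_add]; exact Nat.mul_le_mul_left _ (by omega)
        have h5 : (k + 1) * D ≤ r * D := Nat.mul_le_mul_right _ (by omega)
        omega
      omega) (by
      obtain ⟨e, rfl⟩ : ∃ e, k = 2 * D + 4 + e := ⟨k - (2 * D + 4), by omega⟩
      have e1 : 2 * D + 4 + e - 1 = 2 * D + 3 + e := by omega
      have e2 : 2 * D + 4 + e - D = D + 4 + e := by omega
      rw [e1, e2, hrk]
      nlinarith [mul_nonneg (Nat.zero_le D) (Nat.zero_le e)])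
  set Ψ : K[X] := ∑ j ∈ Finset.range (k + D + 2), X ^ (r * j) * (A j + f ^ ((r + 1) / 2) * B j) with hΨ
  have hhalf : (r + 1) / 2 = k + 1 := by omega
  have hΨ0 : Ψ ≠ 0 := by
    intro h0
    apply hne
    refine step_nonvanish r ⟨k, hrk⟩ hadd f hf hD hf0 (k + D + 2) A B ?_ ?_ h0 j0 hj0
    · intro j
      by_cases h : A j = 0
      · rw [h]; simp; omega
      have := hpos _ _ (hA j) h
      omega
    · intro j
      by_cases h : B j = 0
      · rw [h]; simp; omega
      have := hpos _ _ (hB j) h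
      omega
  have hdeg : Ψ.natDegree ≤ r * (k + D + 1) + (D * (k + 1) + k) := by
    apply natDegree_sum_le_of_forall_le
    intro j hj
    rw [Finset.mem_range] at hj
    refine natDegree_mul_le.trans ?_
    rw [natDegree_X_pow]
    apply Nat.add_le_add
    · exact Nat.mul_le_mul_left _ (by omega)
    · refine (natDegree_add_le _ _).trans (max_le ?_ ?_)
      · by_cases h : A j = 0
        · rw [h]; simp
        have := hpos _ _ (hA j) h
        omega
      · refine natDegree_mul_le.trans ?_
        rw [natDegree_pow, hhalf, mul_comm]
        apply Nat.add_le_add le_rfl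
        by_cases h : B j = 0
        · rw [h]; simp
        have := hpos _ _ (hB j) h
        omega
  have hroot : ∀ x ∈ (Finset.univ.filter (fun x : K => f.eval x ^ ((r ^ 2 - 1) / 2) = a)), x ∈ Ψ.roots := by
    intro x hx
    rw [Finset.mem_filter] at hx
    rw [mem_roots hΨ0, IsRoot.def]
    have h1 : (Ψ.eval x) ^ r = 0 := by
      have h2 := congrArg (fun P => P.eval x) hsum
      simp only [eval_finsetSum, eval_mul, eval_add, eval_pow, eval_X, eval_C, eval_zero] at h2
      rw [← h2, hΨ]
      simp only [eval_finsetSum, eval_mul, eval_add, eval_pow, eval_X]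
      conv_lhs => rw [hr, sum_pow_char_pow, ← hr]
      apply Finset.sum_congr rfl
      intro j _
      have hxj : (x ^ (r * j)) ^ r = x ^ j := by
        rw [← pow_mul, show r * j * r = r ^ 2 * j by ring, pow_mul, ← hK, FiniteField.pow_card]
      have hfx : (f.eval x ^ ((r + 1) / 2)) ^ r = a * f.eval x ^ (k + 1) := by
        rw [← hx.2, ← pow_mul, ← pow_add]
        congr 1
        rw [hhalf, hrk]
        have : ((2 * k + 1) ^ 2 - 1) / 2 = 2 * k ^ 2 + 2 * k := by
          have : (2 * k + 1) ^ 2 = 2 * (2 * k ^ 2 + 2 * k) + 1 := by ring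
          omega
        rw [this]; ring
      rw [mul_pow, hxj]
      congr 1
      conv_lhs => rw [hr, add_pow_char_pow, ← hr]
      rw [mul_pow, hfx]
    exact eq_zero_of_pow_eq_zero h1
  have hcard : (Finset.univ.filter (fun x : K => f.eval x ^ ((r ^ 2 - 1) / 2) = a)).card ≤ Ψ.natDegree := by
    apply card_le_degree_of_subset_roots
    intro x hx
    exact hroot x hx
  have := hcard.trans hdeg
  rw [hrk] at this ⊢
  nlinarith [mul_nonneg (Nat.zero_le D) (Nat.zero_le k), Nat.mul_le_mul_right k hD]

end

section
variable {K : Type*} [Field K] [Fintype K]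

lemma quadCharFn_eq (a : K) : quadCharFn K a = quadraticChar K a := by
  simp only [quadCharFn, quadraticChar_apply, quadraticCharFun]
  congr

lemma quadCharFn_mul (a b : K) : quadCharFn K (a * b) = quadCharFn K a * quadCharFn K b := by
  simp only [quadCharFn_eq, map_mul]

lemma quadCharFn_abs (a : K) : |quadCharFn K a| ≤ 1 := by
  unfold quadCharFn; split_ifs <;> simp

lemma quadCharFn_pow (h2 : ringChar K ≠ 2) (a : K) :
    quadCharFn K a = (if a ^ (Fintype.card K / 2) = 1 then 1 else 0)
      - (if a ^ (Fintype.card K / 2) = -1 then 1 else 0) := by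
  have hne : (-1 : K) ≠ 1 := Ring.neg_one_ne_one_of_char_ne_two h2
  have hpos : Fintype.card K / 2 ≠ 0 := by
    have := Fintype.one_lt_card (α := K)
    omega
  unfold quadCharFn
  by_cases ha : a = 0
  · subst ha
    rw [zero_pow hpos]
    simp
  rw [if_neg ha]
  rw [FiniteField.isSquare_iff h2 ha]
  rcases FiniteField.pow_dichotomy h2 ha with h | h
  · rw [h]; simp [hne.symm]
  · rw [h]; simp [hne]

lemma weil_aux (p m k r : ℕ) [Fact p.Prime] [CharP K p] (hr : r = p ^ m) (hrk : r = 2 * k + 1)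
    (hK : Fintype.card K = r ^ 2)
    (f : K[X]) (hf : Squarefree f) (hD : 1 ≤ f.natDegree) (hf0 : f.coeff 0 ≠ 0)
    (hk : 2 * f.natDegree + 4 ≤ k) (h2 : ringChar K ≠ 2) :
    |∑ x : K, quadCharFn K (f.eval x)| ≤ 14 * f.natDegree * r := by
  have hc2 : Fintype.card K / 2 = (r ^ 2 - 1) / 2 := by
    rw [hK, hrk]
    have : (2 * k + 1) ^ 2 = 2 * (2 * k ^ 2 + 2 * k) + 1 := by ring
    omega
  have hne : (-1 : K) ≠ 1 := Ring.neg_one_ne_one_of_char_ne_two h2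
  have b1 := stepanov_bound p m k r hr hrk hK f hf hD hf0 hk 1
  have b2 := stepanov_bound p m k r hr hrk hK f hf hD hf0 hk (-1)
  have hsum : ∑ x : K, quadCharFn K (f.eval x) =
      ((Finset.univ.filter (fun x : K => f.eval x ^ ((r ^ 2 - 1) / 2) = 1)).card : ℤ)
      - ((Finset.univ.filter (fun x : K => f.eval x ^ ((r ^ 2 - 1) / 2) = -1)).card : ℤ) := by
    simp only [quadCharFn_pow h2, hc2, Finset.sum_sub_distrib, Finset.sum_boole]
  have htot : r ^ 2 ≤ (Finset.univ.filter (fun x : K => f.eval x ^ ((r ^ 2 - 1) / 2) = 1)).card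
      + (Finset.univ.filter (fun x : K => f.eval x ^ ((r ^ 2 - 1) / 2) = -1)).card + f.natDegree := by
    have hsub : (Finset.univ : Finset K) ⊆
      (Finset.univ.filter (fun x : K => f.eval x ^ ((r ^ 2 - 1) / 2) = 1)) ∪
      (Finset.univ.filter (fun x : K => f.eval x ^ ((r ^ 2 - 1) / 2) = -1)) ∪ f.roots.toFinset := by
      intro x _
      simp only [Finset.mem_union, Finset.mem_filter, Finset.mem_univ, true_and, Multiset.mem_toFinset]
      by_cases hx : f.eval x = 0
      · right; rw [mem_roots hf.ne_zero]; exact hx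
      · left
        rw [← hc2]
        exact FiniteField.pow_dichotomy h2 hx
    have h1 := Finset.card_le_card hsub
    rw [Finset.card_univ, hK] at h1
    have h3 := (Finset.card_union_le ((Finset.univ.filter (fun x : K => f.eval x ^ ((r ^ 2 - 1) / 2) = 1)) ∪
      (Finset.univ.filter (fun x : K => f.eval x ^ ((r ^ 2 - 1) / 2) = -1))) f.roots.toFinset)
    have h4 := (Finset.card_union_le (Finset.univ.filter (fun x : K => f.eval x ^ ((r ^ 2 - 1) / 2) = 1))
      (Finset.univ.filter (fun x : K => f.eval x ^ ((r ^ 2 - 1) / 2) = -1)))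
    have h5 : f.roots.toFinset.card ≤ f.natDegree := (Multiset.toFinset_card_le _).trans (card_roots' f)
    omega
  rw [hsum]
  set N1 := (Finset.univ.filter (fun x : K => f.eval x ^ ((r ^ 2 - 1) / 2) = 1)).card
  set N2 := (Finset.univ.filter (fun x : K => f.eval x ^ ((r ^ 2 - 1) / 2) = -1)).card
  have hDr : f.natDegree ≤ f.natDegree * r := Nat.le_mul_of_pos_right _ (by omega)
  zify at b1 b2 htot hDr
  have hpos : (0:ℤ) ≤ f.natDegree * r := by positivity
  rw [abs_le]
  constructor <;> linarith

lemma sum_quad_trivial {ι : Type*} (s : Finset ι) (φ : ι → K) :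
    |∑ x ∈ s, quadCharFn K (φ x)| ≤ s.card := by
  refine (Finset.abs_sum_le_sum_abs _ _).trans ?_
  refine (Finset.sum_le_sum (fun i _ => quadCharFn_abs (φ i))).trans ?_
  simp

lemma weil (p m r : ℕ) [Fact p.Prime] [CharP K p] (hr : r = p ^ m) (hodd : Odd r)
    (hK : Fintype.card K = r ^ 2)
    (f : K[X]) (hf : Squarefree f) (hD : 1 ≤ f.natDegree) (h2 : ringChar K ≠ 2) :
    |∑ x : K, quadCharFn K (f.eval x)| ≤ 14 * f.natDegree * r := by
  obtain ⟨k, hrk⟩ := hodd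
  by_cases hk : 2 * f.natDegree + 4 ≤ k
  · have hex : ∃ c : K, f.eval c ≠ 0 := by
      by_contra hcon
      push Not at hcon
      have h1 : (Finset.univ : Finset K).card ≤ f.natDegree := by
        apply card_le_degree_of_subset_roots
        intro x _
        rw [mem_roots hf.ne_zero]; exact hcon x
      rw [Finset.card_univ, hK] at h1
      nlinarith
    obtain ⟨c, hc⟩ := hex
    have hg : Squarefree (taylor c f) := by
      intro x hx
      have h1 := map_dvd (taylorEquiv c).symm hx
      have h3 : (taylorEquiv c).symm (taylor c f) = f := (taylorEquiv c).symm_apply_apply f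
      rw [h3, map_mul] at h1
      have h4 := (hf _ h1).map (taylorEquiv c)
      simpa using h4
    have := weil_aux p m k r hr hrk hK (taylor c f) hg (by rwa [natDegree_taylor])
      (by rwa [taylor_coeff_zero]) (by rwa [natDegree_taylor]) h2
    rw [natDegree_taylor] at this
    have e : ∑ x : K, quadCharFn K ((taylor c f).eval x) = ∑ x : K, quadCharFn K (f.eval x) := by
      simp only [taylor_eval]
      exact Equiv.sum_comp (Equiv.addRight c) (fun x => quadCharFn K (f.eval x))
    rwa [e] at this
  · refine (sum_quad_trivial _ _).trans ?_
    rw [Finset.card_univ, hK]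
    have : r ^ 2 ≤ 14 * f.natDegree * r := by
      rw [sq]; exact Nat.mul_le_mul_right _ (by omega)
    exact_mod_cast this

end

section
variable {F K : Type*} [Field F] [Fintype F] [Field K] [Fintype K] [Algebra F K]

lemma card_trivial (r : ℕ) (hr : 1 < r) (hK : Fintype.card K = r ^ 2) :
    (Finset.univ.filter (fun x : K => x ^ r = x)).card = r := by
  have h1 : Nat.card (powMonoidHom (r - 1) : Kˣ →* Kˣ).ker = r - 1 := by
    rw [IsCyclic.card_powMonoidHom_ker, Nat.card_eq_fintype_card, Fintype.card_units, hK]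
    apply Nat.gcd_eq_right
    refine ⟨r + 1, ?_⟩
    obtain ⟨s, rfl⟩ : ∃ s, r = s + 1 := ⟨r - 1, by omega⟩
    have : (s + 1) ^ 2 = s * (s + 1 + 1) + 1 := by ring
    simp only [Nat.add_sub_cancel]
    omega
  have h2 : (Finset.univ.filter (fun x : K => x ^ r = x)) =
      insert 0 ((Finset.univ : Finset (powMonoidHom (r - 1) : Kˣ →* Kˣ).ker).image
        (fun u : (powMonoidHom (r - 1) : Kˣ →* Kˣ).ker => ((u : Kˣ) : K))) := by
    ext x
    simp only [Finset.mem_filter, Finset.mem_univ, true_and, Finset.mem_insert, Finset.mem_image]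
    have hsucc : ∀ y : K, y ^ r = y ^ (r - 1) * y := by
      intro y; rw [← pow_succ]; congr 1; omega
    constructor
    · intro hx
      by_cases h0 : x = 0
      · left; exact h0
      · right
        refine ⟨⟨Units.mk0 x h0, ?_⟩, rfl⟩
        rw [MonoidHom.mem_ker, powMonoidHom_apply]
        ext
        rw [hsucc] at hx
        simp only [Units.val_pow_eq_pow_val, Units.val_mk0, Units.val_one]
        exact mul_right_cancel₀ h0 (by rw [hx, one_mul])
    · rintro (rfl | ⟨⟨u, hu⟩, rfl⟩)
      · exact zero_pow (by omega)
      · rw [MonoidHom.mem_ker, powMonoidHom_apply] at hu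
        rw [hsucc]
        have : (u : K) ^ (r - 1) = 1 := by
          rw [← Units.val_pow_eq_pow_val, hu, Units.val_one]
        simp [this]
  rw [h2, Finset.card_insert_of_notMem, Finset.card_image_of_injective]
  · rw [Finset.card_univ, ← Nat.card_eq_fintype_card, h1]; omega
  · intro a b h
    exact Subtype.ext (Units.ext h)
  · simp

lemma quad_of_fixed (r : ℕ) (hr : Odd r) (hr1 : 1 < r) (hK : Fintype.card K = r ^ 2)
    (h2 : ringChar K ≠ 2) (z : K) (hz : z ^ r = z) (hz0 : z ≠ 0) : quadCharFn K z = 1 := by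
  have hp : z ^ (Fintype.card K / 2) = 1 := by
    obtain ⟨k, rfl⟩ := hr
    have h3 : z ^ (2 * k) = 1 := by
      rw [pow_succ] at hz
      exact mul_right_cancel₀ hz0 (by rw [hz, one_mul])
    have : Fintype.card K / 2 = 2 * k * (k + 1) := by
      rw [hK]
      have : (2 * k + 1) ^ 2 = 2 * (2 * k * (k + 1)) + 1 := by ring
      omega
    rw [this, pow_mul, h3, one_pow]
  unfold quadCharFn
  rw [if_neg hz0, if_pos ((FiniteField.isSquare_iff h2 hz0).2 hp)]

lemma aeval_fixed (q m : ℕ) (hF : Fintype.card F = q) (x : K) (hx : x ^ (q ^ m) = x) (f : F[X]) :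
    (aeval x f) ^ (q ^ m) = aeval x f := by
  have key : ∀ y : K, y ^ (q ^ m) = ((FiniteField.frobeniusAlgHom F K) ^ m) y := by
    clear hx
    induction m with
    | zero => intro y; simp
    | succ m ih =>
      intro y
      rw [pow_succ (FiniteField.frobeniusAlgHom F K) m, AlgHom.mul_apply, ← ih, pow_succ', pow_mul]
      congr 1
      rw [← hF]; rfl
  rw [key, ← aeval_algHom_apply, ← key, hx]

lemma exists_neg_one (q n : ℕ) (hF : Fintype.card F = q) (hK : Fintype.card K = q ^ n) (hn : Even n)
    (hq : Odd q) (h2 : ringChar K ≠ 2)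
    (x : K) (hx : x ^ (q ^ (n / 2)) ≠ x) : ∃ u : F[X], quadCharFn K (aeval x u) = -1 := by
  by_contra hcon
  push Not at hcon
  have hq1 : 1 < q := by rw [← hF]; exact Fintype.one_lt_card
  let V := IntermediateField.adjoin F {x}
  have hVmem : ∀ y ∈ V, ∃ u : F[X], y = aeval x u := by
    intro y hy
    have h1 : y ∈ V.toSubalgebra := hy
    rw [IntermediateField.adjoin_simple_toSubalgebra_of_isAlgebraic (Algebra.IsAlgebraic.isAlgebraic x),
      Algebra.adjoin_singleton_eq_range_aeval] at h1
    obtain ⟨u, hu⟩ := h1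
    exact ⟨u, hu.symm⟩
  set d := Module.finrank F V with hd
  have hVc : Fintype.card V = q ^ d := by rw [Module.card_eq_pow_finrank (K := F), hF]
  have hKc : Module.finrank F K = n := by
    have := Module.card_eq_pow_finrank (K := F) (V := K)
    rw [hF, hK] at this
    exact (Nat.pow_right_injective hq1 this).symm
  obtain ⟨k, hk⟩ : d ∣ n := ⟨Module.finrank V K, by rw [← hKc, Module.finrank_mul_finrank]⟩
  have hdpos : 0 < d := Module.finrank_pos
  have hxV : x ^ (q ^ d) = x := by
    have := FiniteField.pow_card (⟨x, IntermediateField.mem_adjoin_simple_self F x⟩ : V)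
    rw [hVc] at this
    exact congrArg Subtype.val this
  have hiter : ∀ j, x ^ (q ^ (d * j)) = x := by
    intro j
    induction j with
    | zero => simp
    | succ j ih => rw [mul_add, mul_one, pow_add, pow_mul, ih, hxV]
  rcases Nat.even_or_odd k with hke | hko
  · obtain ⟨j, rfl⟩ := hke
    apply hx
    have : n / 2 = d * j := by rw [hk, ← two_mul]; rw [show d * (2 * j) = 2 * (d * j) by ring]; omega
    rw [this]; exact hiter j
  · have hall : ∀ y : Vˣ, y ^ (Fintype.card K / 2) = 1 := by
      intro y
      obtain ⟨u, hu⟩ := hVmem (y : V) (y : V).2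
      have hy0 : ((y : V) : K) ≠ 0 := by
        intro h
        exact y.ne_zero (Subtype.ext h)
      have h1 := hcon u
      rw [← hu] at h1
      have h3 : ((y : V) : K) ^ (Fintype.card K / 2) = 1 := by
        rw [← FiniteField.isSquare_iff h2 hy0]
        by_contra hns
        apply h1
        unfold quadCharFn
        rw [if_neg hy0, if_neg hns]
      ext
      simpa using h3
    rw [FiniteField.forall_pow_eq_one_iff, hVc, hK] at hall
    -- (q^d - 1) * S = q^n - 1
    have hgeom : (∑ i ∈ Finset.range k, (q ^ d) ^ i) * (q ^ d - 1) = q ^ n - 1 := by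
      rw [hk, pow_mul]
      have h1 := geom_sum_mul ((q ^ d : ℕ) : ℤ) k
      have h3 : 1 ≤ q ^ d := Nat.one_le_pow _ _ (by omega)
      have h4 : 1 ≤ (q ^ d) ^ k := Nat.one_le_pow _ _ h3
      zify [h3, h4]
      exact_mod_cast h1
    have hSodd : Odd (∑ i ∈ Finset.range k, (q ^ d) ^ i) := by
      rw [Finset.odd_sum_iff_odd_card_odd, Finset.filter_true_of_mem]
      · simpa using hko
      · intro i _
        exact (hq.pow).pow
    obtain ⟨s, hs⟩ := hSodd
    obtain ⟨t, ht⟩ := hall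
    have hqn : Odd (q ^ n) := hq.pow
    have hqd : 1 < q ^ d := Nat.one_lt_pow hdpos.ne' hq1
    obtain ⟨w, hw⟩ := hqn
    have e1 : q ^ n - 1 = 2 * ((q ^ d - 1) * t) := by rw [← ht]; omega
    rw [← hgeom, hs] at e1
    have e2 : (q ^ d - 1) * (2 * s + 1) = (q ^ d - 1) * (2 * t) := by linarith
    have := Nat.eq_of_mul_eq_mul_left (by omega) e2
    omega

end

section
variable {F K : Type*} [Field F] [Fintype F] [Field K] [Fintype K] [Algebra F K]

lemma quad_const (q n : ℕ) (hF : Fintype.card F = q) (hK : Fintype.card K = q ^ n)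
    (hn : Even n) (hn0 : 0 < n) (hq : Odd q) (hq1 : 1 < q) (h2 : ringChar K ≠ 2) (c : F) (hc : c ≠ 0) :
    quadCharFn K (algebraMap F K c) = 1 := by
  obtain ⟨k, rfl⟩ := hn
  have hk : k ≠ 0 := by omega
  have hc' : c ^ (q ^ k) = c := by
    rw [← hF]; exact FiniteField.pow_card_pow k c
  apply quad_of_fixed (q ^ k) (hq.pow) (Nat.one_lt_pow hk hq1) (by rw [hK]; ring) h2
  · rw [← map_pow, hc']
  · simpa using hc

lemma weilF (p m r : ℕ) [Fact p.Prime] [CharP K p] (hr : r = p ^ m) (hodd : Odd r)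
    (hK : Fintype.card K = r ^ 2) (f : F[X]) (hf : Squarefree f) (hD : 1 ≤ f.natDegree)
    (h2 : ringChar K ≠ 2) :
    |∑ x : K, quadCharFn K (aeval x f)| ≤ 14 * f.natDegree * r := by
  have hs : f.Separable := PerfectField.separable_iff_squarefree.mpr hf
  have hs2 : (f.map (algebraMap F K)).Separable := hs.map
  have := weil p m r hr hodd hK (f.map (algebraMap F K)) hs2.squarefree
    (by rwa [natDegree_map]) h2
  rw [natDegree_map] at this
  simpa only [eval_map_algebraMap] using this

lemma sum_MP_zero (q n : ℕ) (hF : Fintype.card F = q) (hK : Fintype.card K = q ^ n)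
    (hn : Even n) (hq : Odd q) (hq1 : 1 < q) (h2 : ringChar K ≠ 2) (x : K) (hx : x ^ (q ^ (n / 2)) ≠ x)
    (e : ℕ) (he : n ≤ e) : ∑ f ∈ MP F e, quadCharFn K (aeval x f) = 0 := by
  obtain ⟨u, hu⟩ := exists_neg_one q n hF hK hn hq h2 x hx
  set P := minpoly F x with hP
  have hxint : IsIntegral F x := Algebra.IsIntegral.isIntegral x
  have hPm : P.Monic := minpoly.monic hxint
  have hdeg : P.natDegree ≤ e := by
    refine le_trans (minpoly.natDegree_le x) (le_trans (le_of_eq ?_) he)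
    have h3 := Module.card_eq_pow_finrank (K := F) (V := K)
    rw [hF, hK] at h3
    exact (Nat.pow_right_injective hq1 h3).symm
  have hPx : aeval x P = 0 := minpoly.aeval F x
  have hmod : ∀ w : F[X], aeval x (w %ₘ P) = aeval x w := by
    intro w
    conv_rhs => rw [← modByMonic_add_div w P]
    simp [hPx]
  set T : F[X] → F[X] := fun f => f - ((f - u * f) %ₘ P) with hT
  have hTx : ∀ f, aeval x (T f) = aeval x u * aeval x f := by
    intro f
    simp only [hT, map_sub, hmod, map_mul]; ring
  have hP1 : P ≠ 1 := minpoly.ne_one F x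
  have hlt : ∀ w f : F[X], f ∈ MP F e → (w %ₘ P).degree < f.degree := by
    intro w f hf
    rw [mem_MP] at hf
    refine lt_of_lt_of_le (degree_modByMonic_lt w hPm) ?_
    rw [degree_eq_natDegree hPm.ne_zero, degree_eq_natDegree hf.1.ne_zero, hf.2]
    exact_mod_cast hdeg
  have hmaps : ∀ f ∈ MP F e, T f ∈ MP F e := by
    intro f hf
    have h1 := hlt (f - u * f) f hf
    have h3 := (mem_MP).1 hf
    rw [mem_MP]
    have hd : (T f).degree = f.degree := by
      simp only [hT]; exact degree_sub_eq_left_of_degree_lt h1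
    exact ⟨h3.1.sub_of_left h1, by rw [natDegree_eq_of_degree_eq hd, h3.2]⟩
  have hux : aeval x u ≠ 0 := by
    intro h; rw [h] at hu; simp [quadCharFn] at hu
  have hinj : Set.InjOn T (MP F e : Set F[X]) := by
    intro f hf f' hf' h
    have h1 : aeval x f = aeval x f' := by
      have := congrArg (aeval x) h
      rw [hTx, hTx] at this
      exact mul_left_cancel₀ hux this
    have h3 : P ∣ (f - u * f) - (f' - u * f') := by
      rw [hP]; apply minpoly.dvd; simp [h1]
    have h4 : (f - u * f) %ₘ P = (f' - u * f') %ₘ P := by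
      have := (modByMonic_eq_zero_iff_dvd hPm).2 h3
      rw [sub_modByMonic] at this
      exact sub_eq_zero.1 this
    simp only [hT, h4] at h
    exact sub_left_inj.1 h
  have himg : (MP F e).image T = MP F e := by
    apply Finset.eq_of_subset_of_card_le
    · intro y hy
      obtain ⟨f, hf, rfl⟩ := Finset.mem_image.1 hy
      exact hmaps f hf
    · rw [Finset.card_image_of_injOn hinj]
  have h5 : ∑ f ∈ MP F e, quadCharFn K (aeval x f) = ∑ f ∈ MP F e, quadCharFn K (aeval x (T f)) := by
    conv_lhs => rw [← himg]
    rw [Finset.sum_image hinj]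
  have h6 : ∑ f ∈ MP F e, quadCharFn K (aeval x (T f)) = - ∑ f ∈ MP F e, quadCharFn K (aeval x f) := by
    rw [← Finset.sum_neg_distrib]
    apply Finset.sum_congr rfl
    intro f _
    rw [hTx, quadCharFn_mul, hu]; ring
  rw [h6] at h5
  linarith
end

/-- monic polynomials of degree at most `d` -/
noncomputable def MPle (F : Type*) [Field F] [Fintype F] (d : ℕ) : Finset F[X] :=
  (Finset.range (d + 1)).biUnion (MP F)

/-- monic divisors of `f` -/
noncomputable def MDiv {F : Type*} [Field F] [Fintype F] (f : F[X]) : Finset F[X] :=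
  (MPle F f.natDegree).filter (· ∣ f)

section
variable {F : Type*} [Field F] [Fintype F]

lemma mem_MPle {d : ℕ} {f : F[X]} : f ∈ MPle F d ↔ f.Monic ∧ f.natDegree ≤ d := by
  simp only [MPle, Finset.mem_biUnion, Finset.mem_range, mem_MP]
  constructor
  · rintro ⟨a, h, h1, h2⟩; exact ⟨h1, by omega⟩
  · rintro ⟨h1, h2⟩; exact ⟨_, by omega, h1, rfl⟩

lemma mem_MDiv {f k : F[X]} (hf : f ≠ 0) : k ∈ MDiv f ↔ k.Monic ∧ k ∣ f := by
  simp only [MDiv, Finset.mem_filter, mem_MPle]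
  constructor
  · rintro ⟨⟨h1, h2⟩, h3⟩; exact ⟨h1, h3⟩
  · rintro ⟨h1, h3⟩; exact ⟨⟨h1, natDegree_le_of_dvd h3 hf⟩, h3⟩

lemma MP_disjoint (s : Set ℕ) : s.PairwiseDisjoint (MP F) := by
  intro a _ b _ hab
  refine Finset.disjoint_left.2 ?_
  intro f h1 h2
  rw [mem_MP] at h1 h2
  exact hab (h1.2.symm.trans h2.2)

lemma sum_MPle {β : Type*} [AddCommMonoid β] (φ : F[X] → β) (d : ℕ) :
    ∑ f ∈ MPle F d, φ f = ∑ j ∈ Finset.range (d + 1), ∑ f ∈ MP F j, φ f := by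
  unfold MPle
  rw [Finset.sum_biUnion (MP_disjoint _)]

lemma sum_MPle_inv (d : ℕ) :
    ∑ f ∈ MPle F d, ((Fintype.card F : ℝ)⁻¹) ^ f.natDegree = d + 1 := by
  rw [sum_MPle]
  have : ∀ j ∈ Finset.range (d + 1), ∑ f ∈ MP F j, ((Fintype.card F : ℝ)⁻¹) ^ f.natDegree = 1 := by
    intro j _
    rw [Finset.sum_congr rfl (g := fun _ => ((Fintype.card F : ℝ)⁻¹) ^ j)
      (fun f hf => by rw [(mem_MP.1 hf).2])]
    rw [Finset.sum_const, card_MP, nsmul_eq_mul]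
    have : (Fintype.card F : ℝ) ≠ 0 := by
      exact_mod_cast Fintype.card_ne_zero
    push_cast
    rw [← mul_pow, mul_inv_cancel₀ this, one_pow]
  rw [Finset.sum_congr rfl this]
  simp

lemma sum_MDiv (d : ℕ) :
    ∑ f ∈ MP F d, (MDiv f).card = (d + 1) * Fintype.card F ^ d := by
  have h1 : ∀ f ∈ MP F d, (MDiv f).card = ∑ k ∈ MPle F d, if k ∣ f then 1 else 0 := by
    intro f hf
    rw [MDiv, (mem_MP.1 hf).2, Finset.card_filter]
  rw [Finset.sum_congr rfl h1, Finset.sum_comm, sum_MPle]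
  have h2 : ∀ j ∈ Finset.range (d + 1), ∑ k ∈ MP F j, ∑ f ∈ MP F d, (if k ∣ f then 1 else 0)
      = Fintype.card F ^ d := by
    intro j hj
    have hj' : j ≤ d := by simpa [Nat.lt_succ_iff] using hj
    have h3 : ∀ k ∈ MP F j, ∑ f ∈ MP F d, (if k ∣ f then 1 else 0) = Fintype.card F ^ (d - j) := by
      intro k hk
      rw [mem_MP] at hk
      rw [← Finset.sum_filter, sum_MP_dvd (fun _ => 1) k hk.1 d (by omega)]
      rw [hk.2]; simp [card_MP]
    rw [Finset.sum_congr rfl h3, Finset.sum_const, card_MP, smul_eq_mul, ← pow_add]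
    congr 1; omega
  rw [Finset.sum_congr rfl h2]; simp

lemma exists_monic_irr (z : F[X]) (hz : Irreducible z) :
    ∃ Q : F[X], Q.Monic ∧ Irreducible Q ∧ Associated Q z := by
  refine ⟨normalize z, monic_normalize hz.ne_zero, ?_, normalize_associated z⟩
  exact (normalize_associated z).symm.irreducible hz

/-- the local obstruction at `Q` -/
noncomputable def locOb (f2 f3 Q : F[X]) : F[X] := if Q ∣ f2 ∨ Q ∣ f3 then Q else Q ^ 2

/-- monic irreducibles of degree at most d -/
noncomputable def PP (F : Type*) [Field F] [Fintype F] (d : ℕ) : Finset F[X] :=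
  (MPle F d).filter Irreducible

lemma mem_PP {d : ℕ} {f : F[X]} : f ∈ PP F d ↔ f.Monic ∧ Irreducible f ∧ f.natDegree ≤ d := by
  simp only [PP, Finset.mem_filter, mem_MPle]; tauto

lemma good_iff {d : ℕ} (f1 f2 f3 : F[X]) (hf : f1 ∈ MP F d) :
    (Squarefree f1 ∧ IsCoprime f1 f2 ∧ IsCoprime f1 f3) ↔
      ∀ Q ∈ PP F d, ¬ locOb f2 f3 Q ∣ f1 := by
  rw [mem_MP] at hf
  constructor
  · rintro ⟨h1, h2, h3⟩ Q hQ hdvd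
    rw [mem_PP] at hQ
    unfold locOb at hdvd
    split_ifs at hdvd with h
    · rcases h with h | h
      · exact hQ.2.1.not_isUnit (h2.isUnit_of_dvd' hdvd h)
      · exact hQ.2.1.not_isUnit (h3.isUnit_of_dvd' hdvd h)
    · rw [pow_two] at hdvd
      exact hQ.2.1.not_isUnit (h1 Q hdvd)
  · intro H
    have key : ∀ z, Irreducible z → z ∣ f1 → (z ∣ f2 ∨ z ∣ f3 ∨ z * z ∣ f1) → False := by
      intro z hz hz1 hz2
      obtain ⟨Q, hQm, hQi, hQz⟩ := exists_monic_irr z hz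
      have hQ1 : Q ∣ f1 := hQz.dvd.trans hz1
      have hQP : Q ∈ PP F d := by
        rw [mem_PP]
        refine ⟨hQm, hQi, ?_⟩
        rw [← hf.2]; exact natDegree_le_of_dvd hQ1 hf.1.ne_zero
      apply H Q hQP
      unfold locOb
      split_ifs with h
      · exact hQ1
      · push Not at h
        rcases hz2 with h' | h' | h'
        · exact absurd (hQz.dvd.trans h') h.1
        · exact absurd (hQz.dvd.trans h') h.2
        · rw [pow_two]; exact (mul_dvd_mul hQz.dvd hQz.dvd).trans h'
    refine ⟨?_, ?_, ?_⟩
    · rw [squarefree_iff_irreducible_sq_not_dvd_of_ne_zero hf.1.ne_zero]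
      intro z hz h
      exact key z hz ((dvd_mul_right z z).trans h) (Or.inr (Or.inr h))
    · apply isCoprime_of_irreducible_dvd
      · intro h; exact hf.1.ne_zero h.1
      · intro z hz h1 h2; exact key z hz h1 (Or.inl h2)
    · apply isCoprime_of_irreducible_dvd
      · intro h; exact hf.1.ne_zero h.1
      · intro z hz h1 h2; exact key z hz h1 (Or.inr (Or.inl h2))

lemma monic_irr_coprime {Q R : F[X]} (hQ : Q.Monic) (hR : R.Monic) (hQi : Irreducible Q)
    (hRi : Irreducible R) (h : Q ≠ R) : IsCoprime Q R := by
  rw [hQi.coprime_iff_not_dvd]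
  intro hd
  exact h (eq_of_monic_of_associated hQ hR (hQi.associated_of_dvd hRi hd))

lemma star_coprime (f2 f3 : F[X]) {Q R : F[X]} (h : IsCoprime Q R) :
    IsCoprime (locOb f2 f3 Q) (locOb f2 f3 R) := by
  unfold locOb
  split_ifs
  · exact h
  · exact h.pow_right
  · exact h.pow_left
  · exact h.pow

lemma prod_star_dvd_iff {d : ℕ} (f2 f3 f1 : F[X]) (S : Finset F[X]) (hS : S ⊆ PP F d) :
    (∏ Q ∈ S, locOb f2 f3 Q) ∣ f1 ↔ ∀ Q ∈ S, locOb f2 f3 Q ∣ f1 := by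
  constructor
  · intro h Q hQ; exact (Finset.dvd_prod_of_mem _ hQ).trans h
  · intro h
    apply Finset.prod_dvd_of_coprime _ h
    intro Q hQ R hR hne
    have h1 := mem_PP.1 (hS hQ)
    have h2 := mem_PP.1 (hS hR)
    exact star_coprime f2 f3 (monic_irr_coprime h1.1 h2.1 h1.2.1 h2.2.1 hne)

lemma star_monic (f2 f3 : F[X]) {Q : F[X]} (h : Q.Monic) : (locOb f2 f3 Q).Monic := by
  unfold locOb
  split_ifs
  · exact h
  · exact h.pow 2

lemma sum_dvd_bound (ψ : F[X] → ℤ) (hmul : ∀ a b, ψ (a * b) = ψ a * ψ b)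
    (habs : ∀ a, |ψ a| ≤ 1) (n : ℕ) (hz : ∀ e, n ≤ e → ∑ f ∈ MP F e, ψ f = 0)
    (d : ℕ) (m : F[X]) (hm : m.Monic) :
    |∑ f ∈ (MP F d).filter (m ∣ ·), ψ f| ≤
      if m.natDegree ≤ d ∧ d < m.natDegree + n then (Fintype.card F : ℤ) ^ (d - m.natDegree) else 0 := by
  by_cases h : m.natDegree ≤ d
  · rw [sum_MP_dvd ψ m hm d h]
    simp only [hmul, ← Finset.mul_sum]
    split_ifs with h2
    · rw [abs_mul]
      refine (mul_le_of_le_one_left (abs_nonneg _) (habs _)).trans ?_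
      refine (Finset.abs_sum_le_sum_abs _ _).trans ?_
      refine (Finset.sum_le_sum (fun i _ => habs _)).trans ?_
      simp [card_MP]
    · rw [hz _ (by omega)]; simp
  · rw [filter_MP_dvd_empty m d (by omega)]
    simp [h]

lemma good_sum_bound1 (ψ : F[X] → ℤ) (hmul : ∀ a b, ψ (a * b) = ψ a * ψ b)
    (habs : ∀ a, |ψ a| ≤ 1) (n : ℕ) (hz : ∀ e, n ≤ e → ∑ f ∈ MP F e, ψ f = 0)
    (d : ℕ) (f2 f3 : F[X]) :
    |∑ f1 ∈ (MP F d).filter (fun f1 => Squarefree f1 ∧ IsCoprime f1 f2 ∧ IsCoprime f1 f3), ψ f1| ≤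
    ∑ S ∈ (PP F d).powerset, 
      if (∏ Q ∈ S, locOb f2 f3 Q).natDegree ≤ d ∧ d < (∏ Q ∈ S, locOb f2 f3 Q).natDegree + n then
       (Fintype.card F : ℤ) ^ (d - (∏ Q ∈ S, locOb f2 f3 Q).natDegree) else 0 := by
  have h1 : ∑ f1 ∈ (MP F d).filter (fun f1 => Squarefree f1 ∧ IsCoprime f1 f2 ∧ IsCoprime f1 f3), ψ f1
    = ∑ f1 ∈ MP F d, ∑ S ∈ (PP F d).powerset, ψ f1 * ∏ Q ∈ S, (-(if locOb f2 f3 Q ∣ f1 then (1:ℤ) else 0)) := by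
    rw [Finset.sum_filter]
    apply Finset.sum_congr rfl
    intro f1 hf1
    rw [← Finset.mul_sum, ← Finset.prod_one_add]
    simp only [good_iff f1 f2 f3 hf1]
    split_ifs with h
    · rw [Finset.prod_eq_one, mul_one]
      intro Q hQ; simp [h Q hQ]
    · push Not at h
      obtain ⟨Q, hQ, hd⟩ := h
      rw [Finset.prod_eq_zero hQ, mul_zero]
      simp [hd]
  rw [h1, Finset.sum_comm]
  refine (Finset.abs_sum_le_sum_abs _ _).trans (Finset.sum_le_sum ?_)
  intro S hS
  rw [Finset.mem_powerset] at hS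
  refine le_trans (le_of_eq ?_) (sum_dvd_bound ψ hmul habs n hz d (∏ Q ∈ S, locOb f2 f3 Q) ?_)
  · have h2 : ∀ f1 ∈ MP F d, ψ f1 * ∏ Q ∈ S, (-(if locOb f2 f3 Q ∣ f1 then (1:ℤ) else 0)) =
      (-1) ^ S.card * (if (∏ Q ∈ S, locOb f2 f3 Q) ∣ f1 then ψ f1 else 0) := by
      intro f1 _
      simp only [prod_star_dvd_iff f2 f3 f1 S hS]
      split_ifs with h
      · rw [Finset.prod_congr rfl (g := fun _ => (-1 : ℤ)) (fun Q hQ => by simp [h Q hQ])]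
        rw [Finset.prod_const]; ring
      · push Not at h
        obtain ⟨Q, hQ, hd⟩ := h
        rw [Finset.prod_eq_zero hQ (by simp [hd])]; simp
    rw [Finset.sum_congr rfl h2, ← Finset.mul_sum, ← Finset.sum_filter, abs_mul, abs_pow]
    simp
  · exact monic_prod_of_monic _ _ (fun Q hQ => star_monic f2 f3 (mem_PP.1 (hS hQ)).1)

lemma PP_prod_inj {d : ℕ} {S S' : Finset F[X]} (hS : S ⊆ PP F d) (hS' : S' ⊆ PP F d)
    (h : ∏ Q ∈ S, Q = ∏ Q ∈ S', Q) : S = S' := by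
  have key : ∀ T T' : Finset F[X], T ⊆ PP F d → T' ⊆ PP F d → ∏ Q ∈ T, Q = ∏ Q ∈ T', Q → T ⊆ T' := by
    intro T T' hT hT' hh Q hQ
    have h1 := mem_PP.1 (hT hQ)
    have h2 : Q ∣ ∏ Q ∈ T', Q := hh ▸ Finset.dvd_prod_of_mem _ hQ
    obtain ⟨R, hR, hd⟩ := (h1.2.1.prime.dvd_finsetProd_iff _).1 h2
    have h3 := mem_PP.1 (hT' hR)
    have := eq_of_monic_of_associated h1.1 h3.1 (h1.2.1.associated_of_dvd h3.2.1 hd)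
    rw [this]; exact hR
  exact Finset.Subset.antisymm (key _ _ hS hS' h) (key _ _ hS' hS h.symm)

lemma PP_prod_dvd {d : ℕ} {S : Finset F[X]} (hS : S ⊆ PP F d) (f : F[X]) (h : ∀ Q ∈ S, Q ∣ f) :
    ∏ Q ∈ S, Q ∣ f := by
  apply Finset.prod_dvd_of_coprime _ h
  intro Q hQ R hR hne
  have h1 := mem_PP.1 (hS hQ)
  have h2 := mem_PP.1 (hS hR)
  exact monic_irr_coprime h1.1 h2.1 h1.2.1 h2.2.1 hne

lemma PP_prod_monic {d : ℕ} {S : Finset F[X]} (hS : S ⊆ PP F d) : (∏ Q ∈ S, Q).Monic :=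
  monic_prod_of_monic _ _ (fun Q hQ => (mem_PP.1 (hS hQ)).1)

lemma good_sum_bound (ψ : F[X] → ℤ) (hmul : ∀ a b, ψ (a * b) = ψ a * ψ b)
    (habs : ∀ a, |ψ a| ≤ 1) (n : ℕ) (hz : ∀ e, n ≤ e → ∑ f ∈ MP F e, ψ f = 0)
    (s : ℝ) (hs : s ^ 2 = Fintype.card F) (hs1 : 1 ≤ s)
    (d : ℕ) (f2 f3 : F[X]) (h2 : f2 ≠ 0) (h3 : f3 ≠ 0) :
    s ^ d * |((∑ f1 ∈ (MP F d).filter (fun f1 => Squarefree f1 ∧ IsCoprime f1 f2 ∧ IsCoprime f1 f3), ψ f1 : ℤ) : ℝ)| ≤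
     (Fintype.card F : ℝ) ^ d * s ^ n * ((d + 1) * ((MDiv f2).card * (MDiv f3).card)) := by
  have hb := good_sum_bound1 ψ hmul habs n hz d f2 f3
  have hb' : |((∑ f1 ∈ (MP F d).filter (fun f1 => Squarefree f1 ∧ IsCoprime f1 f2 ∧ IsCoprime f1 f3), ψ f1 : ℤ) : ℝ)| ≤ ∑ S ∈ (PP F d).powerset, 
      if (∏ Q ∈ S, locOb f2 f3 Q).natDegree ≤ d ∧ d < (∏ Q ∈ S, locOb f2 f3 Q).natDegree + n then
       (Fintype.card F : ℝ) ^ (d - (∏ Q ∈ S, locOb f2 f3 Q).natDegree) else 0 := by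
    rw [← Int.cast_abs]
    refine (Int.cast_le.2 hb).trans (le_of_eq ?_)
    push_cast
    rfl
  have hspos : 0 < s := by linarith
  refine (mul_le_mul_of_nonneg_left hb' (by positivity)).trans ?_
  rw [← Finset.sum_filter, Finset.mul_sum]
  set 𝒮 := (PP F d).powerset.filter (fun S => (∏ Q ∈ S, locOb f2 f3 Q).natDegree ≤ d ∧
    d < (∏ Q ∈ S, locOb f2 f3 Q).natDegree + n) with h𝒮
  set A : Finset F[X] → Finset F[X] := fun S => S.filter (· ∣ f2) with hA
  set B : Finset F[X] → Finset F[X] := fun S => (S.filter (fun Q => ¬ Q ∣ f2)).filter (· ∣ f3) with hB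
  set E : Finset F[X] → Finset F[X] := fun S => (S.filter (fun Q => ¬ Q ∣ f2)).filter (fun Q => ¬ Q ∣ f3) with hE
  have hsplit : ∀ (S : Finset F[X]) (φ : F[X] → F[X]), ∏ Q ∈ S, φ Q =
      (∏ Q ∈ A S, φ Q) * ((∏ Q ∈ B S, φ Q) * (∏ Q ∈ E S, φ Q)) := by
    intro S φ
    simp only [hA, hB, hE]
    rw [Finset.prod_filter_mul_prod_filter_not, Finset.prod_filter_mul_prod_filter_not]
  have hAS : ∀ S, A S ⊆ S := fun S => Finset.filter_subset _ _
  have hBS : ∀ S, B S ⊆ S := fun S => (Finset.filter_subset _ _).trans (Finset.filter_subset _ _)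
  have hES : ∀ S, E S ⊆ S := fun S => (Finset.filter_subset _ _).trans (Finset.filter_subset _ _)
  set Φ : Finset F[X] → F[X] × F[X] × F[X] := fun S => (∏ Q ∈ A S, Q, ∏ Q ∈ B S, Q, ∏ Q ∈ E S, Q) with hΦ
  have hmS : ∀ S, ∏ Q ∈ S, locOb f2 f3 Q = (∏ Q ∈ A S, Q) * ((∏ Q ∈ B S, Q) * (∏ Q ∈ E S, Q) ^ 2) := by
    intro S
    rw [hsplit, ← Finset.prod_pow]
    congr 1
    · apply Finset.prod_congr rfl
      intro Q hQ
      simp only [hA, Finset.mem_filter] at hQ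
      simp [locOb, hQ.2]
    congr 1
    · apply Finset.prod_congr rfl
      intro Q hQ
      simp only [hB, Finset.mem_filter] at hQ
      simp [locOb, hQ.2]
    · apply Finset.prod_congr rfl
      intro Q hQ
      simp only [hE, Finset.mem_filter] at hQ
      simp [locOb, hQ.2, hQ.1.2]
  have hdeg : ∀ S ⊆ PP F d, (∏ Q ∈ S, locOb f2 f3 Q).natDegree =
      (∏ Q ∈ A S, Q).natDegree + ((∏ Q ∈ B S, Q).natDegree + 2 * (∏ Q ∈ E S, Q).natDegree) := by
    intro S hS
    have ha := PP_prod_monic ((hAS S).trans hS)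
    have hb := PP_prod_monic ((hBS S).trans hS)
    have he := PP_prod_monic ((hES S).trans hS)
    rw [hmS, ha.natDegree_mul (hb.mul (he.pow 2)), hb.natDegree_mul (he.pow 2), he.natDegree_pow]
  have hqpos : (0 : ℝ) < Fintype.card F := by rw [← hs]; positivity
  have hterm : ∀ S ∈ 𝒮, s ^ d * (Fintype.card F : ℝ) ^ (d - (∏ Q ∈ S, locOb f2 f3 Q).natDegree) ≤
      (Fintype.card F : ℝ) ^ d * s ^ n * ((Fintype.card F : ℝ)⁻¹) ^ (Φ S).2.2.natDegree := by
    intro S hS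
    simp only [h𝒮, Finset.mem_filter, Finset.mem_powerset] at hS
    obtain ⟨hSP, h4, h5⟩ := hS
    rw [inv_pow, ← div_eq_mul_inv, le_div_iff₀ (by positivity)]
    have hd := hdeg S hSP
    simp only [hΦ]
    rw [← hs]
    simp only [← pow_mul, ← pow_add]
    apply pow_le_pow_right₀ hs1
    omega
  refine (Finset.sum_le_sum hterm).trans ?_
  rw [← Finset.mul_sum]
  apply mul_le_mul_of_nonneg_left _ (by positivity)
  have hinj : Set.InjOn Φ (𝒮 : Set (Finset F[X])) := by
    intro S hS S' hS' h
    simp only [h𝒮, Finset.coe_filter, Finset.mem_powerset, Set.mem_setOf_eq] at hS hS'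
    apply PP_prod_inj hS.1 hS'.1
    simp only [hΦ, Prod.mk.injEq] at h
    rw [hsplit S, hsplit S', h.1, h.2.1, h.2.2]
  have himg : 𝒮.image Φ ⊆ (MDiv f2) ×ˢ ((MDiv f3) ×ˢ (MPle F d)) := by
    intro y hy
    obtain ⟨S, hS, rfl⟩ := Finset.mem_image.1 hy
    simp only [h𝒮, Finset.mem_filter, Finset.mem_powerset] at hS
    obtain ⟨hSP, h4, h5⟩ := hS
    simp only [Finset.mem_product, mem_MDiv h2, mem_MDiv h3, mem_MPle, hΦ]
    have hd := hdeg S hSP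
    refine ⟨⟨PP_prod_monic ((hAS S).trans hSP), PP_prod_dvd ((hAS S).trans hSP) _ ?_⟩,
      ⟨PP_prod_monic ((hBS S).trans hSP), PP_prod_dvd ((hBS S).trans hSP) _ ?_⟩,
      PP_prod_monic ((hES S).trans hSP), by omega⟩
    · intro Q hQ; simp only [hA, Finset.mem_filter] at hQ; exact hQ.2
    · intro Q hQ; simp only [hB, Finset.mem_filter] at hQ; exact hQ.2
  have e1 : ∑ S ∈ 𝒮, ((Fintype.card F : ℝ)⁻¹) ^ (Φ S).2.2.natDegree =
      ∑ y ∈ 𝒮.image Φ, ((Fintype.card F : ℝ)⁻¹) ^ y.2.2.natDegree := by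
    rw [Finset.sum_image hinj]
  rw [e1]
  refine (Finset.sum_le_sum_of_subset_of_nonneg himg (fun _ _ _ => by positivity)).trans ?_
  rw [Finset.sum_product]
  simp only [Finset.sum_product, sum_MPle_inv, Finset.sum_const, nsmul_eq_mul]
  apply le_of_eq; ring
end

/-- admissible monic triples of given degrees -/
noncomputable def TT (F : Type*) [Field F] [Fintype F] (d1 d2 d3 : ℕ) : Finset (F[X] × F[X] × F[X]) :=
  ((MP F d1) ×ˢ ((MP F d2) ×ˢ (MP F d3))).filter (fun t =>
    Squarefree t.1 ∧ Squarefree t.2.1 ∧ Squarefree t.2.2 ∧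
       IsCoprime t.1 t.2.1 ∧ IsCoprime t.1 t.2.2 ∧ IsCoprime t.2.1 t.2.2)

section
variable {F : Type*} [Field F] [Fintype F]

/-- product of the monic irreducibles of degree at most 5 -/
noncomputable def MM (F : Type*) [Field F] [Fintype F] : F[X] := ∏ Q ∈ PP F 5, Q

lemma MM_monic : (MM F).Monic := PP_prod_monic (Finset.Subset.refl _)

lemma MM_deg : 1 ≤ (MM F).natDegree := by
  have h : (X : F[X]) ∣ MM F := by
    apply Finset.dvd_prod_of_mem (fun Q : F[X] => Q)
    rw [mem_PP]
    exact ⟨monic_X, irreducible_X, by simp⟩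
  simpa using natDegree_le_of_dvd h MM_monic.ne_zero

lemma one_add_mem {D : ℕ} {m : F[X]} (hm : m ∈ MP F D) : 1 + MM F * m ∈ MP F (D + (MM F).natDegree) := by
  rw [mem_MP] at hm ⊢
  have h1 : (MM F * m).Monic := MM_monic.mul hm.1
  have h2 : (MM F * m).natDegree = D + (MM F).natDegree := by
    rw [MM_monic.natDegree_mul hm.1, hm.2]; ring
  have h3 : (1 : F[X]).degree < (MM F * m).degree := by
    rw [degree_one, degree_eq_natDegree h1.ne_zero, h2]
    have := MM_deg (F := F)
    exact_mod_cast (by omega : 0 < D + (MM F).natDegree)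
  exact ⟨h1.add_of_right h3, by rw [natDegree_add_eq_right_of_degree_lt h3, h2]⟩

lemma big_factor (m z : F[X]) (hz : Irreducible z) (hd : z ∣ 1 + MM F * m) :
    ∃ Q : F[X], Q.Monic ∧ Associated Q z ∧ 5 < Q.natDegree := by
  obtain ⟨Q, h1, h2, h3⟩ := exists_monic_irr z hz
  refine ⟨Q, h1, h3, ?_⟩
  by_contra h
  push Not at h
  have h4 : Q ∣ MM F := Finset.dvd_prod_of_mem (fun Q : F[X] => Q) (mem_PP.2 ⟨h1, h2, h⟩)
  have h5 : Q ∣ 1 := by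
    have := (h3.dvd.trans hd)
    rwa [dvd_add_left (h4.mul_right m)] at this
  exact h2.not_isUnit (isUnit_of_dvd_one h5)

lemma weight_sum (q : ℝ) (u G : ℕ) (hu : 32 * (G : ℝ) ≤ q ^ u) (hq : 1 ≤ q) :
    ∑ j ∈ Finset.Ioc 5 G, ((1 / 2 : ℝ) ^ j + (q ^ u)⁻¹) ≤ 1 / 16 := by
  have hpos : 0 < q ^ u := by positivity
  have h1 : ∑ j ∈ Finset.Ioc 5 G, (1 / 2 : ℝ) ^ j ≤ 1 / 32 := by
    have : ∀ G : ℕ, ∑ j ∈ Finset.Ioc 5 G, (1 / 2 : ℝ) ^ j ≤ 1 / 32 - (if 5 ≤ G then (1/2 : ℝ) ^ G else 0) := by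
      intro G
      induction G with
      | zero => norm_num
      | succ G ih =>
        rcases lt_trichotomy G 4 with h | h | h
        · rw [Finset.Ioc_eq_empty (by omega)]; rw [if_neg (by omega)]; norm_num
        · subst h; norm_num
        · rw [Finset.sum_Ioc_succ_top (by omega)]
          rw [if_pos (by omega)] at ih ⊢
          rw [pow_succ]; linarith
    refine (this G).trans ?_
    have : (0:ℝ) ≤ if 5 ≤ G then (1/2 : ℝ) ^ G else 0 := by split_ifs <;> positivity
    linarith
  rw [Finset.sum_add_distrib, Finset.sum_const, nsmul_eq_mul]
  have h2 : ((Finset.Ioc 5 G).card : ℝ) * (q ^ u)⁻¹ ≤ 1 / 32 := by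
    rw [← div_eq_mul_inv, div_le_iff₀ hpos]
    have : ((Finset.Ioc 5 G).card : ℝ) ≤ G := by
      simp only [Nat.card_Ioc]; exact_mod_cast Nat.sub_le _ _
    linarith
  linarith

lemma w1 (q : ℕ) (hq : 2 ≤ q) (e u D j : ℕ) (hD : e + 2 * u ≤ D) (hj : 2 * j ≤ D + e) :
    (q : ℝ) ^ j * (q : ℝ) ^ (D - 2 * j) ≤ (q : ℝ) ^ D * ((1 / 2) ^ j + ((q : ℝ) ^ u)⁻¹) := by
  have hq' : (2 : ℝ) ≤ q := by exact_mod_cast hq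
  have hq1 : (1 : ℝ) ≤ q := by linarith
  by_cases h : 2 * j ≤ D
  · have h1 : (q : ℝ) ^ j * (q : ℝ) ^ (D - 2 * j) * 2 ^ j ≤ (q : ℝ) ^ D := by
      calc (q : ℝ) ^ j * (q : ℝ) ^ (D - 2 * j) * 2 ^ j ≤ (q : ℝ) ^ j * (q : ℝ) ^ (D - 2 * j) * q ^ j := by gcongr
        _ = (q : ℝ) ^ D := by rw [← pow_add, ← pow_add]; congr 1; omega
    have h2 : (q : ℝ) ^ j * (q : ℝ) ^ (D - 2 * j) ≤ (q : ℝ) ^ D * (1 / 2) ^ j := by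
      rw [one_div, inv_pow, ← div_eq_mul_inv, le_div_iff₀ (by positivity)]; exact h1
    rw [mul_add]
    have : 0 ≤ (q : ℝ) ^ D * ((q : ℝ) ^ u)⁻¹ := by positivity
    linarith
  · have h2 : (q : ℝ) ^ j * (q : ℝ) ^ (D - 2 * j) ≤ (q : ℝ) ^ D * ((q : ℝ) ^ u)⁻¹ := by
      rw [← div_eq_mul_inv, le_div_iff₀ (by positivity), ← pow_add, ← pow_add]
      exact pow_le_pow_right₀ hq1 (by omega)
    rw [mul_add]
    have : 0 ≤ (q : ℝ) ^ D * (1 / 2) ^ j := by positivity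
    linarith

lemma w2 (q : ℕ) (hq : 2 ≤ q) (e u D D' j : ℕ) (hD : e + 2 * u ≤ D) (hD' : e + 2 * u ≤ D')
    (hj : j ≤ D + e) :
    (q : ℝ) ^ j * ((q : ℝ) ^ (D - j) * (q : ℝ) ^ (D' - j)) ≤
      (q : ℝ) ^ D * (q : ℝ) ^ D' * ((1 / 2) ^ j + ((q : ℝ) ^ u)⁻¹) := by
  have hq' : (2 : ℝ) ≤ q := by exact_mod_cast hq
  have hq1 : (1 : ℝ) ≤ q := by linarith
  by_cases h : j ≤ D ∧ j ≤ D'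
  · have h1 : (q : ℝ) ^ j * ((q : ℝ) ^ (D - j) * (q : ℝ) ^ (D' - j)) * 2 ^ j ≤ (q : ℝ) ^ D * (q : ℝ) ^ D' := by
      calc (q : ℝ) ^ j * ((q : ℝ) ^ (D - j) * (q : ℝ) ^ (D' - j)) * 2 ^ j ≤ 
          (q : ℝ) ^ j * ((q : ℝ) ^ (D - j) * (q : ℝ) ^ (D' - j)) * q ^ j := by gcongr
        _ = (q : ℝ) ^ D * (q : ℝ) ^ D' := by simp only [← pow_add]; congr 1; omega
    have h2 : (q : ℝ) ^ j * ((q : ℝ) ^ (D - j) * (q : ℝ) ^ (D' - j)) ≤ (q : ℝ) ^ D * (q : ℝ) ^ D' * (1 / 2) ^ j := by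
      rw [one_div, inv_pow, ← div_eq_mul_inv, le_div_iff₀ (by positivity)]; exact h1
    rw [mul_add]
    have : 0 ≤ (q : ℝ) ^ D * (q : ℝ) ^ D' * ((q : ℝ) ^ u)⁻¹ := by positivity
    linarith
  · have h2 : (q : ℝ) ^ j * ((q : ℝ) ^ (D - j) * (q : ℝ) ^ (D' - j)) ≤ (q : ℝ) ^ D * (q : ℝ) ^ D' * ((q : ℝ) ^ u)⁻¹ := by
      rw [← div_eq_mul_inv, le_div_iff₀ (by positivity)]
      simp only [← pow_add]
      exact pow_le_pow_right₀ hq1 (by omega)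
    rw [mul_add]
    have : 0 ≤ (q : ℝ) ^ D * (q : ℝ) ^ D' * (1 / 2) ^ j := by positivity
    linarith

lemma bad1 (u G D : ℕ) (hD : (MM F).natDegree + 2 * u ≤ D) (hG : D + (MM F).natDegree ≤ G)
    (hu : 32 * (G : ℝ) ≤ (Fintype.card F : ℝ) ^ u) :
    (((MP F D).filter (fun m => ¬ Squarefree (1 + MM F * m))).card : ℝ) ≤
      (Fintype.card F : ℝ) ^ D * (1 / 16) := by
  have hq : 2 ≤ Fintype.card F := Fintype.one_lt_card
  set e := (MM F).natDegree with he
  have hsub : (MP F D).filter (fun m => ¬ Squarefree (1 + MM F * m)) ⊆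
      ((Finset.Ioc 5 G).filter (fun j => 2 * j ≤ D + e)).biUnion (fun j => (MP F j).biUnion (fun Q =>
        (MP F D).filter (fun m => Q ^ 2 ∣ 1 + MM F * m))) := by
    intro m hm
    rw [Finset.mem_filter] at hm
    have h1 := mem_MP.1 (one_add_mem hm.1)
    rw [squarefree_iff_irreducible_sq_not_dvd_of_ne_zero h1.1.ne_zero] at hm
    push Not at hm
    obtain ⟨hmD, z, hz, hzd⟩ := hm
    obtain ⟨Q, hQ1, hQ2, hQ3⟩ := big_factor m z hz ((dvd_mul_right z z).trans hzd)
    have hQd : Q ^ 2 ∣ 1 + MM F * m := by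
      rw [pow_two]; exact (mul_dvd_mul hQ2.dvd hQ2.dvd).trans hzd
    have hdeg := natDegree_le_of_dvd hQd h1.1.ne_zero
    rw [h1.2, hQ1.natDegree_pow] at hdeg
    simp only [Finset.mem_biUnion, Finset.mem_filter, Finset.mem_Ioc]
    exact ⟨Q.natDegree, ⟨⟨hQ3, by omega⟩, hdeg⟩, Q, mem_MP.2 ⟨hQ1, rfl⟩, hmD, hQd⟩
  have h1 : ((MP F D).filter (fun m => ¬ Squarefree (1 + MM F * m))).card ≤
      ∑ j ∈ (Finset.Ioc 5 G).filter (fun j => 2 * j ≤ D + e), Fintype.card F ^ j * Fintype.card F ^ (D - 2 * j) := by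
    refine (Finset.card_le_card hsub).trans (Finset.card_biUnion_le.trans (Finset.sum_le_sum ?_))
    intro j _
    refine Finset.card_biUnion_le.trans ?_
    rw [← card_MP (F := F) j, ← smul_eq_mul]
    apply Finset.sum_le_card_nsmul
    intro Q hQ
    rw [mem_MP] at hQ
    have := card_class_le (MM F) (Q ^ 2) (hQ.1.pow 2) D
    rwa [hQ.1.natDegree_pow, hQ.2] at this
  have h2 : (((MP F D).filter (fun m => ¬ Squarefree (1 + MM F * m))).card : ℝ) ≤
      ∑ j ∈ (Finset.Ioc 5 G).filter (fun j => 2 * j ≤ D + e), (Fintype.card F : ℝ) ^ j * (Fintype.card F : ℝ) ^ (D - 2 * j) := by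
    exact_mod_cast h1
  refine h2.trans ((Finset.sum_le_sum (fun j hj => w1 _ hq e u D j hD (Finset.mem_filter.1 hj).2)).trans ?_)
  rw [← Finset.mul_sum]
  apply mul_le_mul_of_nonneg_left _ (by positivity)
  refine le_trans ?_ (weight_sum (Fintype.card F) u G hu (by exact_mod_cast (by omega : 1 ≤ Fintype.card F)))
  exact Finset.sum_le_sum_of_subset_of_nonneg (Finset.filter_subset _ _) (fun _ _ _ => by positivity)

lemma bad2 (u G D D' : ℕ) (hD : (MM F).natDegree + 2 * u ≤ D) (hD' : (MM F).natDegree + 2 * u ≤ D')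
    (hG : D + (MM F).natDegree ≤ G)
    (hu : 32 * (G : ℝ) ≤ (Fintype.card F : ℝ) ^ u) :
    (((MP F D ×ˢ MP F D').filter (fun m => ¬ IsCoprime (1 + MM F * m.1) (1 + MM F * m.2))).card : ℝ) ≤
      (Fintype.card F : ℝ) ^ D * (Fintype.card F : ℝ) ^ D' * (1 / 16) := by
  have hq : 2 ≤ Fintype.card F := Fintype.one_lt_card
  set e := (MM F).natDegree with he
  have hsub : (MP F D ×ˢ MP F D').filter (fun m => ¬ IsCoprime (1 + MM F * m.1) (1 + MM F * m.2)) ⊆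
      ((Finset.Ioc 5 G).filter (fun j => j ≤ D + e)).biUnion (fun j => (MP F j).biUnion (fun Q =>
        (MP F D).filter (fun m => Q ∣ 1 + MM F * m) ×ˢ (MP F D').filter (fun m => Q ∣ 1 + MM F * m))) := by
    rintro ⟨m, m'⟩ hm
    rw [Finset.mem_filter, Finset.mem_product] at hm
    obtain ⟨⟨hmD, hmD'⟩, hc⟩ := hm
    simp only at hmD hmD' hc
    have h1 := mem_MP.1 (one_add_mem hmD)
    have : ∃ z, Irreducible z ∧ z ∣ 1 + MM F * m ∧ z ∣ 1 + MM F * m' := by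
      by_contra hno
      push Not at hno
      exact hc (isCoprime_of_irreducible_dvd (fun h => h1.1.ne_zero h.1) hno)
    obtain ⟨z, hz, hzd, hzd'⟩ := this
    obtain ⟨Q, hQ1, hQ2, hQ3⟩ := big_factor m z hz hzd
    have hQd := hQ2.dvd.trans hzd
    have hdeg := natDegree_le_of_dvd hQd h1.1.ne_zero
    rw [h1.2] at hdeg
    simp only [Finset.mem_biUnion, Finset.mem_filter, Finset.mem_Ioc, Finset.mem_product]
    exact ⟨Q.natDegree, ⟨⟨hQ3, by omega⟩, hdeg⟩, Q, mem_MP.2 ⟨hQ1, rfl⟩, ⟨hmD, hQd⟩, hmD', hQ2.dvd.trans hzd'⟩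
  have h1 : ((MP F D ×ˢ MP F D').filter (fun m => ¬ IsCoprime (1 + MM F * m.1) (1 + MM F * m.2))).card ≤
      ∑ j ∈ (Finset.Ioc 5 G).filter (fun j => j ≤ D + e), Fintype.card F ^ j * (Fintype.card F ^ (D - j) * Fintype.card F ^ (D' - j)) := by
    refine (Finset.card_le_card hsub).trans (Finset.card_biUnion_le.trans (Finset.sum_le_sum ?_))
    intro j _
    refine Finset.card_biUnion_le.trans ?_
    rw [← card_MP (F := F) j, ← smul_eq_mul]
    apply Finset.sum_le_card_nsmul
    intro Q hQ
    rw [mem_MP] at hQ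
    have h1 := card_class_le (MM F) Q hQ.1 D
    have h2 := card_class_le (MM F) Q hQ.1 D'
    rw [hQ.2] at h1 h2
    rw [Finset.card_product]
    exact Nat.mul_le_mul h1 h2
  have h2 : (((MP F D ×ˢ MP F D').filter (fun m => ¬ IsCoprime (1 + MM F * m.1) (1 + MM F * m.2))).card : ℝ) ≤
      ∑ j ∈ (Finset.Ioc 5 G).filter (fun j => j ≤ D + e), (Fintype.card F : ℝ) ^ j * ((Fintype.card F : ℝ) ^ (D - j) * (Fintype.card F : ℝ) ^ (D' - j)) := by
    exact_mod_cast h1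
  refine h2.trans ((Finset.sum_le_sum (fun j hj => w2 _ hq e u D D' j hD hD' (Finset.mem_filter.1 hj).2)).trans ?_)
  rw [← Finset.mul_sum]
  apply mul_le_mul_of_nonneg_left _ (by positivity)
  refine le_trans ?_ (weight_sum (Fintype.card F) u G hu (by exact_mod_cast (by omega : 1 ≤ Fintype.card F)))
  exact Finset.sum_le_sum_of_subset_of_nonneg (Finset.filter_subset _ _) (fun _ _ _ => by positivity)

lemma TT_lower (u G D1 D2 D3 : ℕ) (h1 : (MM F).natDegree + 2 * u ≤ D1)
    (h2 : (MM F).natDegree + 2 * u ≤ D2) (h3 : (MM F).natDegree + 2 * u ≤ D3)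
    (g1 : D1 + (MM F).natDegree ≤ G) (g2 : D2 + (MM F).natDegree ≤ G) (g3 : D3 + (MM F).natDegree ≤ G)
    (hu : 32 * (G : ℝ) ≤ (Fintype.card F : ℝ) ^ u) :
    (Fintype.card F : ℝ) ^ (D1 + D2 + D3) ≤
      2 * (TT F (D1 + (MM F).natDegree) (D2 + (MM F).natDegree) (D3 + (MM F).natDegree)).card := by
  set e := (MM F).natDegree with he
  set φ : F[X] → F[X] := fun m => 1 + MM F * m with hφ
  have hφi : Function.Injective φ := by
    intro a b h
    simp only [hφ, add_right_inj] at h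
    exact mul_left_cancel₀ MM_monic.ne_zero h
  set good : F[X] → F[X] → F[X] → Prop := fun a b c => Squarefree (φ a) ∧ Squarefree (φ b) ∧ Squarefree (φ c) ∧
       IsCoprime (φ a) (φ b) ∧ IsCoprime (φ a) (φ c) ∧ IsCoprime (φ b) (φ c) with hgood
  set Φ : F[X] × F[X] × F[X] → F[X] × F[X] × F[X] := fun t => (φ t.1, φ t.2.1, φ t.2.2) with hΦ
  have hΦi : Function.Injective Φ := by
    rintro ⟨a, b, c⟩ ⟨a', b', c'⟩ h
    simp only [hΦ, Prod.mk.injEq] at h ⊢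
    exact ⟨hφi h.1, hφi h.2.1, hφi h.2.2⟩
  have hcard : (((MP F D1) ×ˢ ((MP F D2) ×ˢ (MP F D3))).filter (fun t => good t.1 t.2.1 t.2.2)).card ≤
      (TT F (D1 + e) (D2 + e) (D3 + e)).card := by
    apply Finset.card_le_card_of_injOn Φ _ hΦi.injOn
    rintro ⟨a, b, c⟩ ht
    simp only [Finset.coe_filter, Finset.mem_product, Set.mem_setOf_eq] at ht
    simp only [TT, Finset.coe_filter, Finset.mem_product, Set.mem_setOf_eq, hΦ]
    exact ⟨⟨one_add_mem ht.1.1, one_add_mem ht.1.2.1, one_add_mem ht.1.2.2⟩, ht.2⟩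
  have hcard' : ∑ a ∈ MP F D1, ∑ b ∈ MP F D2, ∑ c ∈ MP F D3, (if good a b c then (1:ℝ) else 0) ≤ 
      (TT F (D1 + e) (D2 + e) (D3 + e)).card := by
    refine le_trans (le_of_eq ?_) (Nat.cast_le.2 hcard)
    rw [Finset.card_filter, Finset.sum_product]
    push_cast
    apply Finset.sum_congr rfl
    intro a _
    rw [Finset.sum_product]
  set i1 : F[X] → ℝ := fun a => if ¬ Squarefree (φ a) then 1 else 0 with hi1
  set i2 : F[X] → F[X] → ℝ := fun a b => if ¬ IsCoprime (φ a) (φ b) then 1 else 0 with hi2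
  have hpt : ∀ a b c, (1 : ℝ) ≤ (if good a b c then (1:ℝ) else 0) + i1 a + i1 b + i1 c + i2 a b + i2 a c + i2 b c := by
    intro a b c
    have n1 : ∀ a, 0 ≤ i1 a := by intro a; simp only [hi1]; split_ifs <;> norm_num
    have n2 : ∀ a b, 0 ≤ i2 a b := by intro a b; simp only [hi2]; split_ifs <;> norm_num
    have := n1 a; have := n1 b; have := n1 c; have := n2 a b; have := n2 a c; have := n2 b c
    by_cases hg : good a b c
    · rw [if_pos hg]; linarith
    · rw [if_neg hg]
      have : i1 a = 1 ∨ i1 b = 1 ∨ i1 c = 1 ∨ i2 a b = 1 ∨ i2 a c = 1 ∨ i2 b c = 1 := by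
        have e1 : ∀ a, ¬ Squarefree (φ a) → i1 a = 1 := by intro a h; simp only [hi1, if_pos h]
        have e2 : ∀ a b, ¬ IsCoprime (φ a) (φ b) → i2 a b = 1 := by intro a b h; simp only [hi2, if_pos h]
        by_contra hno
        push Not at hno
        apply hg
        refine ⟨?_, ?_, ?_, ?_, ?_, ?_⟩ <;> by_contra hh
        · exact hno.1 (e1 _ hh)
        · exact hno.2.1 (e1 _ hh)
        · exact hno.2.2.1 (e1 _ hh)
        · exact hno.2.2.2.1 (e2 _ _ hh)
        · exact hno.2.2.2.2.1 (e2 _ _ hh)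
        · exact hno.2.2.2.2.2 (e2 _ _ hh)
      rcases this with h | h | h | h | h | h <;> linarith
  have b1 : ∀ D, e + 2 * u ≤ D → D + e ≤ G → ∑ a ∈ MP F D, i1 a ≤ (Fintype.card F : ℝ) ^ D * (1 / 16) := by
    intro D hD hG
    refine le_trans (le_of_eq ?_) (bad1 u G D hD hG hu)
    rw [Finset.card_filter]; push_cast; rfl
  have b2 : ∀ D D', e + 2 * u ≤ D → e + 2 * u ≤ D' → D + e ≤ G → ∑ a ∈ MP F D, ∑ b ∈ MP F D', i2 a b ≤
      (Fintype.card F : ℝ) ^ D * (Fintype.card F : ℝ) ^ D' * (1 / 16) := by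
    intro D D' hD hD' hG
    refine le_trans (le_of_eq ?_) (bad2 u G D D' hD hD' hG hu)
    rw [Finset.card_filter, Finset.sum_product]; push_cast; rfl
  have hsum : ∑ a ∈ MP F D1, ∑ b ∈ MP F D2, ∑ c ∈ MP F D3, (1:ℝ) ≤
     ∑ a ∈ MP F D1, ∑ b ∈ MP F D2, ∑ c ∈ MP F D3,
      ((if good a b c then (1:ℝ) else 0) + i1 a + i1 b + i1 c + i2 a b + i2 a c + i2 b c) :=
    Finset.sum_le_sum fun a _ => Finset.sum_le_sum fun b _ => Finset.sum_le_sum fun c _ => hpt a b c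
  simp only [Finset.sum_add_distrib, Finset.sum_const, card_MP, nsmul_eq_mul, ← Finset.mul_sum, Nat.cast_pow, mul_one] at hsum
  have c1 := b1 D1 h1 g1
  have c2 := b1 D2 h2 g2
  have c3 := b1 D3 h3 g3
  have c12 := b2 D1 D2 h1 h2 g1
  have c13 := b2 D1 D3 h1 h3 g1
  have c23 := b2 D2 D3 h2 h3 g2
  rw [pow_add, pow_add]
  have p1 : (0:ℝ) ≤ (Fintype.card F : ℝ) ^ D1 := by positivity
  have p2 : (0:ℝ) ≤ (Fintype.card F : ℝ) ^ D2 := by positivity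
  have p3 : (0:ℝ) ≤ (Fintype.card F : ℝ) ^ D3 := by positivity
  generalize (Fintype.card F : ℝ) ^ D1 = A at *
  generalize (Fintype.card F : ℝ) ^ D2 = B at *
  generalize (Fintype.card F : ℝ) ^ D3 = C at *
  have k1 := mul_le_mul_of_nonneg_left c1 (mul_nonneg p2 p3)
  have k2 := mul_le_mul_of_nonneg_left c2 (mul_nonneg p1 p3)
  have k3 := mul_le_mul_of_nonneg_left c3 (mul_nonneg p1 p2)
  have k12 := mul_le_mul_of_nonneg_left c12 p3
  have k13 := mul_le_mul_of_nonneg_left c13 p2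
  have k23 := mul_le_mul_of_nonneg_left c23 p1
  have : 0 ≤ A * B * C := by positivity
  nlinarith
end

/-- admissible degrees -/
noncomputable def DD (g : ℕ) : Finset (ℕ × ℕ × ℕ) :=
  ((Finset.range (g + 4)) ×ˢ ((Finset.range (g + 4)) ×ˢ (Finset.range (g + 4)))).filter (fun d =>
    Lg d.1 d.2.1 d.2.2 = g + 3 ∧ ({d.1, d.2.1, d.2.2} : Multiset ℕ) ≠ {g + 3, 0, 0} ∧
      ({d.1, d.2.1, d.2.2} : Multiset ℕ) ≠ {g + 2, 0, 0})

/-- finset of admissible monic triples -/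
noncomputable def FF (F : Type*) [Field F] [Fintype F] (g : ℕ) : Finset (F[X] × F[X] × F[X]) :=
  (DD g).biUnion (fun d => TT F d.1 d.2.1 d.2.2)

lemma Lg_le (a b c : ℕ) : a + b + c ≤ Lg a b c := by
  unfold Lg; split_ifs <;> omega

lemma Lg_ge (a b c : ℕ) : Lg a b c ≤ a + b + c + 1 := by
  unfold Lg; split_ifs <;> omega

section
variable {F : Type*} [Field F] [Fintype F]

lemma mem_TT {d1 d2 d3 : ℕ} {t : F[X] × F[X] × F[X]} : t ∈ TT F d1 d2 d3 ↔
    (t.1.Monic ∧ t.1.natDegree = d1) ∧ (t.2.1.Monic ∧ t.2.1.natDegree = d2) ∧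
    (t.2.2.Monic ∧ t.2.2.natDegree = d3) ∧
    Squarefree t.1 ∧ Squarefree t.2.1 ∧ Squarefree t.2.2 ∧
       IsCoprime t.1 t.2.1 ∧ IsCoprime t.1 t.2.2 ∧ IsCoprime t.2.1 t.2.2 := by
  simp only [TT, Finset.mem_filter, Finset.mem_product, mem_MP]; tauto

lemma mem_DD {g : ℕ} {d : ℕ × ℕ × ℕ} : d ∈ DD g ↔ 
    Lg d.1 d.2.1 d.2.2 = g + 3 ∧ ({d.1, d.2.1, d.2.2} : Multiset ℕ) ≠ {g + 3, 0, 0} ∧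
      ({d.1, d.2.1, d.2.2} : Multiset ℕ) ≠ {g + 2, 0, 0} := by
  simp only [DD, Finset.mem_filter, Finset.mem_product, Finset.mem_range]
  constructor
  · intro h; exact h.2
  · intro h
    refine ⟨?_, h⟩
    have := Lg_le d.1 d.2.1 d.2.2
    omega

lemma mem_FF {g : ℕ} {t : F[X] × F[X] × F[X]} : t ∈ FF F g ↔ t ∈ FSet F g := by
  simp only [FF, Finset.mem_biUnion, mem_TT, mem_DD, FSet, FhatSet, Set.mem_setOf_eq]
  constructor
  · rintro ⟨⟨a, b, c⟩, h⟩
    obtain ⟨⟨h1, h2, h3⟩, ⟨h4, rfl⟩, ⟨h5, rfl⟩, ⟨h6, rfl⟩, h7⟩ := h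
    tauto
  · intro h
    refine ⟨(t.1.natDegree, t.2.1.natDegree, t.2.2.natDegree), ?_⟩
    simp only
    tauto

lemma sum_FF {β : Type*} [AddCommMonoid β] (g : ℕ) (φ : F[X] × F[X] × F[X] → β) :
    ∑ t ∈ FF F g, φ t = ∑ d ∈ DD g, ∑ t ∈ TT F d.1 d.2.1 d.2.2, φ t := by
  unfold FF
  rw [Finset.sum_biUnion]
  intro d _ d' _ hne
  refine Finset.disjoint_left.2 ?_
  intro t h1 h2
  rw [mem_TT] at h1 h2
  apply hne
  refine Prod.ext ?_ (Prod.ext ?_ ?_)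
  · exact h1.1.2.symm.trans h2.1.2
  · exact h1.2.1.2.symm.trans h2.2.1.2
  · exact h1.2.2.1.2.symm.trans h2.2.2.1.2

lemma card_FF (g : ℕ) : (FF F g).card = ∑ d ∈ DD g, (TT F d.1 d.2.1 d.2.2).card := by
  rw [Finset.card_eq_sum_ones, sum_FF]; simp

lemma FF_lower_aux (g : ℕ) (hg : 1000000 ≤ g) (hge : 100 * (MM F).natDegree ≤ g) :
    ((g / 20 : ℕ) : ℝ) ^ 2 * (Fintype.card F : ℝ) ^ (g + 3 - 3 * (MM F).natDegree) ≤ 2 * (FF F g).card := by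
  set e := (MM F).natDegree with he
  have hq : 2 ≤ Fintype.card F := Fintype.one_lt_card
  set t := g / 20 with ht
  set ε := (g + 3) % 2 with hε
  set I := Finset.Ico t (2 * t) with hI
  set ι : ℕ × ℕ → ℕ × ℕ × ℕ := fun p => (2 * p.1 + ε, 2 * p.2 + ε, g + 3 - (2 * p.1 + ε) - (2 * p.2 + ε)) with hι
  have hu : 32 * ((g + 3 : ℕ) : ℝ) ≤ (Fintype.card F : ℝ) ^ (t / 2) := by
    have h1 : 32 * (g + 3) ≤ 2 ^ (t / 2) := by
      set w := t / 2 / 2 with hw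
      have h2 : w + 1 ≤ 2 ^ w := Nat.lt_two_pow_self
      have h3 : 32 * (g + 3) ≤ (w + 1) * (w + 1) := by
        have : g + 3 ≤ 80 * w + 83 := by omega
        have : 12000 ≤ w := by omega
        nlinarith
      calc 32 * (g + 3) ≤ (w + 1) * (w + 1) := h3
        _ ≤ 2 ^ w * 2 ^ w := Nat.mul_le_mul h2 h2
        _ = 2 ^ (w + w) := by rw [pow_add]
        _ ≤ 2 ^ (t / 2) := Nat.pow_le_pow_right (by norm_num) (by omega)
    have h4 : 2 ^ (t / 2) ≤ Fintype.card F ^ (t / 2) := Nat.pow_le_pow_left hq _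
    exact_mod_cast h1.trans h4
  have hterm : ∀ p ∈ I ×ˢ I, (Fintype.card F : ℝ) ^ (g + 3 - 3 * e) ≤ 2 * ((TT F (ι p).1 (ι p).2.1 (ι p).2.2).card : ℝ) := by
    intro p hp
    simp only [hI, Finset.mem_product, Finset.mem_Ico] at hp
    have h1 : e + 2 * (t / 2) ≤ 2 * p.1 + ε - e := by omega
    have h2 : e + 2 * (t / 2) ≤ 2 * p.2 + ε - e := by omega
    have h3 : e + 2 * (t / 2) ≤ g + 3 - (2 * p.1 + ε) - (2 * p.2 + ε) - e := by omega
    have := TT_lower (F := F) (t / 2) (g + 3) (2 * p.1 + ε - e) (2 * p.2 + ε - e)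
      (g + 3 - (2 * p.1 + ε) - (2 * p.2 + ε) - e) h1 h2 h3 (by omega) (by omega) (by omega) hu
    rw [← he] at this
    rw [show 2 * p.1 + ε - e + e = 2 * p.1 + ε by omega,
      show 2 * p.2 + ε - e + e = 2 * p.2 + ε by omega,
      show g + 3 - (2 * p.1 + ε) - (2 * p.2 + ε) - e + e = g + 3 - (2 * p.1 + ε) - (2 * p.2 + ε) by omega,
      show 2 * p.1 + ε - e + (2 * p.2 + ε - e) + (g + 3 - (2 * p.1 + ε) - (2 * p.2 + ε) - e) = g + 3 - 3 * e by omega] at this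
    exact this
  have hinj : Set.InjOn ι (I ×ˢ I : Finset (ℕ × ℕ)) := by
    intro p _ p' _ h
    simp only [hι, Prod.mk.injEq] at h
    apply Prod.ext <;> omega
  have hsub : (I ×ˢ I).image ι ⊆ DD g := by
    intro y hy
    obtain ⟨p, hp, rfl⟩ := Finset.mem_image.1 hy
    simp only [hI, Finset.mem_product, Finset.mem_Ico] at hp
    have hz : (0 : ℕ) ∉ ({(ι p).1, (ι p).2.1, (ι p).2.2} : Multiset ℕ) := by
      simp only [hι, Multiset.insert_eq_cons, Multiset.mem_cons, Multiset.mem_singleton]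
      omega
    rw [mem_DD]
    refine ⟨?_, ?_, ?_⟩
    · unfold Lg
      simp only [hι]
      rw [if_pos]
      · omega
      · simp only [Nat.even_iff]; omega
    · intro h; apply hz; rw [h]; simp
    · intro h; apply hz; rw [h]; simp
  have h1 : ∑ p ∈ I ×ˢ I, (TT F (ι p).1 (ι p).2.1 (ι p).2.2).card ≤ (FF F g).card := by
    rw [card_FF, ← Finset.sum_image (f := fun d : ℕ × ℕ × ℕ => (TT F d.1 d.2.1 d.2.2).card) hinj]
    exact Finset.sum_le_sum_of_subset hsub
  have h2 : (∑ p ∈ I ×ˢ I, ((TT F (ι p).1 (ι p).2.1 (ι p).2.2).card : ℝ)) ≤ (FF F g).card := by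
    exact_mod_cast h1
  have h3 := Finset.sum_le_sum hterm
  rw [← Finset.mul_sum, Finset.sum_const, Finset.card_product, nsmul_eq_mul] at h3
  have h4 : I.card = t := by simp only [hI, Nat.card_Ico]; omega
  rw [h4] at h3
  push_cast at h3
  rw [pow_two]
  linarith

lemma FF_lower : ∃ c : ℝ, 0 < c ∧ ∃ g0 : ℕ, ∀ g, g0 ≤ g →
    c * (g : ℝ) ^ 2 * (Fintype.card F : ℝ) ^ g ≤ (FF F g).card := by
  have hq : 2 ≤ Fintype.card F := Fintype.one_lt_card
  have hq' : (1:ℝ) ≤ Fintype.card F := by exact_mod_cast (by omega : 1 ≤ Fintype.card F)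
  set e := (MM F).natDegree with he
  set Q := (Fintype.card F : ℝ) with hQ
  have hpos : 0 < Q ^ (3 * e) := by positivity
  refine ⟨(3200 * Q ^ (3 * e))⁻¹, by positivity, 1000000 + 100 * e, ?_⟩
  intro g hg
  have h := FF_lower_aux (F := F) g (by omega) (by omega)
  have h1 : (g : ℝ) / 40 ≤ ((g / 20 : ℕ) : ℝ) := by
    rw [div_le_iff₀ (by norm_num)]
    exact_mod_cast (by omega : g ≤ g / 20 * 40)
  have h2 : (g : ℝ) ^ 2 / 1600 ≤ ((g / 20 : ℕ) : ℝ) ^ 2 := by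
    have := pow_le_pow_left₀ (by positivity) h1 2
    refine le_trans (le_of_eq ?_) this; ring
  have h3 : Q ^ g ≤ Q ^ (3 * e) * Q ^ (g + 3 - 3 * e) := by
    rw [← pow_add]; exact pow_le_pow_right₀ hq' (by omega)
  rw [mul_assoc, inv_mul_le_iff₀ (by positivity)]
  calc (g : ℝ) ^ 2 * Q ^ g = 1600 * ((g : ℝ) ^ 2 / 1600 * Q ^ g) := by ring
    _ ≤ 1600 * (((g / 20 : ℕ) : ℝ) ^ 2 * (Q ^ (3 * e) * Q ^ (g + 3 - 3 * e))) := by gcongr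
    _ = 1600 * Q ^ (3 * e) * (((g / 20 : ℕ) : ℝ) ^ 2 * Q ^ (g + 3 - 3 * e)) := by ring
    _ ≤ 1600 * Q ^ (3 * e) * (2 * (FF F g).card) := by gcongr
    _ = _ := by ring

end

section
variable {F : Type*} [Field F] [Fintype F]

lemma TT_bound (ψ : F[X] → ℤ) (hmul : ∀ a b, ψ (a * b) = ψ a * ψ b)
    (habs : ∀ a, |ψ a| ≤ 1) (n : ℕ) (hz : ∀ e, n ≤ e → ∑ f ∈ MP F e, ψ f = 0)
    (s : ℝ) (hs : s ^ 2 = Fintype.card F) (hs1 : 1 ≤ s) (d1 d2 d3 : ℕ) :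
    s ^ d1 * |((∑ t ∈ TT F d1 d2 d3, ψ (t.1 * t.2.1) : ℤ) : ℝ)| ≤
      (Fintype.card F : ℝ) ^ (d1 + d2 + d3) * s ^ n * ((d1 + 1) * (d2 + 1) * (d3 + 1)) := by
  have e1 : ∑ t ∈ TT F d1 d2 d3, ψ (t.1 * t.2.1) = ∑ f2 ∈ MP F d2, ∑ f3 ∈ MP F d3,
      (if Squarefree f2 ∧ Squarefree f3 ∧ IsCoprime f2 f3 then ψ f2 else 0) *
        ∑ f1 ∈ (MP F d1).filter (fun f1 => Squarefree f1 ∧ IsCoprime f1 f2 ∧ IsCoprime f1 f3), ψ f1 := by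
    rw [TT, Finset.sum_filter, Finset.sum_product_right, Finset.sum_product]
    apply Finset.sum_congr rfl
    intro f2 _
    apply Finset.sum_congr rfl
    intro f3 _
    rw [Finset.sum_filter, Finset.mul_sum]
    apply Finset.sum_congr rfl
    intro f1 _
    simp only [hmul]
    by_cases h1 : Squarefree f2 ∧ Squarefree f3 ∧ IsCoprime f2 f3
    · by_cases h2 : Squarefree f1 ∧ IsCoprime f1 f2 ∧ IsCoprime f1 f3
      · rw [if_pos h1, if_pos h2, if_pos (by tauto)]; ring
      · rw [if_neg h2, if_neg (by tauto)]; ring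
    · rw [if_neg h1, if_neg (by tauto)]; ring
  have e2 : s ^ d1 * |((∑ t ∈ TT F d1 d2 d3, ψ (t.1 * t.2.1) : ℤ) : ℝ)| ≤
     ∑ f2 ∈ MP F d2, ∑ f3 ∈ MP F d3, (Fintype.card F : ℝ) ^ d1 * s ^ n * ((d1 + 1) * ((MDiv f2).card * (MDiv f3).card)) := by
    rw [e1]
    push_cast
    refine (mul_le_mul_of_nonneg_left (Finset.abs_sum_le_sum_abs _ _) (by positivity)).trans ?_
    rw [Finset.mul_sum]
    apply Finset.sum_le_sum
    intro f2 hf2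
    refine (mul_le_mul_of_nonneg_left (Finset.abs_sum_le_sum_abs _ _) (by positivity)).trans ?_
    rw [Finset.mul_sum]
    apply Finset.sum_le_sum
    intro f3 hf3
    have hb := good_sum_bound ψ hmul habs n hz s hs hs1 d1 f2 f3 (mem_MP.1 hf2).1.ne_zero
      (mem_MP.1 hf3).1.ne_zero
    push_cast at hb
    refine le_trans ?_ hb
    apply mul_le_mul_of_nonneg_left _ (by positivity)
    rw [abs_mul]
    apply mul_le_of_le_one_left (abs_nonneg _)
    split_ifs
    · exact_mod_cast habs f2
    · simp
  refine e2.trans (le_of_eq ?_)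
  have t2 : ∑ f ∈ MP F d2, ((MDiv f).card : ℝ) = (d2 + 1) * (Fintype.card F : ℝ) ^ d2 := by
    exact_mod_cast sum_MDiv (F := F) d2
  have t3 : ∑ f ∈ MP F d3, ((MDiv f).card : ℝ) = (d3 + 1) * (Fintype.card F : ℝ) ^ d3 := by
    exact_mod_cast sum_MDiv (F := F) d3
  simp only [← Finset.mul_sum, ← Finset.sum_mul, t2, t3]
  ring

lemma TT_swap {β : Type*} [AddCommMonoid β] (φ : F[X] × F[X] × F[X] → β) (d1 d2 d3 : ℕ) :
    ∑ t ∈ TT F d1 d2 d3, φ t = ∑ t ∈ TT F d2 d1 d3, φ (t.2.1, t.1, t.2.2) := by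
  apply Finset.sum_nbij' (fun t => (t.2.1, t.1, t.2.2)) (fun t => (t.2.1, t.1, t.2.2))
  · intro t h
    rw [mem_TT] at h ⊢
    have := h.2.2.2.2.2.2.1.symm
    tauto
  · intro t h
    rw [mem_TT] at h ⊢
    have := h.2.2.2.2.2.2.1.symm
    tauto
  · intro t _; rfl
  · intro t _; rfl
  · intro t _; rfl

lemma Lg_swap12 (a b c : ℕ) : Lg b a c = Lg a b c := by
  unfold Lg
  simp only [Nat.even_iff]
  split_ifs <;> omega

lemma Lg_swap23 (a b c : ℕ) : Lg a c b = Lg a b c := by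
  unfold Lg
  simp only [Nat.even_iff]
  split_ifs <;> omega

lemma FF_swap12 {β : Type*} [AddCommMonoid β] (φ : F[X] × F[X] × F[X] → β) (g : ℕ) :
    ∑ t ∈ FF F g, φ t = ∑ t ∈ FF F g, φ (t.2.1, t.1, t.2.2) := by
  have key : ∀ t : F[X] × F[X] × F[X], t ∈ FF F g → (t.2.1, t.1, t.2.2) ∈ FF F g := by
    intro t h
    rw [mem_FF] at h ⊢
    obtain ⟨⟨h1, h2, h3, h4, h5, h6, h7, h8, h9, h10⟩, h11, h12⟩ := h
    refine ⟨⟨h2, h1, h3, h4.symm, h6, h5, h7, ?_, ?_, ?_⟩, h12, h11⟩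
    · simp only; rw [Lg_swap12]; exact h8
    · simp only [Multiset.insert_eq_cons] at h9 ⊢; rwa [Multiset.cons_swap]
    · simp only [Multiset.insert_eq_cons] at h10 ⊢; rwa [Multiset.cons_swap]
  apply Finset.sum_nbij' (fun t => (t.2.1, t.1, t.2.2)) (fun t => (t.2.1, t.1, t.2.2)) key key
  · intro t _; rfl
  · intro t _; rfl
  · intro t _; rfl

lemma FF_swap23 {β : Type*} [AddCommMonoid β] (φ : F[X] × F[X] × F[X] → β) (g : ℕ) :
    ∑ t ∈ FF F g, φ t = ∑ t ∈ FF F g, φ (t.1, t.2.2, t.2.1) := by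
  have hp : ∀ a b c : ℕ, ({a, c, b} : Multiset ℕ) = {a, b, c} := by
    intro a b c
    simp only [Multiset.insert_eq_cons]
    congr 1
    rw [← Multiset.cons_zero, ← Multiset.cons_zero, Multiset.cons_swap]
  have key : ∀ t : F[X] × F[X] × F[X], t ∈ FF F g → (t.1, t.2.2, t.2.1) ∈ FF F g := by
    intro t h
    rw [mem_FF] at h ⊢
    obtain ⟨⟨h1, h2, h3, h4, h5, h6, h7, h8, h9, h10⟩, h11, h12⟩ := h
    refine ⟨⟨h1, h3, h2, h5, h4, h6.symm, h12, ?_, ?_, ?_⟩, h11, h7⟩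
    · simp only; rw [Lg_swap23]; exact h8
    · simp only; rwa [hp]
    · simp only; rwa [hp]
  apply Finset.sum_nbij' (fun t => (t.1, t.2.2, t.2.1)) (fun t => (t.1, t.2.2, t.2.1)) key key
  · intro t _; rfl
  · intro t _; rfl
  · intro t _; rfl

/-- scaling map -/
noncomputable def scl (y : (Fˣ × Fˣ) × (F[X] × F[X] × F[X])) : F[X] × F[X] × F[X] :=
  (C (y.1.1 : F) * y.2.1, C (y.1.2 : F) * y.2.2.1, y.2.2.2)

lemma scale_facts (c : Fˣ) : IsUnit (C (c : F) : F[X]) := (c.isUnit).map C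

lemma Fhat_eq (g : ℕ) : FhatSet F g =
    (((Finset.univ : Finset (Fˣ × Fˣ)) ×ˢ FF F g).image scl : Finset (F[X] × F[X] × F[X])) := by
  have hassoc : ∀ (c : Fˣ) (f : F[X]), Associated (C (c : F) * f) f := fun c f =>
    associated_unit_mul_left f _ (scale_facts c)
  have hdeg : ∀ (c : Fˣ) (f : F[X]), (C (c : F) * f).natDegree = f.natDegree := fun c f =>
    natDegree_C_mul c.ne_zero
  have hcop1 : ∀ (c : Fˣ) (f f' : F[X]), IsCoprime (C (c : F) * f) f' ↔ IsCoprime f f' := fun c f f' =>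
    isCoprime_mul_unit_left_left (scale_facts c) f f'
  have hcop2 : ∀ (c : Fˣ) (f f' : F[X]), IsCoprime f' (C (c : F) * f) ↔ IsCoprime f' f := fun c f f' =>
    isCoprime_mul_unit_left_right (scale_facts c) f' f
  have hsq : ∀ (c : Fˣ) (f : F[X]), Squarefree (C (c : F) * f) ↔ Squarefree f := fun c f =>
    (hassoc c f).squarefree_iff
  have hscl : ∀ (c c' : Fˣ) (f1 f2 f3 : F[X]), 
     (C (c : F) * f1, C (c' : F) * f2, f3) ∈ FhatSet F g ↔ (f1, f2, f3) ∈ FhatSet F g := by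
    intro c c' f1 f2 f3
    simp only [FhatSet, Set.mem_setOf_eq, hdeg, hcop1, hcop2, hsq]
  ext ⟨f1, f2, f3⟩
  simp only [Finset.coe_image, Set.mem_image, Finset.mem_coe, Finset.mem_product, Finset.mem_univ,
    true_and, mem_FF]
  constructor
  · intro h
    have h1 : f1.leadingCoeff ≠ 0 := leadingCoeff_ne_zero.2 (Squarefree.ne_zero h.1)
    have h2 : f2.leadingCoeff ≠ 0 := leadingCoeff_ne_zero.2 (Squarefree.ne_zero h.2.1)
    refine ⟨((Units.mk0 _ h1, Units.mk0 _ h2), (C f1.leadingCoeff⁻¹ * f1, C f2.leadingCoeff⁻¹ * f2, f3)), ?_, ?_⟩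
    · refine ⟨?_, ?_, ?_⟩
      · have := (hscl (Units.mk0 _ (inv_ne_zero h1)) (Units.mk0 _ (inv_ne_zero h2)) f1 f2 f3).2 h
        simpa using this
      · exact monic_C_mul_of_mul_leadingCoeff_eq_one (inv_mul_cancel₀ h1)
      · exact monic_C_mul_of_mul_leadingCoeff_eq_one (inv_mul_cancel₀ h2)
    · simp only [scl, Units.val_mk0, ← mul_assoc, ← C_mul, mul_inv_cancel₀ h1, mul_inv_cancel₀ h2, C_1, one_mul]
  · rintro ⟨⟨⟨c, c'⟩, ⟨a, b, d⟩⟩, h, heq⟩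
    rw [← heq]
    exact (hscl c c' a b d).2 h.1

lemma scl_inj (g : ℕ) : Set.InjOn scl (((Finset.univ : Finset (Fˣ × Fˣ)) ×ˢ FF F g : Finset _) : Set ((Fˣ × Fˣ) × (F[X] × F[X] × F[X]))) := by
  rintro ⟨⟨c, c'⟩, ⟨a, b, d⟩⟩ h ⟨⟨e, e'⟩, ⟨a', b', d'⟩⟩ h' heq
  simp only [Finset.mem_coe, Finset.mem_product, Finset.mem_univ, true_and, mem_FF] at h h'
  have m1 : a.Monic := h.2.1
  have m2 : b.Monic := h.2.2
  have m3 : a'.Monic := h'.2.1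
  have m4 : b'.Monic := h'.2.2
  simp only [scl, Prod.mk.injEq] at heq
  have key : ∀ (c e : Fˣ) (a a' : F[X]), a.Monic → a'.Monic → C (c : F) * a = C (e : F) * a' → c = e ∧ a = a' := by
    intro c e a a' m m' hh
    have h1 := congrArg leadingCoeff hh
    simp only [leadingCoeff_mul, leadingCoeff_C, m.leadingCoeff, m'.leadingCoeff, mul_one] at h1
    refine ⟨Units.ext h1, ?_⟩
    rw [h1] at hh
    exact mul_left_cancel₀ (by simp) hh
  obtain ⟨rfl, rfl⟩ := key _ _ _ _ m1 m3 heq.1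
  obtain ⟨rfl, rfl⟩ := key _ _ _ _ m2 m4 heq.2.1
  rw [heq.2.2]

lemma Fhat_ncard (g : ℕ) : (FhatSet F g).ncard = Fintype.card (Fˣ × Fˣ) * (FF F g).card := by
  rw [Fhat_eq, Set.ncard_coe_finset, Finset.card_image_of_injOn (scl_inj g), Finset.card_product, Finset.card_univ]

lemma Fhat_sum (g : ℕ) (φ : F[X] × F[X] × F[X] → ℤ)
    (hφ : ∀ y, φ (scl y) = φ y.2) :
    ∑ᶠ t ∈ FhatSet F g, φ t = Fintype.card (Fˣ × Fˣ) * ∑ t ∈ FF F g, φ t := by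
  rw [Fhat_eq, finsum_mem_coe_finset, Finset.sum_image (scl_inj g), Finset.sum_product]
  simp [hφ]

end

section
variable {F K : Type*} [Field F] [Fintype F] [Field K] [Fintype K] [Algebra F K]

lemma triv_sum (q n : ℕ) (hF : Fintype.card F = q) (hK : Fintype.card K = q ^ n)
    (hn : Even n) (hn0 : 0 < n) (hq : Odd q) (hq1 : 1 < q) (h2 : ringChar K ≠ 2) (f : F[X]) (hf : f ≠ 0) :
    |∑ x ∈ Finset.univ.filter (fun x : K => x ^ (q ^ (n / 2)) = x), quadCharFn K (aeval x f)
      - ((q ^ (n / 2) : ℕ) : ℤ)| ≤ f.natDegree := by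
  have hr1 : 1 < q ^ (n / 2) := Nat.one_lt_pow (by obtain ⟨k, rfl⟩ := hn; omega) hq1
  have hK2 : Fintype.card K = (q ^ (n / 2)) ^ 2 := by
    rw [hK, ← pow_mul]; congr 1; obtain ⟨k, rfl⟩ := hn; omega
  have hval : ∀ x ∈ Finset.univ.filter (fun x : K => x ^ (q ^ (n / 2)) = x),
      quadCharFn K (aeval x f) = 1 - (if aeval x f = 0 then 1 else 0) := by
    intro x hx
    rw [Finset.mem_filter] at hx
    by_cases h0 : aeval x f = 0
    · simp [h0, quadCharFn]
    · rw [if_neg h0, quad_of_fixed (q ^ (n / 2)) hq.pow hr1 hK2 h2 _ (aeval_fixed q (n / 2) hF x hx.2 f) h0]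
      ring
  rw [Finset.sum_congr rfl hval, Finset.sum_sub_distrib, Finset.sum_const, card_trivial _ hr1 hK2,
    Finset.sum_boole]
  simp only [nsmul_eq_mul, mul_one, sub_sub_cancel_left, abs_neg, Nat.abs_cast, Nat.cast_le]
  have hm : f.map (algebraMap F K) ≠ 0 := (Polynomial.map_ne_zero_iff (algebraMap F K).injective).2 hf
  have : (Finset.univ.filter (fun x : K => x ^ (q ^ (n / 2)) = x)).filter (fun x => aeval x f = 0) ⊆
      (f.map (algebraMap F K)).roots.toFinset := by
    intro x hx
    rw [Finset.mem_filter] at hx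
    rw [Multiset.mem_toFinset, mem_roots hm, IsRoot, eval_map_algebraMap]
    exact hx.2
  refine (Finset.card_le_card this).trans ((Multiset.toFinset_card_le _).trans ((card_roots' _).trans ?_))
  rw [natDegree_map]

lemma DD_sum {g : ℕ} {d : ℕ × ℕ × ℕ} (h : d ∈ DD g) : d.1 + d.2.1 + d.2.2 ≤ g + 3 ∧ g + 2 ≤ d.1 + d.2.1 + d.2.2 := by
  rw [mem_DD] at h
  have h1 := Lg_le d.1 d.2.1 d.2.2
  have h2 := Lg_ge d.1 d.2.1 d.2.2
  omega

lemma DD_nondeg {g : ℕ} {d : ℕ × ℕ × ℕ} (h : d ∈ DD g) : 1 ≤ d.1 + d.2.1 := by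
  have hs := DD_sum h
  rw [mem_DD] at h
  by_contra hh
  have h1 : d.1 = 0 := by omega
  have h2 : d.2.1 = 0 := by omega
  have hp : ∀ a : ℕ, ({0, 0, a} : Multiset ℕ) = {a, 0, 0} := by
    intro a
    simp only [Multiset.insert_eq_cons, ← Multiset.cons_zero]
    rw [Multiset.cons_swap 0 a, Multiset.cons_swap 0 a]
  rw [h1, h2, hp] at h
  rcases (by omega : d.2.2 = g + 3 ∨ d.2.2 = g + 2) with h3 | h3
  · rw [h3] at h; exact h.2.1 rfl
  · rw [h3] at h; exact h.2.2 rfl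

lemma DD_card (g : ℕ) : (DD g).card ≤ (g + 4) ^ 3 := by
  refine (Finset.card_filter_le _ _).trans ?_
  simp only [Finset.card_product, Finset.card_range]
  apply le_of_eq; ring

lemma DD_small_card (g m : ℕ) : ((DD g).filter (fun d => d.1 < m ∧ d.2.1 < m)).card ≤ 2 * m ^ 2 := by
  have : ((DD g).filter (fun d => d.1 < m ∧ d.2.1 < m)).card ≤
      ((Finset.range m) ×ˢ ((Finset.range m) ×ˢ (Finset.range 2))).card := by
    apply Finset.card_le_card_of_injOn (fun d => (d.1, d.2.1, g + 3 - (d.1 + d.2.1 + d.2.2)))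
    · intro d hd
      have hd := Finset.mem_filter.1 (Finset.mem_coe.1 hd)
      have := DD_sum hd.1
      simp only [Finset.coe_product, Set.mem_prod, Finset.coe_range, Set.mem_Iio]
      omega
    · intro d hd d' hd' h
      have := DD_sum (Finset.mem_filter.1 (Finset.mem_coe.1 hd)).1
      have := DD_sum (Finset.mem_filter.1 (Finset.mem_coe.1 hd')).1
      simp only [Prod.mk.injEq] at h
      refine Prod.ext ?_ (Prod.ext ?_ ?_) <;> omega
  refine this.trans (le_of_eq ?_)
  simp only [Finset.card_product, Finset.card_range]; ring

lemma TT_card_le (d1 d2 d3 : ℕ) : (TT F d1 d2 d3).card ≤ Fintype.card F ^ (d1 + d2 + d3) := by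
  refine (Finset.card_filter_le _ _).trans ?_
  simp only [Finset.card_product, card_MP]
  apply le_of_eq; ring

lemma case_c (p m q n g : ℕ) [Fact p.Prime] [CharP K p] (hr : q ^ (n / 2) = p ^ m)
    (hF : Fintype.card F = q) (hK : Fintype.card K = q ^ n)
    (hn : Even n) (hn0 : 0 < n) (hq : Odd q) (hq1 : 1 < q) (h2 : ringChar K ≠ 2)
    (d : ℕ × ℕ × ℕ) (hd : d ∈ DD g) (hs : d.1 < 6 * n ∧ d.2.1 < 6 * n) :
    |∑ t ∈ TT F d.1 d.2.1 d.2.2, ∑ x ∈ Finset.univ.filter (fun x : K => ¬ x ^ (q ^ (n / 2)) = x),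
      quadCharFn K (aeval x (t.1 * t.2.1))| ≤ (q : ℤ) ^ (g + 3) * (169 * n * (q : ℤ) ^ (n / 2)) := by
  have hr1 : 1 < q ^ (n / 2) := Nat.one_lt_pow (by obtain ⟨k, rfl⟩ := hn; omega) hq1
  have hK2 : Fintype.card K = (q ^ (n / 2)) ^ 2 := by
    rw [hK, ← pow_mul]; congr 1; obtain ⟨k, rfl⟩ := hn; omega
  have hsum := DD_sum hd
  have hnd := DD_nondeg hd
  have hterm : ∀ t ∈ TT F d.1 d.2.1 d.2.2,
     |∑ x ∈ Finset.univ.filter (fun x : K => ¬ x ^ (q ^ (n / 2)) = x),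
      quadCharFn K (aeval x (t.1 * t.2.1))| ≤ 169 * n * (q : ℤ) ^ (n / 2) := by
    intro t ht
    rw [mem_TT] at ht
    obtain ⟨⟨m1, e1⟩, ⟨m2, e2⟩, _, s1, s2, _, c12, _⟩ := ht
    have hsf : Squarefree (t.1 * t.2.1) := (squarefree_mul_iff).2 ⟨c12.isRelPrime, s1, s2⟩
    have hdeg : (t.1 * t.2.1).natDegree = d.1 + d.2.1 := by rw [m1.natDegree_mul m2, e1, e2]
    have hw := weilF (F := F) (K := K) p m (q ^ (n / 2)) hr hq.pow hK2 (t.1 * t.2.1) hsf (by omega) h2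
    rw [hdeg] at hw
    have htriv := sum_quad_trivial (K := K) (Finset.univ.filter (fun x : K => x ^ (q ^ (n / 2)) = x))
      (fun x => aeval x (t.1 * t.2.1))
    rw [card_trivial _ hr1 hK2] at htriv
    have hsp := Finset.sum_filter_add_sum_filter_not (Finset.univ : Finset K)
      (fun x : K => x ^ (q ^ (n / 2)) = x) (fun x => quadCharFn K (aeval x (t.1 * t.2.1)))
    rw [← hsp] at hw
    push_cast at hw htriv
    have hA : (14 * ((d.1 : ℤ) + d.2.1)) + 1 ≤ 169 * n := by omega
    have hpos : (0 : ℤ) ≤ (q : ℤ) ^ (n / 2) := by positivity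
    have hB := mul_le_mul_of_nonneg_right hA hpos
    rw [abs_le] at hw htriv ⊢
    constructor <;> linarith [hw.1, hw.2, htriv.1, htriv.2]
  refine (Finset.abs_sum_le_sum_abs _ _).trans ((Finset.sum_le_card_nsmul _ _ _ hterm).trans ?_)
  rw [nsmul_eq_mul]
  apply mul_le_mul_of_nonneg_right _ (by positivity)
  have h3 := TT_card_le (F := F) d.1 d.2.1 d.2.2
  rw [hF] at h3
  have h4 : q ^ (d.1 + d.2.1 + d.2.2) ≤ q ^ (g + 3) := Nat.pow_le_pow_right (by omega) hsum.1
  exact_mod_cast h3.trans h4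

lemma case_d (q n g : ℕ) (hF : Fintype.card F = q) (hK : Fintype.card K = q ^ n)
    (hn : Even n) (hn0 : 0 < n) (hq : Odd q) (hq1 : 1 < q) (h2 : ringChar K ≠ 2)
    (d : ℕ × ℕ × ℕ) (hd : d ∈ DD g) (hs : ¬ (d.1 < 6 * n ∧ d.2.1 < 6 * n)) :
    |((∑ t ∈ TT F d.1 d.2.1 d.2.2, ∑ x ∈ Finset.univ.filter (fun x : K => ¬ x ^ (q ^ (n / 2)) = x),
      quadCharFn K (aeval x (t.1 * t.2.1)) : ℤ) : ℝ)| ≤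
      (q : ℝ) ^ (g + 3) * (g + 4) ^ 3 / ((q : ℝ) ^ (n / 2)) ^ 3 := by
  have hK2 : Fintype.card K = (q ^ (n / 2)) ^ 2 := by
    rw [hK, ← pow_mul]; congr 1; obtain ⟨k, rfl⟩ := hn; omega
  have hsum := DD_sum hd
  have hq0 : (1 : ℝ) ≤ q := by exact_mod_cast hq1.le
  set s := Real.sqrt q with hs'
  have hs2 : s ^ 2 = Fintype.card F := by rw [hF]; exact Real.sq_sqrt (by linarith)
  have hs1 : 1 ≤ s := Real.one_le_sqrt.2 hq0
  have hsn : s ^ n = (q : ℝ) ^ (n / 2) := by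
    obtain ⟨k, rfl⟩ := hn
    rw [show (k + k) / 2 = k by omega, ← hF, ← hs2, ← pow_mul]; congr 1; omega
  set r := (q : ℝ) ^ (n / 2) with hr
  have hrpos : 0 < r := by positivity
  have hx : ∀ x ∈ Finset.univ.filter (fun x : K => ¬ x ^ (q ^ (n / 2)) = x),
      |((∑ t ∈ TT F d.1 d.2.1 d.2.2, quadCharFn K (aeval x (t.1 * t.2.1)) : ℤ) : ℝ)| ≤
      (q : ℝ) ^ (g + 3) * (g + 4) ^ 3 / r ^ 5 := by
    intro x hx
    rw [Finset.mem_filter] at hx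
    have key : ∀ a b c : ℕ, a + b + c ≤ g + 3 → 6 * n ≤ a → 
      |((∑ t ∈ TT F a b c, quadCharFn K (aeval x (t.1 * t.2.1)) : ℤ) : ℝ)| ≤
      (q : ℝ) ^ (g + 3) * (g + 4) ^ 3 / r ^ 5 := by
      intro a b c habc ha
      have hb := TT_bound (fun f : F[X] => quadCharFn K (aeval x f))
        (fun a b => by simp only [map_mul, quadCharFn_mul]) (fun a => quadCharFn_abs _) n
        (fun e he => sum_MP_zero q n hF hK hn hq hq1 h2 x hx.2 e he) s hs2 hs1 a b c
      rw [hsn, hF] at hb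
      generalize |((∑ t ∈ TT F a b c, quadCharFn K (aeval x (t.1 * t.2.1)) : ℤ) : ℝ)| = Y at *
      have hY : Y ≤ (q : ℝ) ^ (a + b + c) * r * ((a + 1) * (b + 1) * (c + 1)) / s ^ a := by
        rw [le_div_iff₀ (by positivity)]; linarith
      refine hY.trans ?_
      have h6 : r ^ 6 ≤ s ^ a := by
        rw [← hsn, ← pow_mul]; exact pow_le_pow_right₀ hs1 (by omega)
      have ha' : (a : ℝ) + 1 ≤ g + 4 := by exact_mod_cast (by omega : a + 1 ≤ g + 4)
      have hb' : (b : ℝ) + 1 ≤ g + 4 := by exact_mod_cast (by omega : b + 1 ≤ g + 4)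
      have hc' : (c : ℝ) + 1 ≤ g + 4 := by exact_mod_cast (by omega : c + 1 ≤ g + 4)
      calc (q : ℝ) ^ (a + b + c) * r * ((a + 1) * (b + 1) * (c + 1)) / s ^ a
          ≤ (q : ℝ) ^ (g + 3) * r * ((g + 4) * (g + 4) * (g + 4)) / r ^ 6 := by
            gcongr
        _ = (q : ℝ) ^ (g + 3) * (g + 4) ^ 3 / r ^ 5 := by
            field_simp
    by_cases h1 : d.1 < 6 * n
    · have hsw : ∑ t ∈ TT F d.1 d.2.1 d.2.2, quadCharFn K (aeval x (t.1 * t.2.1)) =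
          ∑ t ∈ TT F d.2.1 d.1 d.2.2, quadCharFn K (aeval x (t.1 * t.2.1)) := by
        rw [TT_swap]
        apply Finset.sum_congr rfl
        intro t _
        rw [mul_comm]
      rw [hsw]
      exact key d.2.1 d.1 d.2.2 (by omega) (by omega)
    · exact key _ _ _ hsum.1 (by omega)
  rw [Finset.sum_comm]
  push_cast at hx ⊢
  refine (Finset.abs_sum_le_sum_abs _ _).trans ((Finset.sum_le_card_nsmul _ _ _ hx).trans ?_)
  rw [nsmul_eq_mul]
  have hc : ((Finset.univ.filter (fun x : K => ¬ x ^ (q ^ (n / 2)) = x)).card : ℝ) ≤ r ^ 2 := by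
    have := Finset.card_filter_le (Finset.univ : Finset K) (fun x : K => ¬ x ^ (q ^ (n / 2)) = x)
    rw [Finset.card_univ, hK2] at this
    rw [hr]; exact_mod_cast this
  refine (mul_le_mul_of_nonneg_right hc (by positivity)).trans (le_of_eq ?_)
  field_simp

lemma main_bound (q n g : ℕ) (hF : Fintype.card F = q) (hK : Fintype.card K = q ^ n)
    (hn : Even n) (hn0 : 0 < n) (hq : Odd q) (hq1 : 1 < q) :
    |((∑ t ∈ FF F g, ∑ x : K, quadCharFn K (aeval x (t.1 * t.2.1)) : ℤ) : ℝ) - (q : ℝ) ^ (n / 2) * (FF F g).card|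
     ≤ (g + 3) * (FF F g).card + 2 * (6 * n) ^ 2 * ((q : ℝ) ^ (g + 3) * (169 * n * (q : ℝ) ^ (n / 2))) +
      (g + 4) ^ 3 * ((q : ℝ) ^ (g + 3) * (g + 4) ^ 3 / ((q : ℝ) ^ (n / 2)) ^ 3) := by
  have h2 : ringChar K ≠ 2 := by
    intro h
    have := FiniteField.even_card_iff_char_two.1 h
    rw [hK] at this
    have h3 : Odd (q ^ n) := hq.pow
    rw [Nat.odd_iff] at h3; omega
  obtain ⟨p, hp⟩ := CharP.exists F
  obtain ⟨a, hpp, ha⟩ := FiniteField.card F p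
  have : Fact p.Prime := ⟨hpp⟩
  have : CharP K p := charP_of_injective_algebraMap (algebraMap F K).injective p
  have hr : q ^ (n / 2) = p ^ ((a : ℕ) * (n / 2)) := by rw [← hF, ha, pow_mul]
  set T1 := Finset.univ.filter (fun x : K => x ^ (q ^ (n / 2)) = x) with hT1
  set T2 := Finset.univ.filter (fun x : K => ¬ x ^ (q ^ (n / 2)) = x) with hT2
  have hsp : ∑ t ∈ FF F g, ∑ x : K, quadCharFn K (aeval x (t.1 * t.2.1)) =
      ∑ t ∈ FF F g, ∑ x ∈ T1, quadCharFn K (aeval x (t.1 * t.2.1)) +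
      ∑ d ∈ DD g, ∑ t ∈ TT F d.1 d.2.1 d.2.2, ∑ x ∈ T2, quadCharFn K (aeval x (t.1 * t.2.1)) := by
    rw [← sum_FF g (fun t => ∑ x ∈ T2, quadCharFn K (aeval x (t.1 * t.2.1))), ← Finset.sum_add_distrib]
    apply Finset.sum_congr rfl
    intro t _
    rw [hT1, hT2, Finset.sum_filter_add_sum_filter_not]
  set W1 := ∑ t ∈ FF F g, ∑ x ∈ T1, quadCharFn K (aeval x (t.1 * t.2.1)) with hW1
  set V : ℕ × ℕ × ℕ → ℤ := fun d => ∑ t ∈ TT F d.1 d.2.1 d.2.2, ∑ x ∈ T2, quadCharFn K (aeval x (t.1 * t.2.1)) with hV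
  have b1 : |W1 - (q : ℤ) ^ (n / 2) * (FF F g).card| ≤ (g + 3) * (FF F g).card := by
    have : W1 - (q : ℤ) ^ (n / 2) * (FF F g).card = ∑ t ∈ FF F g, (∑ x ∈ T1, quadCharFn K (aeval x (t.1 * t.2.1)) - ((q ^ (n / 2) : ℕ) : ℤ)) := by
      rw [Finset.sum_sub_distrib, Finset.sum_const, nsmul_eq_mul]; push_cast; ring
    rw [this]
    have ht : ∀ t ∈ FF F g, |∑ x ∈ T1, quadCharFn K (aeval x (t.1 * t.2.1)) - ((q ^ (n / 2) : ℕ) : ℤ)| ≤ (g : ℤ) + 3 := by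
      intro t ht
      simp only [FF, Finset.mem_biUnion] at ht
      obtain ⟨d, hd, ht⟩ := ht
      have hs := DD_sum hd
      rw [mem_TT] at ht
      obtain ⟨⟨m1, e1⟩, ⟨m2, e2⟩, _⟩ := ht
      refine (triv_sum q n hF hK hn hn0 hq hq1 h2 (t.1 * t.2.1) (m1.mul m2).ne_zero).trans ?_
      rw [m1.natDegree_mul m2, e1, e2]
      exact_mod_cast (by omega : d.1 + d.2.1 ≤ g + 3)
    refine (Finset.abs_sum_le_sum_abs _ _).trans ((Finset.sum_le_card_nsmul _ _ _ ht).trans ?_)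
    rw [nsmul_eq_mul, mul_comm]
  have b2 : ∀ d ∈ (DD g).filter (fun d => d.1 < 6 * n ∧ d.2.1 < 6 * n),
     |((V d : ℤ) : ℝ)| ≤ (q : ℝ) ^ (g + 3) * (169 * n * (q : ℝ) ^ (n / 2)) := by
    intro d hd
    rw [Finset.mem_filter] at hd
    have := case_c (F := F) (K := K) p _ q n g hr hF hK hn hn0 hq hq1 h2 d hd.1 hd.2
    exact_mod_cast this
  have b3 : ∀ d ∈ (DD g).filter (fun d => ¬ (d.1 < 6 * n ∧ d.2.1 < 6 * n)),
     |((V d : ℤ) : ℝ)| ≤ (q : ℝ) ^ (g + 3) * (g + 4) ^ 3 / ((q : ℝ) ^ (n / 2)) ^ 3 := by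
    intro d hd
    rw [Finset.mem_filter] at hd
    exact case_d (F := F) (K := K) q n g hF hK hn hn0 hq hq1 h2 d hd.1 hd.2
  have b4 : |((∑ d ∈ DD g, V d : ℤ) : ℝ)| ≤ 2 * (6 * n) ^ 2 * ((q : ℝ) ^ (g + 3) * (169 * n * (q : ℝ) ^ (n / 2))) +
      (g + 4) ^ 3 * ((q : ℝ) ^ (g + 3) * (g + 4) ^ 3 / ((q : ℝ) ^ (n / 2)) ^ 3) := by
    rw [← Finset.sum_filter_add_sum_filter_not (DD g) (fun d => d.1 < 6 * n ∧ d.2.1 < 6 * n)]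
    push_cast
    refine (abs_add_le _ _).trans (add_le_add ?_ ?_)
    · refine (Finset.abs_sum_le_sum_abs _ _).trans ((Finset.sum_le_card_nsmul _ _ _ b2).trans ?_)
      rw [nsmul_eq_mul]
      apply mul_le_mul_of_nonneg_right _ (by positivity)
      exact_mod_cast DD_small_card g (6 * n)
    · refine (Finset.abs_sum_le_sum_abs _ _).trans ((Finset.sum_le_card_nsmul _ _ _ b3).trans ?_)
      rw [nsmul_eq_mul]
      apply mul_le_mul_of_nonneg_right _ (by positivity)
      exact_mod_cast (Finset.card_filter_le _ _).trans (DD_card g)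
  have b1' : |(W1 : ℝ) - (q : ℝ) ^ (n / 2) * (FF F g).card| ≤ (g + 3) * (FF F g).card := by
    exact_mod_cast b1
  rw [hsp]
  rw [Int.cast_add, add_sub_right_comm]
  refine (abs_add_le _ _).trans ?_
  linarith

end

lemma final_ineq (W r N c g n Q : ℝ) (hr : 0 < r) (hN : 0 < N) (hc : 0 < c) (hg : 4 ≤ g) (hQ : 0 < Q) (hQg : ℝ)
    (hQg0 : 0 < hQg) (hn : 0 ≤ n)
    (hNl : c * g ^ 2 * hQg ≤ N) (hr3 : g ^ 3 ≤ r ^ 2)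
    (hW : |W - r * N| ≤ (g + 3) * N + 2 * (6 * n) ^ 2 * ((hQg * Q) * (169 * n * r)) +
      (g + 4) ^ 3 * ((hQg * Q) * (g + 4) ^ 3 / r ^ 3)) :
    |3 * (W / (r * N)) - 3| ≤ 3 * (2 * (Real.sqrt g)⁻¹ + 12168 * Q / c * (n ^ 3 / g ^ 2) + 64 * Q / c * (1 / g ^ 2)) := by
  have hg0 : 0 < g := by linarith
  have hrN : 0 < r * N := by positivity
  have e1 : 3 * (W / (r * N)) - 3 = 3 * ((W - r * N) / (r * N)) := by field_simp
  rw [e1, abs_mul, abs_of_pos (by norm_num : (0:ℝ) < 3), abs_div, abs_of_pos hrN]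
  apply mul_le_mul_of_nonneg_left _ (by norm_num)
  rw [div_le_iff₀ hrN]
  refine hW.trans ?_
  rw [add_mul _ (64 * Q / c * (1 / g ^ 2)), add_mul _ (12168 * Q / c * (n ^ 3 / g ^ 2))]
  have hsq : g * Real.sqrt g ≤ r := by
    apply le_of_sq_le_sq _ hr.le
    rw [mul_pow, Real.sq_sqrt hg0.le]
    linarith [hr3, (by ring : g ^ 2 * g = g ^ 3)]
  have hsg : 0 < Real.sqrt g := Real.sqrt_pos.2 hg0
  refine add_le_add (add_le_add ?_ ?_) ?_
  · have : g + 3 ≤ 2 * (Real.sqrt g)⁻¹ * r := by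
      have h1 : 2 * (Real.sqrt g)⁻¹ * (g * Real.sqrt g) ≤ 2 * (Real.sqrt g)⁻¹ * r := by gcongr
      have h2 : 2 * (Real.sqrt g)⁻¹ * (g * Real.sqrt g) = 2 * g := by field_simp
      linarith
    calc (g + 3) * N ≤ 2 * (Real.sqrt g)⁻¹ * r * N := by gcongr
      _ = _ := by ring
  · calc 2 * (6 * n) ^ 2 * ((hQg * Q) * (169 * n * r)) = 12168 * Q / c * (n ^ 3 / g ^ 2) * (r * (c * g ^ 2 * hQg)) := by
          field_simp; ring
      _ ≤ _ := by gcongr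
  · have h4 : (g + 4) ^ 6 ≤ 64 * g ^ 6 := by
      calc (g + 4) ^ 6 ≤ (2 * g) ^ 6 := by gcongr; linarith
        _ = _ := by ring
    have h5 : g ^ 6 ≤ r ^ 4 := by
      calc g ^ 6 = (g ^ 3) ^ 2 := by ring
        _ ≤ (r ^ 2) ^ 2 := by gcongr
        _ = _ := by ring
    calc (g + 4) ^ 3 * ((hQg * Q) * (g + 4) ^ 3 / r ^ 3) = (g + 4) ^ 6 * (hQg * Q) / r ^ 3 := by ring
      _ ≤ (64 * r ^ 4) * (hQg * Q) / r ^ 3 := by gcongr; linarith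
      _ = 64 * Q / c * (1 / g ^ 2) * (r * (c * g ^ 2 * hQg)) := by field_simp
      _ ≤ _ := by gcongr

lemma total_eq {F K : Type*} [Field F] [Fintype F] [Field K] [Fintype K] [Algebra F K]
    (q n g : ℕ) (hF : Fintype.card F = q) (hK : Fintype.card K = q ^ n)
    (hn : Even n) (hn0 : 0 < n) (hq : Odd q) (hq1 : 1 < q) :
    ∑ᶠ t ∈ FhatSet F g, ∑ x : K,
              (quadCharFn K (aeval x (t.1 * t.2.2)) +
                quadCharFn K (aeval x (t.2.1 * t.2.2)) +
                quadCharFn K (aeval x (t.1 * t.2.1))) =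
    Fintype.card (Fˣ × Fˣ) * (3 * ∑ t ∈ FF F g, ∑ x : K, quadCharFn K (aeval x (t.1 * t.2.1))) := by
  have h2 : ringChar K ≠ 2 := by
    intro h
    have := FiniteField.even_card_iff_char_two.1 h
    rw [hK] at this
    have h3 : Odd (q ^ n) := hq.pow
    rw [Nat.odd_iff] at h3; omega
  rw [Fhat_sum]
  · congr 1
    simp only [Finset.sum_add_distrib]
    rw [FF_swap12 (fun t => ∑ x : K, quadCharFn K (aeval x (t.2.1 * t.2.2)))]
    simp only
    rw [FF_swap23 (fun t => ∑ x : K, quadCharFn K (aeval x (t.1 * t.2.2)))]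
    ring
  · intro y
    have hc : ∀ c : Fˣ, quadCharFn K (algebraMap F K c) = 1 := fun c =>
      quad_const q n hF hK hn hn0 hq hq1 h2 c c.ne_zero
    simp only [scl, map_mul, aeval_C, quadCharFn_mul, hc, one_mul]

/-- for a sequence of even `n(g)` with `3·log_q g ≤ n(g)` for large `g` and
`n(g) = o(g^{2/3})`, the quantity
`(q^{-n(g)/2}/|F̂_g|)·Σ_{(f1,f2,f3) ∈ F̂_g} Σ_{x ∈ F_{q^{n(g)}}}
  [χ₂((f1f3)(x)) + χ₂((f2f3)(x)) + χ₂((f1f2)(x))]` tends to `3` as `g → ∞`. -/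
theorem stmt14 (q : ℕ) (hq_odd : Odd q) (hq_pp : IsPrimePow q)
    (Fq : Type) [Field Fq] [Fintype Fq] (hFq : Fintype.card Fq = q)
    (n : ℕ → ℕ) (hn_even : ∀ g, Even (n g)) (hn_pos : ∀ g, 0 < n g)
    (hn_low : ∃ g0 : ℕ, ∀ g : ℕ, g0 ≤ g → 3 * Real.log g / Real.log q ≤ (n g : ℝ))
    (hn_up : Filter.Tendsto (fun g : ℕ => (n g : ℝ) / (g : ℝ) ^ ((2 : ℝ) / 3))
      Filter.atTop (nhds 0))
    (K : ℕ → Type) [∀ g, Field (K g)] [∀ g, Fintype (K g)] [∀ g, Algebra Fq (K g)]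
    (hK : ∀ g, Fintype.card (K g) = q ^ n g) :
    Filter.Tendsto (fun g : ℕ =>
        ((q : ℝ) ^ (n g / 2))⁻¹ / ((FhatSet Fq g).ncard : ℝ) *
          ((∑ᶠ t ∈ FhatSet Fq g, ∑ x : K g,
              (quadCharFn (K g) (aeval x (t.1 * t.2.2)) +
                quadCharFn (K g) (aeval x (t.2.1 * t.2.2)) +
                quadCharFn (K g) (aeval x (t.1 * t.2.1))) : ℤ) : ℝ))
      Filter.atTop (nhds 3) := by
  have hq1 : 1 < q := hFq ▸ Fintype.one_lt_card
  have hqR : (1 : ℝ) < q := by exact_mod_cast hq1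
  obtain ⟨c, hc, g1, hlow⟩ := FF_lower (F := Fq)
  obtain ⟨g0, hg0⟩ := hn_low
  set B : ℕ → ℝ := fun g => 3 * (2 * (Real.sqrt g)⁻¹ + 12168 * (q : ℝ) ^ 3 / c * ((n g : ℝ) ^ 3 / (g : ℝ) ^ 2)
    + 64 * (q : ℝ) ^ 3 / c * (1 / (g : ℝ) ^ 2)) with hB
  have hBlim : Filter.Tendsto B Filter.atTop (nhds 0) := by
    have l1 : Filter.Tendsto (fun g : ℕ => (Real.sqrt g)⁻¹) Filter.atTop (nhds 0) :=
      (Real.tendsto_sqrt_atTop.comp tendsto_natCast_atTop_atTop).inv_tendsto_atTop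
    have l2 : Filter.Tendsto (fun g : ℕ => (n g : ℝ) ^ 3 / (g : ℝ) ^ 2) Filter.atTop (nhds 0) := by
      have := hn_up.pow 3
      simp only [ne_eq, OfNat.ofNat_ne_zero, not_false_eq_true, zero_pow] at this
      refine this.congr ?_
      intro g
      rw [div_pow]
      congr 1
      rw [← Real.rpow_natCast, ← Real.rpow_mul (by positivity)]
      norm_num
    have l3 : Filter.Tendsto (fun g : ℕ => 1 / (g : ℝ) ^ 2) Filter.atTop (nhds 0) := by
      have := (tendsto_one_div_atTop_nhds_zero_nat (𝕜 := ℝ)).pow 2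
      simpa using this
    have := (((l1.const_mul 2).add (l2.const_mul (12168 * (q : ℝ) ^ 3 / c))).add
      (l3.const_mul (64 * (q : ℝ) ^ 3 / c))).const_mul 3
    simpa [hB] using this
  rw [tendsto_iff_dist_tendsto_zero]
  refine squeeze_zero' (Filter.Eventually.of_forall fun g => dist_nonneg) ?_ hBlim
  filter_upwards [Filter.eventually_ge_atTop (max (max g0 g1) 4)] with g hg
  have hgg0 : g0 ≤ g := by omega
  have hgg1 : g1 ≤ g := by omega
  have hg4 : 4 ≤ g := by omega
  have hg4R : (4 : ℝ) ≤ g := by exact_mod_cast hg4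
  have hN := hlow g hgg1
  rw [hFq] at hN
  have hNpos : (0 : ℝ) < (FF Fq g).card := lt_of_lt_of_le (by positivity) hN
  have hr3 : (g : ℝ) ^ 3 ≤ ((q : ℝ) ^ (n g / 2)) ^ 2 := by
    have h1 := hg0 g hgg0
    have hlq : 0 < Real.log q := Real.log_pos hqR
    rw [div_le_iff₀ hlq] at h1
    have h2 : ((q : ℝ) ^ (n g / 2)) ^ 2 = (q : ℝ) ^ (n g) := by
      rw [← pow_mul]; congr 1; obtain ⟨k, hk⟩ := hn_even g; omega
    rw [h2]
    apply (Real.log_le_log_iff (by positivity) (by positivity)).1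
    rw [Real.log_pow, Real.log_pow]
    exact_mod_cast h1
  have hmb := main_bound (F := Fq) (K := K g) q (n g) g hFq (hK g) (hn_even g) (hn_pos g) hq_odd hq1
  rw [pow_add] at hmb
  have hfin := final_ineq _ _ _ c g (n g) ((q : ℝ) ^ 3) (by positivity) hNpos hc hg4R (by positivity)
    ((q : ℝ) ^ g) (by positivity) (by positivity) hN hr3 hmb
  rw [total_eq q (n g) g hFq (hK g) (hn_even g) (hn_pos g) hq_odd hq1, Fhat_ncard, Real.dist_eq]
  refine le_trans (le_of_eq ?_) hfin
  congr 2
  have hU : ((Fintype.card (Fqˣ × Fqˣ) : ℕ) : ℝ) ≠ 0 := by exact_mod_cast Fintype.card_ne_zero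
  push_cast
  generalize (∑ t ∈ FF Fq g, ∑ x : K g, ((quadCharFn (K g) (aeval x (t.1 * t.2.1)) : ℤ) : ℝ)) = W
  generalize ((Fintype.card (Fqˣ × Fqˣ) : ℕ) : ℝ) = U at *
  field_simp
end

section
/- Let q be an odd prime power, let g ≥ 1 be an integer, let n be an odd positive integer, and let χ_2 be the quadratic character of F_{q^n}. Then Σ_{(f1,f2,f3) ∈ F̂_g} Σ_{x ∈ F_{q^n}} [ χ_2((f1·f3)(x)) + χ_2((f2·f3)(x)) + χ_2((f1·f2)(x)) ] = 0, where polynomials are evaluated at x via the inclusion F_q ⊆ F_{q^n}. -/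
open Polynomial Classical

theorem aux_nonsquare (q n : ℕ) (hn_odd : Odd n) (Fq K : Type) [Field Fq] [Fintype Fq]
    (hFq : Fintype.card Fq = q) [Field K] [Fintype K] [Algebra Fq K]
    (hK : Fintype.card K = q ^ n) (c : Fq) (hc : ¬ IsSquare c) :
    ¬ IsSquare (algebraMap Fq K c) := by
  rintro ⟨b, hb⟩
  have hr : Module.finrank Fq K = n := by
    have h := Module.card_eq_pow_finrank (K := Fq) (V := K)
    rw [hK, hFq] at h
    have hq : 1 < q := hFq ▸ Fintype.one_lt_card
    exact (Nat.pow_right_injective hq h).symm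
  have h1 := congrArg (Algebra.norm Fq) hb
  rw [Algebra.norm_algebraMap, map_mul, hr] at h1
  obtain ⟨m, rfl⟩ := hn_odd
  have hc0 : c ≠ 0 := by
    rintro rfl
    exact hc ⟨0, by simp⟩
  refine hc ⟨Algebra.norm Fq b / c ^ m, ?_⟩
  field_simp
  rw [pow_two (Algebra.norm Fq b), ← h1]
  ring

theorem aux_flip (K : Type) [Field K] [Fintype K] (c a : K) (hc : ¬ IsSquare c) :
    quadCharFn K (c * a) = - quadCharFn K a := by
  have hc0 : c ≠ 0 := by
    rintro rfl
    exact hc ⟨0, by simp⟩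
  have key : ∀ x : K, quadCharFn K x = quadraticChar K x := by
    intro x
    simp only [quadCharFn, quadraticChar_apply, quadraticCharFun]
    congr 1
    congr 1
  have hm : quadraticChar K c = -1 := by
    rw [← key]
    simp [quadCharFn, hc0, hc]
  rw [key, key, map_mul, hm]
  ring

theorem aux_flip2 (K : Type) [Field K] (c a : K) (hc : c ≠ 0) :
    quadCharFn K (c * c * a) = quadCharFn K a := by
  have h : IsSquare (c * c * a) ↔ IsSquare a := by
    constructor
    · rintro ⟨b, hb⟩
      refine ⟨b / c, ?_⟩
      field_simp
      rw [pow_two, pow_two, ← hb]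
      ring
    · rintro ⟨b, rfl⟩
      exact ⟨c * b, by ring⟩
  simp only [quadCharFn, h, mul_eq_zero, hc, false_or]

/-- Scaling the first two coordinates by units of `Fq`. -/
noncomputable def scaleEquiv (Fq : Type) [Field Fq] (a b : Fqˣ) :
    (Fq[X] × Fq[X] × Fq[X]) ≃ (Fq[X] × Fq[X] × Fq[X]) where
  toFun t := (C (a : Fq) * t.1, C (b : Fq) * t.2.1, t.2.2)
  invFun t := (C ((a⁻¹ : Fqˣ) : Fq) * t.1, C ((b⁻¹ : Fqˣ) : Fq) * t.2.1, t.2.2)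
  left_inv t := by
    ext1
    · simp only [← mul_assoc, ← C_mul, Units.inv_mul, C_1, one_mul]
    · simp only [← mul_assoc, ← C_mul, Units.inv_mul, C_1, one_mul]
  right_inv t := by
    ext1
    · simp only [← mul_assoc, ← C_mul, Units.mul_inv, C_1, one_mul]
    · simp only [← mul_assoc, ← C_mul, Units.mul_inv, C_1, one_mul]

theorem scale_mem (Fq : Type) [Field Fq] (g : ℕ) (a b : Fqˣ) (t : Fq[X] × Fq[X] × Fq[X]) :
    scaleEquiv Fq a b t ∈ FhatSet Fq g ↔ t ∈ FhatSet Fq g := by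
  have hu : ∀ a : Fqˣ, IsUnit (C (a : Fq)) := fun a => isUnit_C.mpr a.isUnit
  have hs : ∀ (a : Fqˣ) (p : Fq[X]), Squarefree (C (a : Fq) * p) ↔ Squarefree p := by
    intro a p
    have h : Associated (C (a : Fq) * p) p :=
      (associated_isUnit_mul_left_iff (hu a)).mpr (Associated.refl p)
    exact h.squarefree_iff
  have hd : ∀ (a : Fqˣ) (p : Fq[X]), (C (a : Fq) * p).natDegree = p.natDegree :=
    fun a p => natDegree_C_mul a.ne_zero
  simp only [FhatSet, scaleEquiv, Equiv.coe_fn_mk, Set.mem_ofPred_eq, hs, hd,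
    isCoprime_mul_unit_left_left (hu _), isCoprime_mul_unit_left_right (hu _)]

theorem finsum_four {α : Type} (F : α → ℤ) (e1 e2 e3 : α ≃ α)
    (h : ∀ t, F t + F (e1 t) + F (e2 t) + F (e3 t) = 0) : ∑ᶠ t, F t = 0 := by
  by_cases hf : F.support.Finite
  · have hc : ∀ e : α ≃ α, (fun t => F (e t)).support.Finite := by
      intro e
      exact hf.preimage e.injective.injOn
    have h0 : ∑ᶠ t, (F t + F (e1 t) + F (e2 t) + F (e3 t)) = 0 := by
      simp [h]
    rw [finsum_add_distrib ?_ (hc e3), finsum_add_distrib ?_ (hc e2),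
      finsum_add_distrib hf (hc e1), finsum_comp_equiv e1, finsum_comp_equiv e2,
      finsum_comp_equiv e3] at h0
    · omega
    · exact (hf.union (hc e1)).subset (Function.support_add _ _)
    · exact (((hf.union (hc e1)).subset (Function.support_add _ _)).union (hc e2)).subset
        (Function.support_add _ _)
  · exact finsum_of_infinite_support hf

/-- for odd `n`, the double sum over `F̂_g` and `x ∈ F_{q^n}` of
`χ₂((f1f3)(x)) + χ₂((f2f3)(x)) + χ₂((f1f2)(x))` vanishes. -/
theorem stmt15 (q : ℕ) (hq_odd : Odd q) (hq_pp : IsPrimePow q)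
    (g : ℕ) (hg : 1 ≤ g)
    (n : ℕ) (hn_pos : 0 < n) (hn_odd : Odd n)
    (Fq : Type) [Field Fq] [Fintype Fq] (hFq : Fintype.card Fq = q)
    (K : Type) [Field K] [Fintype K] [Algebra Fq K] (hK : Fintype.card K = q ^ n) :
    (∑ᶠ t ∈ FhatSet Fq g, ∑ x : K,
        (quadCharFn K (aeval x (t.1 * t.2.2)) + quadCharFn K (aeval x (t.2.1 * t.2.2)) +
          quadCharFn K (aeval x (t.1 * t.2.1)))) = 0 := by
  have hodd : ringChar Fq ≠ 2 := by
    intro h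
    have := FiniteField.even_card_of_char_two h
    rw [hFq] at this
    exact absurd hq_odd (by rw [Nat.odd_iff]; omega)
  obtain ⟨c, hc⟩ := FiniteField.exists_nonsquare hodd
  have hcK := aux_nonsquare q n hn_odd Fq K hFq hK c hc
  have hc0 : c ≠ 0 := by
    rintro rfl
    exact hc ⟨0, by simp⟩
  set d := algebraMap Fq K c with hd
  have hd0 : d ≠ 0 := by
    intro h0
    exact hcK ⟨0, by simp [h0]⟩
  set u : Fqˣ := Units.mk0 c hc0 with hu
  rw [finsum_mem_def]
  refine finsum_four _ (scaleEquiv Fq u 1) (scaleEquiv Fq 1 u) (scaleEquiv Fq u u) ?_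
  intro t
  by_cases ht : t ∈ FhatSet Fq g
  · rw [Set.indicator_of_mem ht, Set.indicator_of_mem ((scale_mem Fq g _ _ t).mpr ht),
      Set.indicator_of_mem ((scale_mem Fq g _ _ t).mpr ht),
      Set.indicator_of_mem ((scale_mem Fq g _ _ t).mpr ht)]
    rw [← Finset.sum_add_distrib, ← Finset.sum_add_distrib, ← Finset.sum_add_distrib]
    refine Finset.sum_eq_zero fun x _ => ?_
    obtain ⟨f1, f2, f3⟩ := t
    have e1 : ∀ a b : K, quadCharFn K (d * a * b) = - quadCharFn K (a * b) := fun a b => by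
      rw [mul_assoc, aux_flip K d _ hcK]
    have e2 : ∀ a b : K, quadCharFn K (a * (d * b)) = - quadCharFn K (a * b) := fun a b => by
      rw [mul_left_comm, aux_flip K d _ hcK]
    have e3 : ∀ a b : K, quadCharFn K (d * a * (d * b)) = quadCharFn K (a * b) := fun a b => by
      rw [mul_mul_mul_comm, aux_flip2 K d _ hd0]
    simp only [scaleEquiv, Equiv.coe_fn_mk, map_mul, aeval_C, hu, Units.val_mk0, Units.val_one,
      map_one, one_mul, ← hd, e3, e1, e2]
    ring
  · have hn : ∀ a b, scaleEquiv Fq a b t ∉ FhatSet Fq g := fun a b h =>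
      ht ((scale_mem Fq g a b t).mp h)
    simp [Set.indicator_of_notMem, ht, hn]
end

section
/- Let q be an odd prime power. There is a constant C, depending only on q, such that for every monic square-free polynomial D ∈ F_q[X] with deg D ≥ 1 and every integer n ≥ 1: the absolute value of the sum of χ_D(P) over all monic irreducible polynomials P ∈ F_q[X] of degree n is at most C·deg(D)·q^{n/2}/n. -/
open Polynomial Classical

noncomputable section

/-- Jacobi symbol `χ_D` for a monic square-free `D`: the product of `χ_P` over the
distinct monic irreducible factors `P` of `D`. -/
def chiD {Fq : Type*} [Field Fq] (D F : Fq[X]) : ℤ :=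
  ∏ᶠ P ∈ {P : Fq[X] | P.Monic ∧ Irreducible P ∧ P ∣ D}, chiP P F

end


lemma st_hasse_dvd {K : Type*} [Field K] (f h : K[X]) (a : ℕ) :
    ∀ k, f ^ (a - k) ∣ hasseDeriv k (h * f ^ a) := by
  induction a with
  | zero => intro k; simp
  | succ a ih =>
    intro k
    rw [pow_succ, ← mul_assoc, hasseDeriv_mul]
    apply Finset.dvd_sum
    rintro ⟨i, j⟩ hij
    rw [Finset.HasAntidiagonal.mem_antidiagonal] at hij
    simp only at hij ⊢
    rcases Nat.eq_zero_or_pos j with hj | hj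
    · subst hj
      rw [hasseDeriv_zero']
      refine (pow_dvd_pow f (show a + 1 - k ≤ (a - i) + 1 by omega)).trans ?_
      rw [pow_succ]
      exact mul_dvd_mul (ih i) dvd_rfl
    · exact ((pow_dvd_pow f (show a + 1 - k ≤ (a - i) by omega)).trans (ih i)).mul_right _

lemma st_hasse_X {K : Type*} [Field K] [Fintype K] (i : ℕ) (hi : 0 < i)
    (hi2 : i < Fintype.card K) : hasseDeriv i ((X : K[X]) ^ Fintype.card K) = 0 := by
  obtain ⟨n, hp, hn⟩ := FiniteField.card K (ringChar K)
  rw [← monomial_one_right_eq_X_pow, hasseDeriv_monomial]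
  have : ((Fintype.card K).choose i : K) = 0 := by
    rw [ringChar.spec, hn]
    apply hp.dvd_choose_pow (by omega)
    rw [← hn]; omega
  simp [this]

lemma st_hasse_mulX {K : Type*} [Field K] [Fintype K] (h : K[X]) (k j : ℕ)
    (hk : k < Fintype.card K) :
    hasseDeriv k (h * (X ^ Fintype.card K) ^ j) =
      hasseDeriv k h * (X ^ Fintype.card K) ^ j := by
  induction j with
  | zero => simp
  | succ j ih =>
    rw [pow_succ, ← mul_assoc, hasseDeriv_mul, Finset.sum_eq_single (k, 0)]
    · simp only [hasseDeriv_zero', ih, mul_assoc]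
    · rintro ⟨i, l⟩ h1 h2
      rw [Finset.HasAntidiagonal.mem_antidiagonal] at h1
      simp only at h1
      have : l ≠ 0 := by rintro rfl; apply h2; simp at h1; simp [h1]
      simp only
      rw [st_hasse_X l (by omega) (by omega), mul_zero]
    · simp

lemma st_order {K : Type*} [Field K] (r : K[X]) (x : K) (l : ℕ)
    (h : ∀ k < l, (hasseDeriv k r).eval x = 0) : (X - C x) ^ l ∣ r := by
  have h1 : X ^ l ∣ taylor x r := by
    rw [X_pow_dvd_iff]
    intro d hd
    rw [taylor_coeff, h d hd]
  obtain ⟨s, hs⟩ := h1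
  refine ⟨taylor (-x) s, ?_⟩
  have := congrArg (taylor (-x)) hs
  rw [taylor_taylor, taylor_mul, taylor_pow] at this
  simpa [sub_eq_add_neg] using this

lemma st_count {K : Type*} [Field K] (r : K[X]) (hr : r ≠ 0) (S : Finset K) (l : ℕ)
    (h : ∀ x ∈ S, (X - C x) ^ l ∣ r) : l * S.card ≤ r.natDegree := by
  have : ∏ x ∈ S, (X - C x) ^ l ∣ r := by
    apply Finset.prod_dvd_of_coprime
    · intro x _ y _ hxy
      apply IsCoprime.pow
      exact pairwise_coprime_X_sub_C Function.injective_id hxy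
    · exact h
  have h2 := natDegree_le_of_dvd this hr
  rw [natDegree_prod_of_monic] at h2
  · simp at h2; linarith
  · intro i _; exact (monic_X_sub_C i).pow l

lemma st_sq {K : Type*} [Field K] (f : K[X]) (hf : Squarefree f) (hm : 1 ≤ f.natDegree)
    (c : K) (hc : c ≠ 0) : ∀ n, ∀ R S : K[X], S.natDegree ≤ n → R ^ 2 * f = C c * S ^ 2 → S = 0 := by
  have hf0 : f ≠ 0 := by rintro rfl; simp at hm
  intro n
  induction n using Nat.strong_induction_on with
  | _ n ih =>
    intro R S hS h
    by_contra hS0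
    have h1 : f ∣ S := by
      have : f ∣ C c * S ^ 2 := ⟨R ^ 2, by rw [← h]; ring⟩
      rw [(isUnit_C.mpr hc.isUnit).dvd_mul_left] at this
      exact hf.isRadical 2 _ this
    obtain ⟨T, rfl⟩ := h1
    have h2 : R ^ 2 = f * (C c * T ^ 2) := by
      apply mul_right_cancel₀ hf0; rw [h]; ring
    have h3 : f ∣ R :=
      hf.isRadical 2 _ ⟨_, h2⟩
    obtain ⟨U, rfl⟩ := h3
    have hT0 : T ≠ 0 := by rintro rfl; simp at hS0
    rw [natDegree_mul hf0 hT0] at hS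
    apply hT0
    apply ih T.natDegree (by omega) U T le_rfl
    apply mul_left_cancel₀ hf0
    rw [← h2]; ring

lemma degree_le_of_lt_succ' {K : Type*} [Field K] (T : K[X]) (A : ℕ) (hA : A ≠ 0)
    (h : T.degree < A) : T.degree ≤ ((A - 1 : ℕ) : WithBot ℕ) := by
  obtain ⟨B, rfl⟩ := Nat.exists_eq_succ_of_ne_zero hA
  rw [degree_le_iff_coeff_zero]
  rw [degree_lt_iff_coeff_zero] at h
  intro m hm
  apply h
  simp at hm; omega

lemma st_nonvan {K : Type*} [Field K] [Fintype K] (f : K[X]) (hf : Squarefree f)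
    (hm : 1 ≤ f.natDegree) (h0 : f.eval 0 ≠ 0) (A : ℕ) (hA : 2 * A + f.natDegree ≤ Fintype.card K + 1)
    (J : ℕ) : ∀ R S : Fin J → K[X], (∀ j, (R j).degree < A) → (∀ j, (S j).degree < A) →
    (∑ j, R j * (X ^ Fintype.card K) ^ (j : ℕ)) ^ 2 * f =
      (∑ j, S j * (X ^ Fintype.card K) ^ (j : ℕ)) ^ 2 * f ^ Fintype.card K →
    ∀ j, R j = 0 ∧ S j = 0 := by
  have hf0 : f ≠ 0 := by rintro rfl; simp at hm
  have hQ : 1 < Fintype.card K := Fintype.one_lt_card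
  induction J with
  | zero => intro R S _ _ _ j; exact j.elim0
  | succ J ih =>
    intro R S hR hS h
    set Y : K[X] := X ^ Fintype.card K with hY
    set H0 := ∑ j : Fin J, R j.succ * Y ^ (j : ℕ) with hH0
    set H1 := ∑ j : Fin J, S j.succ * Y ^ (j : ℕ) with hH1
    have e0 : ∑ j, R j * Y ^ (j : ℕ) = R 0 + Y * H0 := by
      rw [Fin.sum_univ_succ, hH0, Finset.mul_sum]
      simp only [Fin.val_zero, pow_zero, mul_one, Fin.val_succ, pow_succ]
      congr 1; apply Finset.sum_congr rfl; intros; ring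
    have e1 : ∑ j, S j * Y ^ (j : ℕ) = S 0 + Y * H1 := by
      rw [Fin.sum_univ_succ, hH1, Finset.mul_sum]
      simp only [Fin.val_zero, pow_zero, mul_one, Fin.val_succ, pow_succ]
      congr 1; apply Finset.sum_congr rfl; intros; ring
    rw [e0, e1] at h
    obtain ⟨g, hg⟩ : ∃ g, f ^ Fintype.card K = C (f.eval 0) + Y * g := by
      have : X ∣ f - C (f.eval 0) := by
        rw [X_dvd_iff]; simp [coeff_zero_eq_eval_zero]
      obtain ⟨g, hg⟩ := this
      refine ⟨expand K (Fintype.card K) g, ?_⟩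
      rw [← FiniteField.expand_card, eq_add_of_sub_eq' hg]
      simp [hY]
    have key : R 0 ^ 2 * f - C (f.eval 0) * S 0 ^ 2 = 0 := by
      apply eq_zero_of_dvd_of_degree_lt (p := Y)
      · refine ⟨S 0 ^ 2 * g + (2 * S 0 * H1 + Y * H1 ^ 2) * f ^ Fintype.card K
          - (2 * R 0 * H0 + Y * H0 ^ 2) * f, ?_⟩
        rw [hg] at h ⊢
        linear_combination h
      · rw [hY, degree_X_pow]
        by_cases hA0 : A = 0
        · subst hA0
          have : R 0 = 0 := by have := hR 0; simpa using this
          have : S 0 = 0 := by have := hS 0; simpa using this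
          simp [*]
        have n1 : ∀ T : K[X], T.degree < A → T.natDegree ≤ A - 1 := by
          intro T hT
          have := natDegree_le_of_degree_le (n := A - 1) (p := T) (degree_le_of_lt_succ' T A hA0 hT)
          exact this
        have := n1 _ (hR 0)
        have := n1 _ (hS 0)
        refine lt_of_le_of_lt degree_le_natDegree ?_
        rw [Nat.cast_lt]
        refine lt_of_le_of_lt (natDegree_sub_le _ _) (max_lt ?_ ?_)
        · refine lt_of_le_of_lt natDegree_mul_le ?_
          have := natDegree_pow_le (p := R 0) (n := 2)
          omega
        · refine lt_of_le_of_lt natDegree_mul_le ?_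
          have := natDegree_pow_le (p := S 0) (n := 2)
          simp only [natDegree_C]
          omega
    have key' := sub_eq_zero.1 key
    have hS0 : S 0 = 0 := st_sq f hf hm _ h0 _ _ _ le_rfl key'
    have hR0 : R 0 = 0 := by
      rw [hS0] at key'
      simpa [hf0] using key'
    have hY0 : Y ≠ 0 := by simp [hY]
    have := ih (fun j => R j.succ) (fun j => S j.succ) (fun j => hR _) (fun j => hS _) (by
      rw [hS0, hR0] at h
      apply mul_left_cancel₀ (pow_ne_zero 2 hY0)
      linear_combination h)
    intro j
    refine Fin.cases ⟨hR0, hS0⟩ ?_ j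
    exact this

lemma st_div {K : Type*} [Field K] (f : K[X]) (hf0 : f ≠ 0) (a k : ℕ) :
    ∃ T : K[X] →ₗ[K] K[X], ∀ h, f ^ (a - k) * T h = hasseDeriv k (h * f ^ a) := by
  choose T hT using fun h => st_hasse_dvd f h a k
  refine ⟨{ toFun := T, map_add' := ?_, map_smul' := ?_ }, fun h => (hT h).symm⟩
  · intro x y
    apply mul_left_cancel₀ (pow_ne_zero (a - k) hf0)
    rw [← hT, add_mul, map_add, hT x, hT y]; ring
  · intro c x
    apply mul_left_cancel₀ (pow_ne_zero (a - k) hf0)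
    rw [← hT, smul_mul_assoc, map_smul, hT x]; simp

lemma st_div_deg {K : Type*} [Field K] (f : K[X]) (hf0 : f ≠ 0) (a k : ℕ) (hk : k ≤ a)
    (h t : K[X]) (ht : f ^ (a - k) * t = hasseDeriv k (h * f ^ a)) :
    t.natDegree ≤ h.natDegree + k * f.natDegree := by
  by_cases h0 : t = 0
  · simp [h0]
  have h1 := congrArg natDegree ht
  rw [natDegree_mul (pow_ne_zero _ hf0) h0, natDegree_pow] at h1
  have h2 := natDegree_hasseDeriv_le (h * f ^ a) k
  have h3 : (h * f ^ a).natDegree ≤ _ := natDegree_mul_le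
  rw [natDegree_pow] at h3
  obtain ⟨b, rfl⟩ := Nat.exists_eq_add_of_le hk
  rw [Nat.add_sub_cancel_left] at h1
  have : (k + b) * f.natDegree = k * f.natDegree + b * f.natDegree := by ring
  omega

lemma st_main {K : Type*} [Field K] [Fintype K] (f : K[X]) (hf : Squarefree f)
    (hm : 1 ≤ f.natDegree) (h0 : f.eval 0 ≠ 0) (e A J l : ℕ)
    (hQ : Fintype.card K = 2 * e + 1) (hA1 : 1 ≤ A) (hJ1 : 1 ≤ J)
    (hA : 2 * A + f.natDegree ≤ Fintype.card K + 1) (hl : l ≤ Fintype.card K)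
    (hdim : l * (A + J + l * f.natDegree) < 2 * A * J) (a : K) :
    l * (Finset.univ.filter fun x : K => f.eval x = 0 ∨ f.eval x ^ e = a).card ≤
      A + l * f.natDegree + e * f.natDegree + J * Fintype.card K := by
  have hf0 : f ≠ 0 := by rintro rfl; simp at hm
  set m := f.natDegree with hmdef
  set Y : K[X] := X ^ Fintype.card K with hY
  choose T hT using fun k => st_div f hf0 l k
  choose U hU using fun k => st_div f hf0 (l + e) k
  let σ : ℕ → ((Fin J → degreeLT K A) × (Fin J → degreeLT K A)) → K[X] := fun k v =>
    ∑ j : Fin J, (T k (v.1 j) + C a * U k (v.2 j)) * X ^ (j : ℕ)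
  set B := A + J + l * m with hB
  let Φ : ((Fin J → degreeLT K A) × (Fin J → degreeLT K A)) →ₗ[K] (Fin l → Fin B → K) :=
    { toFun := fun v k i => (σ k v).coeff i
      map_add' := by
        intro v w; funext k i
        simp only [σ, Pi.add_apply, ← coeff_add, ← Finset.sum_add_distrib]
        congr 1; apply Finset.sum_congr rfl; intro j _
        simp; ring
      map_smul' := by
        intro c v; funext k i
        simp only [σ, Pi.smul_apply, RingHom.id_apply]
        rw [← coeff_smul, Finset.smul_sum]
        congr 1; apply Finset.sum_congr rfl; intro j _
        simp; simp only [smul_eq_C_mul]; ring }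
  have hfr : Module.finrank K (degreeLT K A) = A := by
    rw [(degreeLTEquiv K A).finrank_eq]; simp
  have : Module.Finite K (degreeLT K A) := Module.Finite.equiv (degreeLTEquiv K A).symm
  have hker : LinearMap.ker Φ ≠ ⊥ := by
    apply LinearMap.ker_ne_bot_of_finrank_lt
    have e1 : Module.finrank K (Fin l → Fin B → K) = l * B := by
      simp [Module.finrank_pi_fintype]
    have e2 : Module.finrank K ((Fin J → degreeLT K A) × (Fin J → degreeLT K A)) = J * A + J * A := by
      rw [Module.finrank_prod, Module.finrank_pi_fintype]
      simp [hfr]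
    rw [e1, e2]
    linarith
  obtain ⟨v, hv, hv0⟩ := (Submodule.ne_bot_iff _).1 hker
  have ndeg : ∀ p : degreeLT K A, (p : K[X]).natDegree ≤ A - 1 := fun p =>
    natDegree_le_of_degree_le (degree_le_of_lt_succ' _ A (by omega) (mem_degreeLT.1 p.2))
  have hσ : ∀ k < l, σ k v = 0 := by
    intro k hk
    ext i
    rw [coeff_zero]
    by_cases hi : i < B
    · have := congrFun (congrFun (LinearMap.mem_ker.1 hv) ⟨k, hk⟩) ⟨i, hi⟩
      exact this
    · apply coeff_eq_zero_of_natDegree_lt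
      refine lt_of_le_of_lt (b := A - 1 + k * m + (J - 1)) ?_ ?_
      · apply natDegree_sum_le_of_forall_le
        intro j _
        refine natDegree_mul_le.trans ?_
        rw [natDegree_X_pow]
        refine add_le_add ((natDegree_add_le _ _).trans (max_le ?_ ?_)) (by have := j.2; omega)
        · refine (st_div_deg f hf0 l k hk.le _ _ (hT k _)).trans ?_
          gcongr; exact ndeg _
        · refine (natDegree_C_mul_le _ _).trans ?_
          refine (st_div_deg f hf0 (l + e) k (by omega) _ _ (hU k _)).trans ?_
          gcongr; exact ndeg _
      · have : k * m ≤ l * m := Nat.mul_le_mul_right _ hk.le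
        omega
  set r : K[X] := ∑ j : Fin J, ((v.1 j : K[X]) * f ^ l + (v.2 j : K[X]) * f ^ (l + e)) * Y ^ (j : ℕ)
    with hr
  have hr0 : r ≠ 0 := by
    intro hr0
    have e1 : r = f ^ l * ((∑ j : Fin J, (v.1 j : K[X]) * Y ^ (j : ℕ)) +
        f ^ e * ∑ j : Fin J, (v.2 j : K[X]) * Y ^ (j : ℕ)) := by
      rw [hr, Finset.mul_sum, ← Finset.sum_add_distrib, Finset.mul_sum]
      apply Finset.sum_congr rfl; intro j _; ring
    rw [hr0] at e1
    have e2 := (mul_eq_zero.1 e1.symm).resolve_left (pow_ne_zero _ hf0)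
    have := st_nonvan f hf hm h0 A hA J (fun j => v.1 j) (fun j => v.2 j)
      (fun j => mem_degreeLT.1 (v.1 j).2) (fun j => mem_degreeLT.1 (v.2 j).2) (by
        rw [← hY, eq_neg_of_add_eq_zero_left e2, hQ]; ring)
    apply hv0
    ext j : 3
    · exact (this j).1
    · exact (this j).2
  have hdeg : r.natDegree ≤ A + l * m + e * m + J * Fintype.card K := by
    apply natDegree_sum_le_of_forall_le
    intro j _
    refine natDegree_mul_le.trans ?_
    refine add_le_add ((natDegree_add_le _ _).trans (max_le ?_ ?_)) ?_
    · refine natDegree_mul_le.trans ?_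
      rw [natDegree_pow, ← hmdef]
      have := ndeg (v.1 j)
      omega
    · refine natDegree_mul_le.trans ?_
      rw [natDegree_pow, add_mul, ← hmdef]
      have := ndeg (v.2 j)
      omega
    · rw [natDegree_pow, hY, natDegree_X_pow]
      exact Nat.mul_le_mul_right _ j.2.le
  refine le_trans (st_count r hr0 _ l ?_) hdeg
  intro x hx
  rw [Finset.mem_filter] at hx
  apply st_order
  intro k hk
  have hD : hasseDeriv k r = ∑ j : Fin J, (f ^ (l - k) * T k (v.1 j) +
      f ^ (l + e - k) * U k (v.2 j)) * Y ^ (j : ℕ) := by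
    rw [hr, map_sum]
    apply Finset.sum_congr rfl; intro j _
    rw [hY, st_hasse_mulX _ _ _ (by omega), map_add, ← hT, ← hU]
  rw [hD, eval_finsetSum]
  have hxY : Y.eval x = x := by rw [hY]; simp [FiniteField.pow_card]
  rcases hx.2 with hx | hx
  · apply Finset.sum_eq_zero
    intro j _
    have : l - k ≠ 0 := by omega
    have : l + e - k ≠ 0 := by omega
    rw [eval_mul, eval_add, eval_mul, eval_mul, eval_pow, eval_pow, hx]
    simp [*]
  · have e1 : (σ k v).eval x = 0 := by rw [hσ k hk]; simp
    have e2 : l + e - k = l - k + e := by omega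
    rw [e2]
    simp only [σ, eval_finsetSum] at e1
    have := congrArg (fun z => f.eval x ^ (l - k) * z) e1
    simp only [mul_zero, Finset.mul_sum] at this
    rw [← this]
    apply Finset.sum_congr rfl
    intro j _
    simp [hxY, pow_add, hx]
    ring

lemma st_squarefree_taylor {K : Type*} [Field K] (f : K[X]) (hf : Squarefree f) (c : K) :
    Squarefree (taylor c f) := by
  intro x ⟨y, hy⟩
  have h1 : ∀ (d : K) (p : K[X]), taylor d (taylor (-d) p) = p := by
    intro d p; rw [taylor_taylor]; simp
  have h2 : taylor (-c) x * taylor (-c) x ∣ f := by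
    refine ⟨taylor (-c) y, ?_⟩
    rw [← taylor_mul, ← taylor_mul, ← hy, taylor_taylor]; simp
  have h3 := hf _ h2
  obtain ⟨z, hz⟩ := h3.exists_right_inv
  refine IsUnit.of_mul_eq_one (taylor c z) ?_
  have := congrArg (taylor c) hz
  rwa [taylor_mul, h1, taylor_one, map_one] at this

lemma st_param (Q m u A e N : ℕ) (hm : 1 ≤ m) (hu1 : u * u ≤ Q) (hu2 : Q < (u + 1) * (u + 1))
    (hu : 20 * m ≤ u) (hA : 2 * A ≤ Q) (he : 2 * e ≤ Q)
    (hN : 2 * u * N ≤ A + 2 * u * m + e * m + (u + 16 * m) * Q) : 2 * N ≤ Q + 20 * m * u := by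
  by_contra hc
  push Not at hc
  have h1 : u * (Q + 20 * m * u + 1) ≤ u * (2 * N) := Nat.mul_le_mul_left _ hc
  have h2 : 2 * e * m ≤ Q * m := Nat.mul_le_mul_right _ he
  have h3 : m * Q ≤ m * (u * u + 2 * u) := Nat.mul_le_mul_left _ (by linarith)
  have h4 : Q ≤ m * Q := Nat.le_mul_of_pos_left _ hm
  have h5 : m * u * 20 ≤ m * u * u := Nat.mul_le_mul_left _ (by omega)
  have h6 : 1 ≤ m * u := Nat.mul_pos hm (by omega)
  nlinarith

lemma st_bound0 {K : Type*} [Field K] [Fintype K] (hc : ringChar K ≠ 2) (f : K[X])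
    (hf : Squarefree f) (hm : 1 ≤ f.natDegree) (h0 : f.eval 0 ≠ 0)
    (hQ : 400 * f.natDegree ^ 2 ≤ Fintype.card K) :
    |∑ x : K, quadraticChar K (f.eval x)| ≤ 20 * f.natDegree * Nat.sqrt (Fintype.card K) := by
  set m := f.natDegree with hmdef
  set Q := Fintype.card K with hQdef
  set u := Nat.sqrt Q with hudef
  have hu1 : u * u ≤ Q := Nat.sqrt_le Q
  have hu2 : Q < (u + 1) * (u + 1) := Nat.lt_succ_sqrt Q
  have hu : 20 * m ≤ u := by rw [hudef, Nat.le_sqrt]; linarith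
  have hodd : Q % 2 = 1 := FiniteField.odd_card_of_char_ne_two hc
  have hQ2 : Q = 2 * (Q / 2) + 1 := by omega
  have hmQ : m + 1 ≤ Q / 2 ∧ 2 * u ≤ Q := by
    constructor
    · have : m ≤ m ^ 2 := Nat.le_self_pow (by norm_num) m
      omega
    · have : 20 * u ≤ u * u := Nat.mul_le_mul_right _ (by omega)
      omega
  have main : ∀ a : K, 2 * (Finset.univ.filter fun x : K => f.eval x = 0 ∨ f.eval x ^ (Q / 2) = a).card
      ≤ Q + 20 * m * u := by
    intro a
    apply st_param Q m u ((Q - m) / 2) (Q / 2) _ hm hu1 hu2 hu (by omega) (by omega)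
    refine (st_main f hf hm h0 (Q / 2) ((Q - m) / 2) (u + 16 * m) (2 * u) hQ2 (by omega) (by omega)
      (by omega) hmQ.2 ?_ a)
    rw [← hmdef]
    have hA : Q ≤ 4 * ((Q - m) / 2) := by omega
    generalize (Q - m) / 2 = A at *
    have h1 : m * (u * u) ≤ m * (4 * A) := Nat.mul_le_mul_left _ (by omega)
    have h2 : u * (20 * m) ≤ u * u := Nat.mul_le_mul_left _ hu
    have h3 : u * u ≤ m * (u * u) := Nat.le_mul_of_pos_left _ hm
    have h4 : 0 < u * u := Nat.mul_pos (by omega) (by omega)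
    nlinarith
  have hχ : ∀ x : K, ((quadraticChar K (f.eval x) : ℤ) : K) = f.eval x ^ (Q / 2) := fun x =>
    quadraticChar_eq_pow_of_char_ne_two' hc _
  have aux : ∀ s : ℤ, (s = 1 ∨ s = -1) → (Q : ℤ) + s * ∑ x : K, quadraticChar K (f.eval x) ≤
      2 * (Finset.univ.filter fun x : K => f.eval x = 0 ∨ f.eval x ^ (Q / 2) = (s : K)).card := by
    intro s hs
    rw [Finset.card_filter]
    push_cast
    rw [Finset.mul_sum, Finset.mul_sum]
    have : (Q : ℤ) = ∑ x : K, (1 : ℤ) := by simp [hQdef]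
    rw [this, ← Finset.sum_add_distrib]
    apply Finset.sum_le_sum
    intro x _
    by_cases hx : f.eval x = 0
    · simp [hx]
    · have hd := quadraticChar_dichotomy hx
      have := hχ x
      rw [← this]
      rcases hd with hd | hd <;> rw [hd] <;> rcases hs with rfl | rfl <;> simp [hx] <;> split_ifs <;> norm_num
  have p1 := aux 1 (Or.inl rfl)
  have p2 := aux (-1) (Or.inr rfl)
  have q1 := Int.ofNat_le.2 (main ((1 : ℤ) : K))
  have q2 := Int.ofNat_le.2 (main ((-1 : ℤ) : K))
  rw [Nat.cast_mul, Nat.cast_add, Nat.cast_mul, Nat.cast_mul, Nat.cast_ofNat, Nat.cast_ofNat] at q1 q2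
  rw [abs_le]
  constructor <;> linarith

theorem st_bound {K : Type*} [Field K] [Fintype K] (hc : ringChar K ≠ 2) (f : K[X])
    (hf : Squarefree f) (hm : 1 ≤ f.natDegree) :
    |((∑ x : K, quadraticChar K (f.eval x) : ℤ) : ℝ)| ≤
      20 * f.natDegree * Real.sqrt (Fintype.card K) := by
  by_cases hQ : 400 * f.natDegree ^ 2 ≤ Fintype.card K
  · obtain ⟨c, hc0⟩ : ∃ c, f.eval c ≠ 0 := by
      by_contra hall
      push Not at hall
      have hf0 : f ≠ 0 := by rintro rfl; simp at hm
      apply hf0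
      apply eq_zero_of_natDegree_lt_card_of_eval_eq_zero f (f := (id : K → K))
        Function.injective_id (fun i => hall i)
      nlinarith
    have h1 := st_bound0 hc (taylor c f) (st_squarefree_taylor f hf c)
      (by rwa [natDegree_taylor]) (by rwa [taylor_eval, zero_add]) (by rwa [natDegree_taylor])
    rw [natDegree_taylor] at h1
    have h2 : ∑ x : K, quadraticChar K ((taylor c f).eval x) =
        ∑ x : K, quadraticChar K (f.eval x) := by
      simp only [taylor_eval]
      exact Equiv.sum_comp (Equiv.addRight c) (fun x => quadraticChar K (f.eval x))
    rw [h2] at h1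
    have h3 : ((|∑ x : K, quadraticChar K (f.eval x)| : ℤ) : ℝ) ≤
      ((20 * f.natDegree * Nat.sqrt (Fintype.card K) : ℤ) : ℝ) := by exact_mod_cast h1
    push_cast at h3 ⊢
    refine h3.trans ?_
    gcongr
    exact Real.nat_sqrt_le_real_sqrt
  · push Not at hQ
    have h1 : |∑ x : K, quadraticChar K (f.eval x)| ≤ Fintype.card K := by
      refine (Finset.abs_sum_le_sum_abs _ _).trans ?_
      have : (Fintype.card K : ℤ) = ∑ x : K, (1 : ℤ) := by simp
      rw [this]
      apply Finset.sum_le_sum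
      intro x _
      by_cases hx : f.eval x = 0
      · simp [hx]
      · rcases quadraticChar_dichotomy hx with h | h <;> simp [h]
    have h2 : ((|∑ x : K, quadraticChar K (f.eval x)| : ℤ) : ℝ) ≤ (Fintype.card K : ℝ) := by
      exact_mod_cast h1
    rw [Int.cast_abs] at h2
    refine h2.trans ?_
    have h3 : Real.sqrt (Fintype.card K) ≤ 20 * f.natDegree := by
      rw [Real.sqrt_le_left (by positivity)]
      have : ((Fintype.card K : ℕ) : ℝ) < ((400 * f.natDegree ^ 2 : ℕ) : ℝ) := by exact_mod_cast hQ
      push_cast at this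
      nlinarith
    calc (Fintype.card K : ℝ) = Real.sqrt (Fintype.card K) * Real.sqrt (Fintype.card K) := by
          rw [Real.mul_self_sqrt (by positivity)]
      _ ≤ _ := by gcongr

lemma br_surj {F K : Type*} [Field F] [Field K] [Finite K] [Algebra F K] (x : K)
    (hx : (minpoly F x).natDegree = Module.finrank F K) : Algebra.adjoin F {x} = ⊤ := by
  have : Module.Finite F K := Module.Finite.of_finite
  have hi : IsIntegral F x := Algebra.IsIntegral.isIntegral x
  have h1 := (Field.primitive_element_iff_minpoly_natDegree_eq F x).2 hx
  rw [← IntermediateField.adjoin_simple_toSubalgebra_of_isAlgebraic hi.isAlgebraic, h1]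
  rfl

lemma br_chiP {F K : Type*} [Field F] [Field K] [Fintype K] [Algebra F K] (x : K)
    (hx : (minpoly F x).natDegree = Module.finrank F K) (G : F[X]) :
    chiP (minpoly F x) G = quadraticChar K (aeval x G) := by
  have hs : ∀ y : K, ∃ H : F[X], aeval x H = y := by
    intro y
    have : y ∈ Algebra.adjoin F {x} := by rw [br_surj x hx]; trivial
    rw [Algebra.adjoin_singleton_eq_range_aeval] at this
    exact this
  have hd : ∀ H : F[X], minpoly F x ∣ H ↔ aeval x H = 0 := fun H => minpoly.dvd_iff
  unfold chiP
  rw [hd]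
  by_cases h0 : aeval x G = 0
  · simp [h0]
  rw [if_neg h0]
  have hiff : (∃ H, minpoly F x ∣ G - H ^ 2) ↔ IsSquare (aeval x G) := by
    constructor
    · rintro ⟨H, hH⟩
      rw [hd, map_sub, sub_eq_zero] at hH
      exact ⟨aeval x H, by rw [hH, map_pow, sq]⟩
    · rintro ⟨y, hy⟩
      obtain ⟨H, rfl⟩ := hs y
      refine ⟨H, ?_⟩
      rw [hd, map_sub, hy, map_pow, sq, sub_self]
  by_cases hsq : IsSquare (aeval x G)
  · rw [if_pos (hiff.2 hsq), (quadraticChar_one_iff_isSquare h0).2 hsq]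
  · rw [if_neg (fun h => hsq (hiff.1 h)), quadraticChar_neg_one_iff_not_isSquare.2 hsq]

lemma br_norm {F K : Type*} [Field F] [Fintype F] [Field K] [Fintype K] [Algebra F K]
    (hF : ringChar F ≠ 2) (y : K) :
    quadraticChar K y = quadraticChar F (Algebra.norm F y) := by
  have : Module.Finite F K := Module.Finite.of_finite
  have hK : ringChar K ≠ 2 := by rwa [← Algebra.ringChar_eq F K]
  by_cases hy : y = 0
  · subst hy; simp
  have hy' : Algebra.norm F y ≠ 0 := by rwa [Ne, Algebra.norm_eq_zero_iff]
  have h1 : ((quadraticChar K y : ℤ) : K) = ((quadraticChar F (Algebra.norm F y) : ℤ) : K) := by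
    rw [quadraticChar_eq_pow_of_char_ne_two' hK]
    have h2 := quadraticChar_eq_pow_of_char_ne_two' hF (Algebra.norm F y)
    have h3 := congrArg (algebraMap F K) h2
    rw [map_intCast, map_pow, FiniteField.algebraMap_norm_eq_pow] at h3
    rw [h3, ← pow_mul]
    congr 1
    rw [Nat.card_eq_fintype_card, Nat.card_eq_fintype_card]
    have hq : Fintype.card F % 2 = 1 := FiniteField.odd_card_of_char_ne_two hF
    have hQ : Fintype.card K % 2 = 1 := FiniteField.odd_card_of_char_ne_two hK
    have hq1 : 1 < Fintype.card F := Fintype.one_lt_card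
    have hdvd : Fintype.card F - 1 ∣ Fintype.card K - 1 := by
      rw [Module.card_eq_pow_finrank (K := F) (V := K)]
      simpa using Nat.sub_dvd_pow_sub_pow (Fintype.card F) 1 (Module.finrank F K)
    obtain ⟨t, ht⟩ := hdvd
    rw [ht, Nat.mul_div_cancel_left _ (by omega)]
    obtain ⟨e, he⟩ : ∃ e, Fintype.card F = 2 * e + 1 := ⟨Fintype.card F / 2, by omega⟩
    have : Fintype.card K = 2 * (e * t) + 1 := by
      have h5 : Fintype.card F - 1 = 2 * e := by omega
      rw [h5] at ht
      have : 0 < Fintype.card K := Fintype.card_pos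
      rw [← mul_assoc]; omega
    rw [this, he]
    have e1 : (2 * (e * t) + 1) / 2 = e * t := by omega
    have e2 : (2 * e + 1) / 2 = e := by omega
    rw [e1, e2, mul_comm]
  have hne : (1 : K) ≠ -1 := (Ring.neg_one_ne_one_of_char_ne_two hK).symm
  rcases quadraticChar_dichotomy hy with a | a <;> rcases quadraticChar_dichotomy hy' with b | b <;>
    rw [a, b] at h1 ⊢
  · simp at h1; exact absurd h1 hne
  · simp at h1; exact absurd h1.symm hne

lemma br_res {F K : Type*} [Field F] [Finite F] [Field K] [Finite K] [Algebra F K] (x : K)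
    (hx : (minpoly F x).natDegree = Module.finrank F K) (G : F[X]) :
    Algebra.norm F (aeval x G) = resultant (minpoly F x) G := by
  have : Module.Finite F K := Module.Finite.of_finite
  have hi : IsIntegral F x := Algebra.IsIntegral.isIntegral x
  let pb := PowerBasis.ofAdjoinEqTop hi (br_surj x hx)
  have hpb : pb.gen = x := rfl
  let E := AlgebraicClosure K
  have hmon := minpoly.monic hi
  apply (algebraMap F E).injective
  rw [Algebra.norm_eq_prod_embeddings F E]
  have h1 : algebraMap F E (resultant (minpoly F x) G) =
      (((minpoly F x).aroots E).map (fun y => aeval y G)).prod := by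
    rw [← resultant_map_map]
    have := resultant_eq_prod_eval ((minpoly F x).map (algebraMap F E)) (G.map (algebraMap F E))
      G.natDegree natDegree_map_le (IsAlgClosed.splits _)
    rw [natDegree_map] at this
    rw [this, (hmon.map _).leadingCoeff]
    simp [aroots_def, aeval_def, eval_map]
  rw [h1]
  rw [Fintype.prod_equiv (pb.liftEquiv' (B := E)) (fun σ => σ (aeval x G))
    (fun y => aeval (y : E) G) ?_]
  · rw [Finset.prod_mem_multiset _ _ (fun y => aeval y G) (fun y => rfl)]
    rw [Finset.prod_eq_multiset_prod, Multiset.toFinset_val, Multiset.dedup_eq_self.mpr]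
    · rw [hpb]
    · exact nodup_roots (Separable.map (Algebra.IsSeparable.isSeparable F x))
  · intro σ
    rw [PowerBasis.liftEquiv'_apply_coe, hpb, aeval_algHom_apply]

lemma br_chiP_res {F : Type*} [Field F] [Fintype F] (hF : ringChar F ≠ 2) (P : F[X]) (hP : P.Monic)
    (hPi : Irreducible P) (G : F[X]) : chiP P G = quadraticChar F (resultant P G) := by
  have : Fact (Irreducible P) := ⟨hPi⟩
  have : Module.Finite F (AdjoinRoot P) := hP.finite_adjoinRoot
  have : Finite (AdjoinRoot P) := Module.finite_of_finite F
  have := Fintype.ofFinite (AdjoinRoot P)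
  have hmin : minpoly F (AdjoinRoot.root P) = P := by
    rw [AdjoinRoot.minpoly_root hPi.ne_zero, hP.leadingCoeff]; simp
  have hdeg : (minpoly F (AdjoinRoot.root P)).natDegree = Module.finrank F (AdjoinRoot P) := by
    rw [hmin, (AdjoinRoot.powerBasis hPi.ne_zero).finrank]; simp
  have h1 := br_chiP (AdjoinRoot.root P) hdeg G
  have h2 := br_res (AdjoinRoot.root P) hdeg G
  rw [hmin] at h1 h2
  rw [h1, br_norm hF, h2]

lemma br_chiD {F : Type*} [Field F] [Fintype F] (hF : ringChar F ≠ 2) (D : F[X]) (hD : D.Monic)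
    (hs : Squarefree D) (G : F[X]) : chiD D G = quadraticChar F (resultant D G) := by
  have hD0 : D ≠ 0 := hD.ne_zero
  let S := (UniqueFactorizationMonoid.normalizedFactors D).toFinset
  have hS : {P : F[X] | P.Monic ∧ Irreducible P ∧ P ∣ D} = ↑S := by
    ext P
    simp only [S, Set.mem_ofPred_eq, Finset.mem_coe, Multiset.mem_toFinset,
      UniqueFactorizationMonoid.mem_normalizedFactors_iff' hD0]
    constructor
    · rintro ⟨h1, h2, h3⟩; exact ⟨h2, h1.normalize_eq_self, h3⟩
    · rintro ⟨h1, h2, h3⟩; exact ⟨h2 ▸ monic_normalize h1.ne_zero, h1, h3⟩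
  have hmem : ∀ P ∈ S, P.Monic ∧ Irreducible P ∧ P ∣ D := by
    intro P hP
    have : P ∈ (↑S : Set F[X]) := hP
    rw [← hS] at this
    exact this
  have hprod : ∏ P ∈ S, P = D := by
    have h1 := UniqueFactorizationMonoid.prod_normalizedFactors_eq hD0
    rw [hD.normalize_eq_self] at h1
    conv_rhs => rw [← h1]
    rw [Finset.prod_eq_multiset_prod, Multiset.toFinset_val, Multiset.dedup_eq_self.mpr, Multiset.map_id']
    exact (UniqueFactorizationMonoid.squarefree_iff_nodup_normalizedFactors hD0).1 hs
  unfold chiD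
  rw [hS, finprod_mem_coe_finset]
  have h2 := resultant_prod_left S (fun P => P) G G.natDegree (by
    rw [Finset.prod_congr rfl (fun P hP => (hmem P hP).1.leadingCoeff)]; simp) le_rfl
  rw [hprod] at h2
  rw [h2, map_prod]
  apply Finset.prod_congr rfl
  intro P hP
  exact br_chiP_res hF P (hmem P hP).1 (hmem P hP).2.1 G

lemma br_recip {F : Type*} [Field F] [Fintype F] (hF : ringChar F ≠ 2) (D : F[X]) (hD : D.Monic)
    (hs : Squarefree D) (P : F[X]) (hP : P.Monic) (hPi : Irreducible P) :
    chiD D P = quadraticChar F ((-1) ^ (D.natDegree * P.natDegree)) * chiP P D := by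
  rw [br_chiD hF D hD hs, br_chiP_res hF P hP hPi, resultant_comm, map_mul]

lemma br_geom (q t : ℕ) (hq : 2 ≤ q) : ∑ d ∈ Finset.range (t + 1), q ^ d ≤ 2 * q ^ t := by
  induction t with
  | zero => simp
  | succ t ih =>
    rw [Finset.sum_range_succ, pow_succ]
    have : 2 * q ^ t ≤ q ^ t * q := by rw [mul_comm]; exact Nat.mul_le_mul_left _ hq
    omega

lemma br_bad {F K : Type*} [Field F] [Fintype F] [Field K] [Fintype K] [Algebra F K] (n : ℕ)
    (hn : 1 ≤ n) (hK : Module.finrank F K = n) :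
    (Finset.univ.filter fun x : K => ¬ (minpoly F x).natDegree = n).card ≤
      2 * Fintype.card F ^ (n / 2) := by
  have : Module.Finite F K := Module.Finite.of_finite
  have hq : 1 < Fintype.card F := Fintype.one_lt_card
  refine le_trans ?_ (br_geom _ (n / 2) hq)
  let B : ℕ → Finset K := fun d =>
    if d = 0 then ∅ else (X ^ Fintype.card F ^ d - X : K[X]).roots.toFinset
  have hB : ∀ d, (B d).card ≤ Fintype.card F ^ d := by
    intro d
    by_cases hd : d = 0
    · simp [B, hd]
    · simp only [B, hd, if_false]
      refine (Multiset.toFinset_card_le _).trans ((card_roots' _).trans ?_)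
      rw [FiniteField.X_pow_card_pow_sub_X_natDegree_eq _ hd hq]
  refine le_trans ?_ (Finset.sum_le_sum fun d _ => hB d)
  refine le_trans (Finset.card_le_card ?_) Finset.card_biUnion_le
  intro x hx
  rw [Finset.mem_filter] at hx
  have hi : IsIntegral F x := Algebra.IsIntegral.isIntegral x
  have h1 : (minpoly F x).natDegree ∣ n := hK ▸ minpoly.degree_dvd hi
  have h2 : 0 < (minpoly F x).natDegree := minpoly.natDegree_pos hi
  set d := (minpoly F x).natDegree with hd
  rw [Finset.mem_biUnion]
  refine ⟨d, ?_, ?_⟩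
  · rw [Finset.mem_range]
    obtain ⟨c, hc⟩ := h1
    have : 2 ≤ c := by
      rcases c with _ | _ | c
      · omega
      · exfalso; apply hx.2; omega
      · omega
    have : d * 2 ≤ n := hc ▸ Nat.mul_le_mul_left _ this
    omega
  · have h3 : minpoly F x ∣ X ^ Nat.card F ^ d - X :=
      (minpoly.irreducible hi).natDegree_dvd_iff_dvd_X_pow_card_pow_sub_X.1 dvd_rfl
    simp only [B, h2.ne', if_false]
    rw [Multiset.mem_toFinset, mem_roots (FiniteField.X_pow_card_pow_sub_X_ne_zero _ h2.ne' hq)]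
    rw [minpoly.dvd_iff, Nat.card_eq_fintype_card] at h3
    simpa using h3

lemma br_sum {F K : Type*} [Field F] [Fintype F] [Field K] [Fintype K] [Algebra F K]
    (hF : ringChar F ≠ 2) (n : ℕ)
    (hn : 1 ≤ n) (hK : Module.finrank F K = n) (D : F[X]) (hD : D.Monic) (hs : Squarefree D) :
    |(n : ℤ) * ∑ᶠ P ∈ {P : F[X] | P.Monic ∧ Irreducible P ∧ P.natDegree = n}, chiD D P| =
      |∑ x ∈ Finset.univ.filter (fun x : K => (minpoly F x).natDegree = n),
        quadraticChar K (aeval x D)| := by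
  have : Module.Finite F K := Module.Finite.of_finite
  let S := Finset.univ.filter (fun x : K => (minpoly F x).natDegree = n)
  let I := S.image (minpoly F)
  have hinteg : ∀ x : K, IsIntegral F x := fun x => Algebra.IsIntegral.isIntegral x
  have hI : {P : F[X] | P.Monic ∧ Irreducible P ∧ P.natDegree = n} = ↑I := by
    ext P
    simp only [I, S, Set.mem_ofPred_eq, Finset.coe_image, Set.mem_image, Finset.mem_coe,
      Finset.mem_filter, Finset.mem_univ, true_and]
    constructor
    · rintro ⟨h1, h2, h3⟩
      have hdvd : P ∣ X ^ Nat.card F ^ n - X :=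
        h2.natDegree_dvd_iff_dvd_X_pow_card_pow_sub_X.1 (by rw [h3])
      have hcard : Fintype.card K = Fintype.card F ^ n := by
        rw [Module.card_eq_pow_finrank (K := F) (V := K), hK]
      have hsplit : ((X ^ Nat.card F ^ n - X : F[X]).map (algebraMap F K)).Splits := by
        rw [Nat.card_eq_fintype_card, ← hcard]
        exact (FiniteField.isSplittingField_sub K F).splits
      obtain ⟨x, hx⟩ : ∃ x : K, (P.map (algebraMap F K)).eval x = 0 := by
        refine Splits.exists_eval_eq_zero (Splits.of_dvd hsplit (Polynomial.map_ne_zero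
          (FiniteField.X_pow_card_pow_sub_X_ne_zero _ (by omega) Finite.one_lt_card))
          (Polynomial.map_dvd _ hdvd)) ?_
        rw [degree_map]
        exact h2.degree_pos.ne'
      have : minpoly F x = P := by
        refine (minpoly.eq_of_irreducible_of_monic h2 ?_ h1).symm
        simpa [eval_map_algebraMap] using hx
      exact ⟨x, this ▸ h3, this⟩
    · rintro ⟨x, h1, rfl⟩
      exact ⟨minpoly.monic (hinteg x), minpoly.irreducible (hinteg x), h1⟩
  have hfib : ∀ P ∈ I, (S.filter fun x => minpoly F x = P).card = n := by
    intro P hP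
    obtain ⟨x, hx, rfl⟩ := Finset.mem_image.1 hP
    rw [Finset.mem_filter] at hx
    have hsp : ((minpoly F x).map (algebraMap F K)).Splits := Normal.splits inferInstance x
    have hc := card_rootSet_eq_natDegree (K := K)
      (Algebra.IsSeparable.isSeparable F x : (minpoly F x).Separable) hsp
    rw [hx.2] at hc
    rw [← hc, ← Set.toFinset_card]
    congr 1
    ext y
    simp only [S, Finset.mem_filter, Finset.mem_univ, true_and, Set.mem_toFinset,
      mem_rootSet_of_ne (minpoly.ne_zero (hinteg x))]
    constructor
    · rintro ⟨_, h⟩; rw [← h]; exact minpoly.aeval F y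
    · intro h
      have h' : minpoly F y = minpoly F x := 
        (minpoly.eq_of_irreducible_of_monic (minpoly.irreducible (hinteg x)) h
          (minpoly.monic (hinteg x))).symm
      exact ⟨by rw [h', hx.2], h'⟩
  have h1 : ∑ x ∈ S, quadraticChar K (aeval x D) = ∑ P ∈ I, (n : ℤ) * chiP P D := by
    rw [← Finset.sum_fiberwise_of_maps_to (g := minpoly F) (t := I)
      (fun x hx => Finset.mem_image_of_mem _ hx)]
    apply Finset.sum_congr rfl
    intro P hP
    rw [Finset.sum_congr rfl (g := fun _ => chiP P D), Finset.sum_const, hfib P hP, nsmul_eq_mul]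
    intro x hx
    obtain ⟨hx1, rfl⟩ := Finset.mem_filter.1 hx
    rw [br_chiP x (by rw [hK]; exact (Finset.mem_filter.1 hx1).2)]
  rw [hI, finsum_mem_coe_finset]
  change _ = |∑ x ∈ S, _|
  rw [h1, ← Finset.mul_sum, abs_mul, abs_mul]
  congr 1
  have h2 : ∑ P ∈ I, chiD D P =
      quadraticChar F ((-1) ^ (D.natDegree * n)) * ∑ P ∈ I, chiP P D := by
    rw [Finset.mul_sum]
    apply Finset.sum_congr rfl
    intro P hP
    have : P ∈ (↑I : Set F[X]) := hP
    rw [← hI] at this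
    obtain ⟨a, b, c⟩ := this
    rw [br_recip hF D hD hs P a b, c]
  rw [h2, abs_mul]
  have h3 : |quadraticChar F ((-1) ^ (D.natDegree * n))| = 1 := by
    rcases quadraticChar_dichotomy (F := F) (a := (-1) ^ (D.natDegree * n))
      (pow_ne_zero _ (by simp)) with h | h <;> rw [h] <;> simp
  rw [h3, one_mul]

lemma br_final {F K : Type*} [Field F] [Fintype F] [Field K] [Fintype K] [Algebra F K]
    (hF : ringChar F ≠ 2) (n : ℕ)
    (hn : 1 ≤ n) (hK : Module.finrank F K = n) (D : F[X]) (hD : D.Monic) (hs : Squarefree D)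
    (hm : 1 ≤ D.natDegree) :
    |((∑ᶠ P ∈ {P : F[X] | P.Monic ∧ Irreducible P ∧ P.natDegree = n}, chiD D P : ℤ) : ℝ)| ≤
      22 * D.natDegree * (Fintype.card F : ℝ) ^ ((n : ℝ) / 2) / n := by
  have hchar : ringChar K ≠ 2 := by rwa [← Algebra.ringChar_eq F K]
  have hcard : Fintype.card K = Fintype.card F ^ n := by
    rw [Module.card_eq_pow_finrank (K := F) (V := K), hK]
  have hb := br_bad n hn hK
  have hsum := br_sum hF n hn hK D hD hs
  have hsep : Squarefree (D.map (algebraMap F K)) :=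
    (PerfectField.separable_iff_squarefree.2 hs).map.squarefree
  have hst := st_bound hchar (D.map (algebraMap F K)) hsep (by rwa [natDegree_map])
  rw [natDegree_map] at hst
  simp only [eval_map_algebraMap] at hst
  rw [← Finset.sum_filter_add_sum_filter_not Finset.univ
    (fun x : K => (minpoly F x).natDegree = n)] at hst
  set T := ∑ᶠ P ∈ {P : F[X] | P.Monic ∧ Irreducible P ∧ P.natDegree = n}, chiD D P with hT
  set A := ∑ x ∈ Finset.univ.filter (fun x : K => (minpoly F x).natDegree = n),
        quadraticChar K (aeval x D) with hA
  set B := ∑ x ∈ Finset.univ.filter (fun x : K => ¬ (minpoly F x).natDegree = n),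
        quadraticChar K (aeval x D) with hB
  have hB1 : |B| ≤ ((2 * Fintype.card F ^ (n / 2) : ℕ) : ℤ) := by
    refine le_trans ?_ (Int.ofNat_le.2 hb)
    refine (Finset.abs_sum_le_sum_abs _ _).trans ?_
    rw [Finset.card_eq_sum_ones, Nat.cast_sum]
    apply Finset.sum_le_sum
    intro x _
    by_cases hx : aeval x D = 0
    · simp [hx]
    · rcases quadraticChar_dichotomy hx with h | h <;> simp [h]
  have hq1 : (1 : ℝ) ≤ Fintype.card F := by exact_mod_cast Fintype.card_pos
  set W := (Fintype.card F : ℝ) ^ ((n : ℝ) / 2) with hW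
  have hW1 : Real.sqrt (Fintype.card K) = W := by
    rw [hcard, Nat.cast_pow, Real.sqrt_eq_rpow, ← Real.rpow_natCast, ← Real.rpow_mul (by positivity)]
    congr 1; ring
  have hB2 : |(B : ℝ)| ≤ 2 * W := by
    have : ((|B| : ℤ) : ℝ) ≤ (((2 * Fintype.card F ^ (n / 2) : ℕ) : ℤ) : ℝ) := by exact_mod_cast hB1
    push_cast at this
    refine this.trans ?_
    gcongr
    rw [hW, ← Real.rpow_natCast]
    apply Real.rpow_le_rpow_of_exponent_le hq1
    exact Nat.cast_div_le
  have hA2 : (n : ℝ) * |(T : ℝ)| = |(A : ℝ)| := by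
    have : ((|(n : ℤ) * T| : ℤ) : ℝ) = ((|A| : ℤ) : ℝ) := by rw [hsum]
    push_cast at this
    rwa [abs_mul, Nat.abs_cast] at this
  have hn0 : (0 : ℝ) < n := by exact_mod_cast hn
  rw [le_div_iff₀ hn0, mul_comm, hA2]
  rw [hW1, Int.cast_add] at hst
  have h5 : |(A : ℝ)| ≤ |(A : ℝ) + B| + |(B : ℝ)| := by
    have := abs_sub ((A : ℝ) + B) B
    simpa using this
  have h6 : (1 : ℝ) ≤ D.natDegree := by exact_mod_cast hm
  have hW0 : 0 ≤ W := by positivity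
  nlinarith

/-- there is a constant `C` depending only on `q` such that for every monic
square-free `D` with `deg D ≥ 1` and every `n ≥ 1`,
`|Σ_{P monic irreducible, deg P = n} χ_D(P)| ≤ C·deg(D)·q^{n/2}/n`. -/
theorem stmt16 (q : ℕ) (hq_odd : Odd q) (hq_pp : IsPrimePow q)
    (Fq : Type) [Field Fq] [Fintype Fq] (hFq : Fintype.card Fq = q) :
    ∃ C : ℝ, ∀ D : Fq[X], D.Monic → Squarefree D → 1 ≤ D.natDegree →
      ∀ n : ℕ, 1 ≤ n →
        |((∑ᶠ P ∈ {P : Fq[X] | P.Monic ∧ Irreducible P ∧ P.natDegree = n}, chiD D P : ℤ) : ℝ)| ≤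
          C * (D.natDegree : ℝ) * (q : ℝ) ^ ((n : ℝ) / 2) / (n : ℝ) := by
  refine ⟨22, ?_⟩
  intro D hD hs hm n hn
  subst hFq
  have hF : ringChar Fq ≠ 2 := by
    intro h
    have := FiniteField.even_card_of_char_two h
    rw [Nat.odd_iff] at hq_odd
    omega
  have : NeZero n := ⟨by omega⟩
  have : Fact (ringChar Fq).Prime := ⟨CharP.char_is_prime Fq (ringChar Fq)⟩
  have : Finite (FiniteField.Extension Fq (ringChar Fq) n) := Module.finite_of_finite Fq
  have := Fintype.ofFinite (FiniteField.Extension Fq (ringChar Fq) n)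
  exact br_final (K := FiniteField.Extension Fq (ringChar Fq) n) hF n hn
    (FiniteField.finrank_extension Fq (ringChar Fq) n) D hD hs hm
end
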